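/- arXiv:1203.4450 — 8 statements merged into one kernel-verified Lean document; each statement's English description precedes it below -/
import Mathlib

section
/- Let R be a commutative ring, let I = (x_1,…,x_s,y) be an ideal of R and let p ≥ 2 be an integer. Suppose that the ideal J = (x_1,…,x_s) verifies that α_{J,n} : Sym_n(J) → J^n is an isomorphism for all 2 ≤ n ≤ p. Then the following conditions are equivalent: (i) α_{I,p} : Sym_p(I) → I^p is an isomorphism; (ii) α_{I,n} : Sym_n(I) → I^n is an isomorphism for each 2 ≤ n ≤ p. -/
open scoped TensorProduct
open PiTensorProduct

section SymDefs

variable (R : Type*) [CommRing R]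

/-- The `n`-fold tensor power of (the `R`-module underlying) the ideal `I`. -/
abbrev TensPow (I : Ideal R) (n : ℕ) : Type _ := ⨂[R] (_ : Fin n), ↥I

/-- The multilinear "product" map `(v₁,…,vₙ) ↦ v₁⋯vₙ : Iⁿ ⊆ R`. -/
noncomputable def prodML (I : Ideal R) (n : ℕ) :
    MultilinearMap R (fun _ : Fin n => ↥I) R :=
  (MultilinearMap.mkPiAlgebra R (Fin n) R).compLinearMap fun _ => I.subtype

/-- The symmetrizer relations in the `n`-th tensor power of `I`. -/
noncomputable def symRel (I : Ideal R) (n : ℕ) : Submodule R (TensPow R I n) :=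
  Submodule.span R {z | ∃ (v : Fin n → ↥I) (σ : Equiv.Perm (Fin n)),
    z = tprod R v - tprod R (v ∘ σ)}

/-- The `n`-th symmetric power `Symⁿ(I)` of the ideal `I`, i.e. the `n`-th graded
component of the symmetric algebra of the `R`-module `I`. -/
abbrev SymPow (I : Ideal R) (n : ℕ) : Type _ := TensPow R I n ⧸ symRel R I n

/-- The `n`-th component `α_{I,n} : Symₙ(I) → Iⁿ ⊆ R` of the canonical morphism
`α_I : Sym(I) → R(I)` (composed with the inclusion `Iⁿ ⊆ R`; it is an isomorphism
onto `Iⁿ` iff it is injective as a map to `R`). -/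
noncomputable def alphaCan (I : Ideal R) (n : ℕ) : SymPow R I n →ₗ[R] R :=
  Submodule.liftQ (symRel R I n) (PiTensorProduct.lift (prodML R I n)) (by
    rw [symRel, Submodule.span_le]
    rintro z ⟨v, σ, rfl⟩
    simp only [SetLike.mem_coe, LinearMap.mem_ker, map_sub, PiTensorProduct.lift.tprod]
    have : prodML R I n (v ∘ σ) = prodML R I n v := by
      simp only [prodML, MultilinearMap.compLinearMap_apply,
        MultilinearMap.mkPiAlgebra_apply, Function.comp_apply]
      exact Equiv.prod_comp σ fun i => ((v i : R))
    rw [this, sub_self])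

end SymDefs

namespace SymAux

open MvPolynomial

set_option linter.unusedSectionVars false

variable {R : Type*} [CommRing R] {ι : Type*} [Fintype ι]

/-- linear relations -/
def Q1 (x : ι → R) : Set (MvPolynomial ι R) :=
  {L | ∃ c : ι → R, L = ∑ i, C (c i) * X i ∧ ∑ i, c i * x i = 0}

/-- ideal generated by linear relations -/
noncomputable def K (x : ι → R) : Ideal (MvPolynomial ι R) := Ideal.span (Q1 x)

/-- the polynomial condition -/
def PC (x : ι → R) (n : ℕ) : Prop :=
  ∀ F : MvPolynomial ι R, F.IsHomogeneous n → eval x F = 0 → F ∈ K x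

theorem exists_perm {n : ℕ} (f g : Fin n → ι)
    (h : ∑ i, Finsupp.single (f i) 1 = ∑ i, Finsupp.single (g i) (1 : ℕ)) :
    ∃ σ : Equiv.Perm (Fin n), g ∘ σ = f := by
  classical
  have hc : ∀ c, Nonempty ({a // f a = c} ≃ {a // g a = c}) := by
    intro c
    apply Fintype.card_eq.1
    have := DFunLike.congr_fun h c
    simp only [Finsupp.finsetSum_apply, Finsupp.single_apply] at this
    rw [Finset.sum_boole, Finset.sum_boole] at this
    rw [Fintype.card_subtype, Fintype.card_subtype]
    exact_mod_cast this
  refine ⟨Equiv.ofFiberEquiv (fun c => (hc c).some), ?_⟩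
  funext a
  exact Equiv.ofFiberEquiv_map _ a

theorem exists_fun {n : ℕ} : ∀ (m : ι →₀ ℕ), m.degree = n →
    ∃ f : Fin n → ι, m = ∑ i, Finsupp.single (f i) 1 := by
  classical
  induction n with
  | zero =>
    intro m hm
    refine ⟨Fin.elim0, ?_⟩
    rw [Finsupp.degree_eq_zero_iff] at hm
    simp [hm]
  | succ n ih =>
    intro m hm
    have hne : m ≠ 0 := by
      rintro rfl
      simp at hm
    obtain ⟨j, hj⟩ := Finsupp.ne_iff.1 hne
    have hle : Finsupp.single j 1 ≤ m := by
      rw [Finsupp.single_le_iff]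
      exact Nat.one_le_iff_ne_zero.2 hj
    obtain ⟨m', rfl⟩ := exists_add_of_le hle
    have : m'.degree = n := by
      rw [map_add, Finsupp.degree_single] at hm
      omega
    obtain ⟨f, hf⟩ := ih m' this
    refine ⟨Fin.cons j f, ?_⟩
    rw [Fin.sum_univ_succ]
    simp [← hf]

theorem degree_sum {n : ℕ} (f : Fin n → ι) :
    (∑ i, Finsupp.single (f i) 1 : ι →₀ ℕ).degree = n := by
  rw [map_sum]
  simp [Finsupp.degree_single]

theorem prod_X {n : ℕ} (f : Fin n → ι) :
    ∏ i, (X (f i) : MvPolynomial ι R) = monomial (∑ i, Finsupp.single (f i) 1) 1 := by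
  rw [monomial_sum_one]
  rfl

variable {I : Ideal R}

/-- class of pure tensor -/
noncomputable def cl (n : ℕ) (v : Fin n → I) : SymPow R I n :=
  Submodule.Quotient.mk (tprod R v)

/-- as a multilinear map -/
noncomputable def clM (I : Ideal R) (n : ℕ) : MultilinearMap R (fun _ : Fin n => I) (SymPow R I n) :=
  (symRel R I n).mkQ.compMultilinearMap (tprod R)

theorem clM_apply (n : ℕ) (v : Fin n → I) : clM I n v = cl n v := rfl

theorem cl_perm (n : ℕ) (v : Fin n → I) (σ : Equiv.Perm (Fin n)) : cl n (v ∘ σ) = cl n v := by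
  symm
  unfold cl
  rw [Submodule.Quotient.eq]
  exact Submodule.subset_span ⟨v, σ, rfl⟩

theorem alpha_cl (n : ℕ) (v : Fin n → I) : alphaCan R I n (cl n v) = ∏ i, (v i : R) := by
  unfold cl alphaCan
  erw [Submodule.liftQ_apply]
  rw [PiTensorProduct.lift.tprod]
  simp [prodML]

open Classical in
/-- values of gamma on monomials -/
noncomputable def gam0 (x : ι → I) (n : ℕ) (m : ι →₀ ℕ) : SymPow R I n :=
  if h : ∃ f : Fin n → ι, m = ∑ i, Finsupp.single (f i) 1 then cl n (x ∘ h.choose) else 0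

/-- the map from polynomials to the symmetric power -/
noncomputable def gam (x : ι → I) (n : ℕ) : MvPolynomial ι R →ₗ[R] SymPow R I n :=
  (basisMonomials ι R).constr R (gam0 x n)

theorem gam_monomial (x : ι → I) (n : ℕ) (m : ι →₀ ℕ) :
    gam x n (monomial m 1) = gam0 x n m := by
  have := (basisMonomials ι R).constr_basis R (gam0 x n) m
  rwa [coe_basisMonomials] at this

theorem gam0_sum (x : ι → I) (n : ℕ) (f : Fin n → ι) :
    gam0 x n (∑ i, Finsupp.single (f i) 1) = cl n (x ∘ f) := by
  unfold gam0
  have h : ∃ g : Fin n → ι, (∑ i, Finsupp.single (f i) 1 : ι →₀ ℕ) = ∑ i, Finsupp.single (g i) 1 :=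
    ⟨f, rfl⟩
  rw [dif_pos h]
  obtain ⟨σ, hσ⟩ := exists_perm _ _ h.choose_spec
  have : x ∘ f = (x ∘ h.choose) ∘ σ := by rw [Function.comp_assoc, hσ]
  rw [this, cl_perm]

theorem gam0_zero (x : ι → I) (n : ℕ) (m : ι →₀ ℕ) (hm : m.degree ≠ n) :
    gam0 x n m = 0 := by
  unfold gam0
  rw [dif_neg]
  rintro ⟨f, rfl⟩
  exact hm (degree_sum f)

theorem gam_prod (x : ι → I) (n : ℕ) (f : Fin n → ι) :
    gam x n (∏ i, X (f i)) = cl n (x ∘ f) := by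
  rw [prod_X, gam_monomial, gam0_sum]

theorem gam_Q1 (x : ι → I) (n : ℕ) (L : MvPolynomial ι R)
    (hL : L ∈ Q1 (fun i => (x i : R))) (G : MvPolynomial ι R) :
    gam x (n + 1) (G * L) = 0 := by
  obtain ⟨c, rfl, hc⟩ := hL
  induction G using MvPolynomial.induction_on' with
  | add p q hp hq => rw [add_mul, map_add, hp, hq, add_zero]
  | monomial m a =>
    have h1 : (monomial m a : MvPolynomial ι R) * ∑ i, C (c i) * X i
        = ∑ i, (a * c i) • monomial (Finsupp.single i 1 + m) 1 := by
      rw [Finset.mul_sum]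
      refine Finset.sum_congr rfl fun i _ => ?_
      rw [C_mul_X_eq_monomial, monomial_mul, smul_monomial, smul_eq_mul, mul_one, add_comm]
    rw [h1, map_sum]
    simp only [map_smul, gam_monomial]
    by_cases hm : m.degree = n
    · obtain ⟨f, rfl⟩ := exists_fun m hm
      have h2 : ∀ i, gam0 x (n + 1) (Finsupp.single i 1 + ∑ j, Finsupp.single (f j) 1)
          = clM I (n + 1) (Fin.cons (x i) (x ∘ f)) := by
        intro i
        have := gam0_sum x (n + 1) (Fin.cons i f)
        rw [Fin.sum_univ_succ] at this
        simp only [Fin.cons_zero, Fin.cons_succ] at this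
        rw [this, clM_apply]
        congr 1
        funext j
        refine Fin.cases ?_ (fun j => ?_) j <;> simp
      simp only [h2]
      have h3 : ∀ v : I, clM I (n + 1) (Fin.cons v (x ∘ f)) =
          (clM I (n + 1)).toLinearMap (Fin.cons 0 (x ∘ f)) 0 v := by
        intro v
        rw [MultilinearMap.toLinearMap_apply, Fin.update_cons_zero]
      simp only [h3, ← map_smul]
      rw [← map_sum]
      have : ∑ i, (a * c i) • x i = 0 := by
        apply Subtype.ext
        simp only [AddSubmonoidClass.coe_finsetSum, SetLike.val_smul, smul_eq_mul, mul_assoc,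
          ← Finset.mul_sum, hc, mul_zero, ZeroMemClass.coe_zero]
      rw [this, map_zero]
    · refine Finset.sum_eq_zero fun i _ => ?_
      rw [gam0_zero, smul_zero]
      rw [map_add, Finsupp.degree_single]
      omega

theorem gam_K (x : ι → I) (n : ℕ) (F : MvPolynomial ι R)
    (hF : F ∈ K (fun i => (x i : R))) : gam x (n + 1) F = 0 := by
  have : ∀ G, gam x (n + 1) (G * F) = 0 := by
    refine Submodule.span_induction (p := fun F _ => ∀ G, gam x (n + 1) (G * F) = 0)
      ?_ ?_ ?_ ?_ hF
    · intro L hL G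
      exact gam_Q1 x n L hL G
    · intro G
      rw [mul_zero, map_zero]
    · intro a b _ _ ha hb G
      rw [mul_add, map_add, ha, hb, add_zero]
    · intro a b _ hb G
      rw [smul_eq_mul, ← mul_assoc]
      exact hb _
  simpa using this 1

theorem exists_lift (x : ι → I) (hx : I = Ideal.span (Set.range fun i => (x i : R)))
    (n : ℕ) (z : SymPow R I n) :
    ∃ F : MvPolynomial ι R, F.IsHomogeneous n ∧ gam x n F = z ∧
      alphaCan R I n z = eval (fun i => (x i : R)) F := by
  classical
  obtain ⟨t, rfl⟩ := Submodule.Quotient.mk_surjective _ z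
  induction t using PiTensorProduct.induction_on with
  | smul_tprod r v =>
    have hv : ∀ i, ∃ c : ι → R, v i = ∑ j, c j • x j := by
      intro i
      have h : (v i : R) ∈ Ideal.span (Set.range fun i => (x i : R)) := by
        rw [← hx]; exact (v i).2
      obtain ⟨c, hc⟩ := Ideal.mem_span_range_iff_exists_fun.1 h
      refine ⟨c, Subtype.ext ?_⟩
      simp [← hc]
    choose c hc using hv
    refine ⟨∑ f : Fin n → ι, (r * ∏ i, c i (f i)) • ∏ i, X (f i), ?_, ?_, ?_⟩
    · refine IsHomogeneous.sum _ _ _ fun f _ => ?_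
      rw [smul_eq_C_mul]
      apply IsHomogeneous.C_mul
      have := IsHomogeneous.prod Finset.univ (fun i => (X (f i) : MvPolynomial ι R)) (fun _ => 1)
        (fun i _ => isHomogeneous_X _ _)
      simpa using this
    · rw [Submodule.Quotient.mk_smul]
      change _ = r • clM I n v
      have : v = fun i => ∑ j, c i j • x j := funext hc
      rw [this, MultilinearMap.map_sum, map_sum, Finset.smul_sum]
      refine Finset.sum_congr rfl fun f _ => ?_
      rw [map_smul, gam_prod, MultilinearMap.map_smul_univ, mul_smul]
      rfl
    · rw [Submodule.Quotient.mk_smul, map_smul]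
      change r • alphaCan R I n (cl n v) = _
      rw [alpha_cl]
      simp only [map_sum, smul_eval, map_prod, eval_X, smul_eq_mul, mul_assoc,
        ← Finset.mul_sum, ← Finset.prod_mul_distrib]
      congr 1
      rw [← Fintype.piFinset_univ,
        ← Finset.prod_univ_sum (fun _ => Finset.univ) (fun i j => c i j * (x j : R))]
      refine Finset.prod_congr rfl fun i _ => ?_
      rw [hc i]
      simp
  | add a b ha hb =>
    obtain ⟨F, h1, h2, h3⟩ := ha
    obtain ⟨G, h4, h5, h6⟩ := hb
    refine ⟨F + G, h1.add h4, ?_, ?_⟩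
    · rw [map_add, h2, h5]; rfl
    · rw [Submodule.Quotient.mk_add, map_add, map_add, h3, h6]

theorem inj_of_PC (x : ι → I) (hx : I = Ideal.span (Set.range fun i => (x i : R)))
    (n : ℕ) (h : PC (fun i => (x i : R)) (n + 1)) :
    Function.Injective (alphaCan R I (n + 1)) := by
  rw [injective_iff_map_eq_zero]
  intro z hz
  obtain ⟨F, h1, h2, h3⟩ := exists_lift x hx (n + 1) z
  rw [← h2]
  exact gam_K x n F (h F h1 (h3 ▸ hz))

theorem eval_K (x : ι → R) {F : MvPolynomial ι R} (hF : F ∈ K x) : eval x F = 0 := by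
  have : K x ≤ RingHom.ker (eval x) := by
    unfold K
    rw [Ideal.span_le]
    rintro _ ⟨c, rfl, hc⟩
    simpa [RingHom.mem_ker] using hc
  exact this hF

theorem exists_ell (x : ι → I) (hx : I = Ideal.span (Set.range fun i => (x i : R))) :
    ∃ l : I →ₗ[R] (MvPolynomial ι R ⧸ K (fun i => (x i : R))),
      ∀ i, l (x i) = Ideal.Quotient.mk _ (X i) := by
  classical
  have hv : ∀ v : I, ∃ c : ι → R, (v : R) = ∑ j, c j * x j := by
    intro v
    have h : (v : R) ∈ Ideal.span (Set.range fun i => (x i : R)) := by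
      rw [← hx]; exact v.2
    obtain ⟨c, hc⟩ := Ideal.mem_span_range_iff_exists_fun.1 h
    exact ⟨c, hc.symm⟩
  choose c hc using hv
  let A := MvPolynomial ι R ⧸ K (fun i => (x i : R))
  let φ : (ι → R) → A := fun d => Ideal.Quotient.mk _ (∑ i, C (d i) * X i)
  have key : ∀ d e : ι → R, ∑ j, d j * (x j : R) = ∑ j, e j * (x j : R) → φ d = φ e := by
    intro d e h
    apply Ideal.Quotient.eq.2
    apply Ideal.subset_span
    refine ⟨d - e, ?_, ?_⟩
    · simp [sub_mul]
    · simp [sub_mul, h]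
  have hadd : ∀ d e, φ (d + e) = φ d + φ e := by
    intro d e
    simp only [φ, ← map_add, ← Finset.sum_add_distrib, ← add_mul, Pi.add_apply]
  have hsmul : ∀ (r : R) d, φ (r • d) = r • φ d := by
    intro r d
    have : r • φ d = Ideal.Quotient.mk _ (r • ∑ i, C (d i) * X i) := rfl
    rw [this]
    simp only [φ, Finset.smul_sum, smul_eq_C_mul, Pi.smul_apply, smul_eq_mul, map_mul C, mul_assoc]
  refine ⟨⟨⟨fun v => φ (c v), ?_⟩, ?_⟩, ?_⟩
  · intro v w
    rw [← hadd]
    apply key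
    rw [← hc]
    simp [add_mul, Finset.sum_add_distrib, ← hc]
  · intro r v
    change _ = r • φ (c v)
    rw [← hsmul]
    apply key
    rw [← hc]
    simp [mul_assoc, ← Finset.mul_sum, ← hc]
  · intro i
    change φ (c (x i)) = _
    rw [key _ (Pi.single i 1)]
    · simp [φ, Pi.single_apply]
    · rw [← hc]
      simp [Pi.single_apply]

theorem PC_of_inj (x : ι → I) (hx : I = Ideal.span (Set.range fun i => (x i : R)))
    (n : ℕ) (h : Function.Injective (alphaCan R I n)) :
    PC (fun i => (x i : R)) n := by
  classical
  intro F hF hF0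
  obtain ⟨l, hl⟩ := exists_ell x hx
  let A := MvPolynomial ι R ⧸ K (fun i => (x i : R))
  let β0 : MultilinearMap R (fun _ : Fin n => I) A :=
    (MultilinearMap.mkPiAlgebra R (Fin n) A).compLinearMap fun _ => l
  have hβ0 : ∀ v, β0 v = ∏ i, l (v i) := by
    intro v
    simp [β0]
  have hker : symRel R I n ≤ LinearMap.ker (PiTensorProduct.lift β0) := by
    rw [symRel, Submodule.span_le]
    rintro z ⟨v, σ, rfl⟩
    simp only [SetLike.mem_coe, LinearMap.mem_ker, map_sub, PiTensorProduct.lift.tprod]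
    rw [hβ0, hβ0, sub_eq_zero]
    exact (Equiv.prod_comp σ fun i => l (v i)).symm
  let β : SymPow R I n →ₗ[R] A := Submodule.liftQ _ (PiTensorProduct.lift β0) hker
  have hβ : ∀ v, β (cl n v) = ∏ i, l (v i) := by
    intro v
    rw [← hβ0]
    exact PiTensorProduct.lift.tprod (φ := β0) v
  have main : ∃ z, β z = Ideal.Quotient.mk _ F ∧
      alphaCan R I n z = eval (fun i => (x i : R)) F := by
    have hmon : ∀ m ∈ F.support, ∃ z, β z = Ideal.Quotient.mk _ (monomial m (coeff m F)) ∧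
      alphaCan R I n z = eval (fun i => (x i : R)) (monomial m (coeff m F)) := by
      intro m hm
      have hd : m.degree = n := by
        by_contra hne
        exact (mem_support_iff.1 hm) (hF.coeff_eq_zero hne)
      obtain ⟨f, hf⟩ := exists_fun m hd
      have e : monomial m (coeff m F) = (coeff m F) • ∏ i, (X (f i) : MvPolynomial ι R) := by
        rw [prod_X, ← hf, smul_monomial, smul_eq_mul, mul_one]
      refine ⟨coeff m F • cl n (x ∘ f), ?_, ?_⟩
      · rw [e, map_smul, hβ]
        have : (Ideal.Quotient.mk (K fun i => (x i : R))) (coeff m F • ∏ i, X (f i))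
          = coeff m F • (Ideal.Quotient.mk (K fun i => (x i : R))) (∏ i, X (f i)) := rfl
        rw [this, map_prod]
        simp only [Function.comp_apply, hl]
      · rw [e, map_smul, alpha_cl]
        simp
    choose! z hz1 hz2 using hmon
    refine ⟨∑ m ∈ F.support, z m, ?_, ?_⟩
    · rw [map_sum, Finset.sum_congr rfl hz1, ← map_sum, ← F.as_sum]
    · rw [map_sum, Finset.sum_congr rfl hz2, ← map_sum, ← F.as_sum]
  obtain ⟨z, hz1, hz2⟩ := main
  rw [hF0] at hz2
  have : z = 0 := (injective_iff_map_eq_zero _).1 h z hz2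
  rw [this, map_zero] at hz1
  exact Ideal.Quotient.eq_zero_iff_mem.1 hz1.symm

theorem K_homog (x : ι → R) {F : MvPolynomial ι R} (hF : F ∈ K x) (n : ℕ) :
    homogeneousComponent n F ∈ K x := by
  letI : GradedAlgebra (homogeneousSubmodule ι R) := MvPolynomial.gradedAlgebra
  refine homogeneousComponent_mem_of_mem ?_ hF _
  apply Ideal.homogeneous_span (homogeneousSubmodule ι R)
  rintro _ ⟨c, rfl, -⟩
  exact ⟨1, IsHomogeneous.sum _ _ _ fun i _ => isHomogeneous_C_mul_X _ _⟩

/-- set the extra variable to zero -/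
noncomputable def rho : MvPolynomial (Option ι) R →ₐ[R] MvPolynomial ι R :=
  aeval (fun o => o.elim 0 X)

theorem split (G : MvPolynomial (Option ι) R) :
    ∃ G', G = rename some (rho G) + X none * G' := by
  induction G using MvPolynomial.induction_on with
  | C a => exact ⟨0, by simp [rho]⟩
  | add p q hp hq =>
    obtain ⟨p', hp⟩ := hp
    obtain ⟨q', hq⟩ := hq
    refine ⟨p' + q', ?_⟩
    rw [map_add, map_add]
    linear_combination hp + hq
  | mul_X p o hp =>
    obtain ⟨p', hp⟩ := hp
    cases o with
    | none => exact ⟨p, by simp [rho, mul_comm]⟩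
    | some i =>
      refine ⟨p' * X (some i), ?_⟩
      have : rho (X (some i) : MvPolynomial (Option ι) R) = X i := by simp [rho]
      rw [map_mul, this, map_mul, rename_X]
      linear_combination X (some i) * hp

theorem K_split (w : Option ι → R) {k : MvPolynomial (Option ι) R} (hk : k ∈ K w) :
    ∃ k' ∈ K w, ∃ H : MvPolynomial ι R,
      k = rename some (rho k) + X none * (k' + rename some H) := by
  have : ∀ G : MvPolynomial (Option ι) R, ∃ k' ∈ K w, ∃ H : MvPolynomial ι R,
      G * k = rename some (rho (G * k)) + X none * (k' + rename some H) := by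
    refine Submodule.span_induction (p := fun k _ => ∀ G : MvPolynomial (Option ι) R,
      ∃ k' ∈ K w, ∃ H : MvPolynomial ι R,
      G * k = rename some (rho (G * k)) + X none * (k' + rename some H)) ?_ ?_ ?_ ?_ hk
    · rintro L hL G
      have hLK : L ∈ K w := Ideal.subset_span hL
      obtain ⟨c, hc, -⟩ := hL
      obtain ⟨G', hG⟩ := split G
      refine ⟨G' * L, Ideal.mul_mem_left _ _ hLK, C (c none) * rho G, ?_⟩
      have e : L = rename some (rho L) + X none * C (c none) := by
        rw [hc, Fintype.sum_option]
        simp [rho, mul_comm, add_comm]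
      rw [map_mul, map_mul, map_mul, rename_C]
      linear_combination (rename some (rho G)) * e + L * hG
    · intro G
      exact ⟨0, zero_mem _, 0, by simp⟩
    · intro a b _ _ ha hb G
      obtain ⟨k1, h1, H1, e1⟩ := ha G
      obtain ⟨k2, h2, H2, e2⟩ := hb G
      refine ⟨k1 + k2, add_mem h1 h2, H1 + H2, ?_⟩
      rw [mul_add, map_add, map_add, map_add]
      linear_combination e1 + e2
    · intro a b _ hb G
      rw [smul_eq_mul, ← mul_assoc]
      exact hb _
  simpa using this 1

theorem K_rename (w : Option ι → R) {F : MvPolynomial ι R} (hF : F ∈ K (fun i => w (some i))) :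
    rename some F ∈ K w := by
  have : K (fun i => w (some i)) ≤ (K w).comap (rename some : MvPolynomial ι R →ₐ[R] _) := by
    conv_lhs => unfold K
    rw [Ideal.span_le]
    rintro _ ⟨c, rfl, hc⟩
    apply Ideal.subset_span
    refine ⟨fun o => o.elim 0 c, ?_, ?_⟩
    · simp [Fintype.sum_option]
    · simpa [Fintype.sum_option] using hc
  exact this hF

theorem step (w : Option ι → R) (n : ℕ) (hJ : PC (fun i => w (some i)) n)
    (hI : PC w (n + 1)) : PC w n := by
  intro F hF hF0
  have h1 : X none * F ∈ K w := by
    apply hI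
    · rw [add_comm]
      exact (isHomogeneous_X _ _).mul hF
    · rw [map_mul, hF0, mul_zero]
  obtain ⟨k, hk, H, e⟩ := K_split w h1
  have h2 : rho (X none * F) = 0 := by
    rw [map_mul]
    simp [rho]
  rw [h2, map_zero, zero_add] at e
  have e2 : F = k + rename some H := by
    ext m
    have := congrArg (coeff (Finsupp.single none 1 + m)) e
    rwa [coeff_X_mul, coeff_X_mul] at this
  have e3 := congrArg (homogeneousComponent n) e2
  rw [homogeneousComponent_eq_self hF, map_add, ← rename_homogeneousComponent] at e3
  have hk' := K_homog w hk n
  have e4 := congrArg (eval w) e3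
  rw [hF0, map_add, eval_K w hk', zero_add, eval_rename] at e4
  have := hJ _ (homogeneousComponent_isHomogeneous n H) e4.symm
  rw [e3]
  exact add_mem hk' (K_rename w this)

theorem PC_iff (x : ι → R) (n : ℕ) :
    PC x (n + 1) ↔ Function.Injective (alphaCan R (Ideal.span (Set.range x)) (n + 1)) := by
  let x' : ι → Ideal.span (Set.range x) := fun i => ⟨x i, Ideal.subset_span ⟨i, rfl⟩⟩
  exact ⟨inj_of_PC x' rfl n, PC_of_inj x' rfl (n + 1)⟩

end SymAux

/-- **Theorem B.**  Let `I = (x₁,…,xₛ,y)` and `p ≥ 2`.  If `α_{J,n} : Symₙ(J) → Jⁿ`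
is an isomorphism for all `2 ≤ n ≤ p`, where `J = (x₁,…,xₛ)`, then `α_{I,p}` is an
isomorphism iff `α_{I,n}` is an isomorphism for each `2 ≤ n ≤ p`.
(Note `α_{I,n}` is always surjective onto `Iⁿ`, so being an isomorphism onto `Iⁿ` is
equivalent to the injectivity of the composition `Symₙ(I) → Iⁿ ⊆ R`.) -/
theorem statement10 {R : Type*} [CommRing R] {s : ℕ} (x : Fin s → R) (y : R)
    (p : ℕ) (hp : 2 ≤ p)
    (hJ : ∀ n, 2 ≤ n → n ≤ p →
      Function.Injective (alphaCan R (Ideal.span (Set.range x)) n)) :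
    Function.Injective (alphaCan R (Ideal.span (Set.range (Fin.snoc x y))) p) ↔
      ∀ n, 2 ≤ n → n ≤ p →
        Function.Injective (alphaCan R (Ideal.span (Set.range (Fin.snoc x y))) n) := by
  constructor
  swap
  · intro h
    exact h p hp le_rfl
  let w : Option (Fin s) → R := fun o => o.elim y x
  have hr : Set.range (Fin.snoc x y : Fin (s + 1) → R) = Set.range w := by
    ext r
    constructor
    · rintro ⟨i, rfl⟩
      refine Fin.lastCases ?_ (fun i => ?_) i
      · exact ⟨none, by simp [w]⟩
      · exact ⟨some i, by simp [w]⟩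
    · rintro ⟨o, rfl⟩
      cases o with
      | none => exact ⟨Fin.last s, by simp [w]⟩
      | some i => exact ⟨Fin.castSucc i, by simp [w]⟩
  have hr' : Ideal.span (Set.range (Fin.snoc x y : Fin (s + 1) → R)) = Ideal.span (Set.range w) := by
    rw [hr]
  intro h n hn hnp
  rw [hr'] at h ⊢
  have key : ∀ d, ∀ n, 1 ≤ n → n + 1 + d = p → SymAux.PC w (n + 1) := by
    intro d
    induction d with
    | zero =>
      intro n hn hd
      rw [SymAux.PC_iff]
      rw [← hd] at h
      exact h
    | succ d ih =>
      intro n hn hd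
      refine SymAux.step w (n + 1) ?_ (ih (n + 1) (by omega) (by omega))
      exact (SymAux.PC_iff x n).2 (hJ (n + 1) (by omega) (by omega))
  obtain ⟨k, rfl⟩ : ∃ k, n = k + 1 := ⟨n - 1, by omega⟩
  exact (SymAux.PC_iff w k).1 (key (p - (k + 1)) k (by omega) (by omega))
end

section
/- Let R be a commutative ring and let I = (x_1,…,x_s) be a finitely generated ideal. Let V = R[X_1,…,X_s] and let φ : V → R(I) be the graded R-algebra surjection sending X_i to x_i t, with kernel Q = ker φ. Then for every n ≥ 2 there is an isomorphism of R-modules ker(α_{I,n}) ≅ ker(φ_n)/(V_{n-1}·ker(φ_1)), where φ_n denotes the degree-n component of φ and V_{n-1} the degree-(n−1) homogeneous component of V. -/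
open MvPolynomial

open scoped TensorProduct
open PiTensorProduct

section PresDefs

variable {R : Type*} [CommRing R]

/-- The presentation of the Rees algebra of the ideal generated by `g`,
sending the `i`-th variable to `(g i) · t` inside `R[t]`. -/
noncomputable def reesPres {m : ℕ} (g : Fin m → R) :
    MvPolynomial (Fin m) R →ₐ[R] Polynomial R :=
  aeval fun i => Polynomial.C (g i) * Polynomial.X

/-- `Q = ker φ`, the ideal of equations of the Rees algebra w.r.t. the generators `g`. -/
noncomputable def presKer {m : ℕ} (g : Fin m → R) : Ideal (MvPolynomial (Fin m) R) :=
  RingHom.ker (reesPres g)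

/-- `ker φₙ`, the `R`-module of homogeneous equations of degree `n`. -/
noncomputable def presKerHomog {m : ℕ} (g : Fin m → R) (n : ℕ) :
    Submodule R (MvPolynomial (Fin m) R) :=
  homogeneousSubmodule (Fin m) R n ⊓ (presKer g).restrictScalars R

/-- `V_{n-1}·ker φ₁`, the `R`-submodule of `V = R[X₁,…,Xₘ]` spanned by the products
of a form of degree `n-1` with a linear equation. -/
noncomputable def linMul {m : ℕ} (g : Fin m → R) (n : ℕ) :
    Submodule R (MvPolynomial (Fin m) R) :=
  Submodule.span R {A | ∃ B G : MvPolynomial (Fin m) R,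
    B.IsHomogeneous (n - 1) ∧ G ∈ presKer g ∧ G.IsHomogeneous 1 ∧ A = B * G}

end PresDefs

section Helpers

variable {R : Type*} [CommRing R] {s : ℕ}

/-- exponent of the monomial attached to a tuple of indices -/
noncomputable def tupExp {n : ℕ} (i : Fin n → Fin s) : Fin s →₀ ℕ :=
  ∑ j, Finsupp.single (i j) 1

lemma prod_X_eq {n : ℕ} (i : Fin n → Fin s) :
    (∏ j, X (i j) : MvPolynomial (Fin s) R) = monomial (tupExp i) 1 := by
  simp only [tupExp, X]
  rw [MvPolynomial.monomial_sum_one]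

lemma exists_tup {n : ℕ} : ∀ (d : Fin s →₀ ℕ), d.degree = n →
    ∃ i : Fin n → Fin s, tupExp i = d := by
  induction n with
  | zero =>
    intro d hd
    refine ⟨Fin.elim0, ?_⟩
    rw [Finsupp.degree_eq_zero_iff] at hd
    simp [tupExp, hd]
  | succ n ih =>
    intro d hd
    have : d ≠ 0 := by rintro rfl; simp at hd
    obtain ⟨a, ha⟩ := Finsupp.ne_iff.1 this
    have hle : Finsupp.single a 1 ≤ d := by
      rw [Finsupp.single_le_iff]
      exact Nat.one_le_iff_ne_zero.2 ha
    obtain ⟨e, rfl⟩ := exists_add_of_le hle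
    have he : e.degree = n := by
      rw [map_add, Finsupp.degree_single] at hd
      omega
    obtain ⟨i, rfl⟩ := ih e he
    refine ⟨Fin.cons a i, ?_⟩
    simp [tupExp, Fin.sum_univ_succ]

lemma exists_perm_of_tupExp {n : ℕ} (i k : Fin n → Fin s) (h : tupExp i = tupExp k) :
    ∃ σ : Equiv.Perm (Fin n), k ∘ σ = i := by
  classical
  have hc : ∀ (i : Fin n → Fin s) c, tupExp i c = Fintype.card {j // i j = c} := by
    intro i c
    rw [Fintype.card_subtype, Finset.card_filter]
    simp [tupExp, Finsupp.finsetSum_apply, Finsupp.single_apply]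
  have e : ∀ c, Nonempty ({j // i j = c} ≃ {j // k j = c}) := fun c =>
    ⟨Fintype.equivOfCardEq (by rw [← hc, ← hc, h])⟩
  refine ⟨Equiv.ofFiberEquiv fun c => (e c).some, ?_⟩
  funext j
  exact Equiv.ofFiberEquiv_map _ j

lemma mem_span_of_homog {n : ℕ} {p : MvPolynomial (Fin s) R} (hp : p.IsHomogeneous n) :
    p ∈ Submodule.span R (Set.range fun i : Fin n → Fin s =>
      (∏ j, X (i j) : MvPolynomial (Fin s) R)) := by
  rw [p.as_sum]
  refine Submodule.sum_mem _ fun d hd => ?_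
  have hdeg : d.degree = n := by
    by_contra hne
    exact (mem_support_iff.1 hd) (hp.coeff_eq_zero hne)
  obtain ⟨i, rfl⟩ := exists_tup d hdeg
  have : monomial (tupExp i) (coeff (tupExp i) p) =
      coeff (tupExp i) p • (∏ j, X (i j) : MvPolynomial (Fin s) R) := by
    rw [prod_X_eq, smul_monomial, smul_eq_mul, mul_one]
  rw [this]
  exact Submodule.smul_mem _ _ (Submodule.subset_span ⟨i, rfl⟩)

lemma reesPres_homog (x : Fin s → R) {n : ℕ} {p : MvPolynomial (Fin s) R}
    (hp : p.IsHomogeneous n) :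
    reesPres x p = aeval x p • (Polynomial.X ^ n : Polynomial R) := by
  replace hp := mem_span_of_homog hp
  induction hp using Submodule.span_induction with
  | mem q hq =>
    obtain ⟨i, rfl⟩ := hq
    simp only [reesPres, map_prod, aeval_X, Finset.prod_mul_distrib, Polynomial.smul_eq_C_mul,
      Finset.prod_const, Finset.card_univ, Fintype.card_fin]
  | zero => simp
  | add a b _ _ ha hb => simp only [map_add, ha, hb, add_smul]
  | smul r a _ ha => simp only [map_smul, ha, smul_assoc]

lemma mem_presKer_iff (x : Fin s → R) {n : ℕ} {p : MvPolynomial (Fin s) R}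
    (hp : p.IsHomogeneous n) : p ∈ presKer x ↔ aeval x p = 0 := by
  rw [presKer, RingHom.mem_ker, reesPres_homog x hp]
  constructor
  · intro h
    have := congrArg (fun q => Polynomial.coeff q n) h
    simpa using this
  · intro h
    rw [h, zero_smul]

/-- linear forms -/
noncomputable def linF : (Fin s → R) →ₗ[R] MvPolynomial (Fin s) R :=
  Fintype.linearCombination R X

lemma linF_homog (a : Fin s → R) : (linF a).IsHomogeneous 1 := by
  rw [linF, Fintype.linearCombination_apply]
  refine IsHomogeneous.sum _ _ _ fun i _ => ?_
  rw [smul_eq_C_mul]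
  exact isHomogeneous_C_mul_X _ _

lemma exists_linF {G : MvPolynomial (Fin s) R} (h : G.IsHomogeneous 1) : ∃ a, linF a = G := by
  have h1 : G ∈ homogeneousSubmodule (Fin s) R 1 := h
  rw [homogeneousSubmodule_one_eq_span_X, ← Fintype.range_linearCombination] at h1
  exact h1

variable (x : Fin s → R)

/-- generators as elements of the ideal -/
def genI (i : Fin s) : Ideal.span (Set.range x) := ⟨x i, Ideal.subset_span ⟨i, rfl⟩⟩

/-- the presentation of the ideal -/
noncomputable def presI : (Fin s → R) →ₗ[R] Ideal.span (Set.range x) :=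
  Fintype.linearCombination R (genI x)

lemma presI_coe (a : Fin s → R) : ((presI x a : Ideal.span (Set.range x)) : R) =
    aeval x (linF a) := by
  simp [presI, linF, Fintype.linearCombination_apply, genI]

lemma presI_surj : Function.Surjective (presI x) := by
  rintro ⟨y, hy⟩
  have h2 : y ∈ Submodule.span R (Set.range x) := hy
  rw [← Fintype.range_linearCombination] at h2
  obtain ⟨a, ha⟩ := h2
  refine ⟨a, Subtype.ext ?_⟩
  refine Eq.trans ?_ ha
  simp [presI, Fintype.linearCombination_apply, genI]

lemma presI_zero_iff (a : Fin s → R) : presI x a = 0 ↔ linF a ∈ presKer x := by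
  rw [mem_presKer_iff x (linF_homog a), ← presI_coe]
  simp

/-- symmetric product of elements of the ideal -/
noncomputable def symMk (n : ℕ) :
    MultilinearMap R (fun _ : Fin n => Ideal.span (Set.range x))
      (SymPow R (Ideal.span (Set.range x)) n) :=
  (symRel R (Ideal.span (Set.range x)) n).mkQ.compMultilinearMap (tprod R)

lemma symMk_perm {n : ℕ} (v : Fin n → Ideal.span (Set.range x)) (σ : Equiv.Perm (Fin n)) :
    symMk x n (v ∘ σ) = symMk x n v := by
  symm
  simp only [symMk, LinearMap.compMultilinearMap_apply, Submodule.mkQ_apply]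
  rw [Submodule.Quotient.eq]
  exact Submodule.subset_span ⟨v, σ, rfl⟩

open Classical in
/-- the map from polynomials to the symmetric power -/
noncomputable def betaM (n : ℕ) :
    MvPolynomial (Fin s) R →ₗ[R] SymPow R (Ideal.span (Set.range x)) n :=
  (basisMonomials (Fin s) R).constr R fun d =>
    if h : ∃ i : Fin n → Fin s, tupExp i = d then symMk x n (genI x ∘ h.choose) else 0

lemma betaM_prod {n : ℕ} (i : Fin n → Fin s) :
    betaM x n (∏ j, X (i j)) = symMk x n (genI x ∘ i) := by
  classical
  have h : ∃ k : Fin n → Fin s, tupExp k = tupExp i := ⟨i, rfl⟩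
  have h1 : betaM x n (basisMonomials (Fin s) R (tupExp i)) = symMk x n (genI x ∘ h.choose) := by
    rw [betaM, Module.Basis.constr_basis, dif_pos h]
  rw [prod_X_eq]
  rw [coe_basisMonomials] at h1
  rw [h1]
  obtain ⟨σ, hσ⟩ := exists_perm_of_tupExp _ _ h.choose_spec
  rw [← hσ, ← Function.comp_assoc, symMk_perm]

lemma betaM_linF {n : ℕ} (a : Fin n → Fin s → R) :
    betaM x n (∏ j, linF (a j)) = symMk x n (fun j => presI x (a j)) := by
  have : (betaM x n).compMultilinearMap
      ((MultilinearMap.mkPiAlgebra R (Fin n) (MvPolynomial (Fin s) R)).compLinearMap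
        fun _ => linF) = (symMk x n).compLinearMap fun _ => presI x := by
    refine Module.Basis.ext_multilinear (fun _ => Pi.basisFun R (Fin s)) fun i => ?_
    simp only [LinearMap.compMultilinearMap_apply, MultilinearMap.compLinearMap_apply,
      MultilinearMap.mkPiAlgebra_apply, Pi.basisFun_apply, linF, presI,
      Fintype.linearCombination_apply_single, one_smul]
    exact betaM_prod x i
  exact congrArg (fun f => f a) this

lemma alpha_symMk {n : ℕ} (v : Fin n → Ideal.span (Set.range x)) :
    alphaCan R _ n (symMk x n v) = ∏ j, (v j : R) := by
  simp only [symMk, LinearMap.compMultilinearMap_apply, alphaCan, Submodule.mkQ_apply,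
    Submodule.liftQ_apply, PiTensorProduct.lift.tprod, prodML,
    MultilinearMap.compLinearMap_apply, MultilinearMap.mkPiAlgebra_apply]
  rfl

lemma alpha_beta {n : ℕ} {p : MvPolynomial (Fin s) R} (hp : p.IsHomogeneous n) :
    alphaCan R _ n (betaM x n p) = aeval x p := by
  replace hp := mem_span_of_homog hp
  induction hp using Submodule.span_induction with
  | mem q hq =>
    obtain ⟨i, rfl⟩ := hq
    rw [betaM_prod, alpha_symMk]
    simp [genI]
  | zero => simp
  | add a b _ _ ha hb => simp only [map_add, ha, hb]
  | smul r a _ ha => simp only [map_smul, ha]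

lemma sym_induct {n : ℕ} (z : SymPow R (Ideal.span (Set.range x)) n) :
    z ∈ Submodule.span R (Set.range (symMk x n)) := by
  obtain ⟨t, rfl⟩ := Submodule.mkQ_surjective _ z
  have ht : t ∈ Submodule.span R (Set.range (PiTensorProduct.tprod R)) := by
    rw [PiTensorProduct.span_tprod_eq_top]; trivial
  have := Submodule.mem_map_of_mem (f := (symRel R (Ideal.span (Set.range x)) n).mkQ) ht
  rw [Submodule.map_span, ← Set.range_comp] at this
  exact this

lemma beta_surj {n : ℕ} (z : SymPow R (Ideal.span (Set.range x)) n) :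
    ∃ p : MvPolynomial (Fin s) R, p.IsHomogeneous n ∧ betaM x n p = z := by
  have h : Submodule.span R (Set.range (symMk x n)) ≤
      (homogeneousSubmodule (Fin s) R n).map (betaM x n) := by
    rw [Submodule.span_le]
    rintro _ ⟨v, rfl⟩
    choose a ha using fun j => presI_surj x (v j)
    refine ⟨∏ j, linF (a j), ?_, ?_⟩
    · have := IsHomogeneous.prod Finset.univ (fun j => linF (a j)) (fun _ => 1)
        fun j _ => linF_homog (a j)
      simpa using this
    · rw [betaM_linF]
      simp only [ha]
  obtain ⟨p, hp, hz⟩ := h (sym_induct x z)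
  exact ⟨p, hp, hz⟩

lemma beta_linMul {n : ℕ} (hn : 1 ≤ n) {p : MvPolynomial (Fin s) R} (hp : p ∈ linMul x n) :
    betaM x n p = 0 := by
  obtain ⟨n, rfl⟩ : ∃ k, n = k + 1 := ⟨n - 1, by omega⟩
  have h : linMul x (n + 1) ≤ LinearMap.ker (betaM x (n + 1)) := by
    rw [linMul, Submodule.span_le]
    rintro _ ⟨B, G, hB, hG, hG1, rfl⟩
    obtain ⟨g, rfl⟩ := exists_linF hG1
    rw [SetLike.mem_coe, LinearMap.mem_ker]
    replace hB := mem_span_of_homog hB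
    induction hB using Submodule.span_induction with
    | mem q hq =>
      obtain ⟨i, rfl⟩ := hq
      have h1 := betaM_linF x (n := n + 1)
        (Fin.cons g fun j : Fin n => (Pi.single (i j) 1 : Fin s → R))
      rw [Fin.prod_univ_succ] at h1
      have h2 : ∀ k, linF (Pi.single k 1 : Fin s → R) = X k := by
        intro k
        rw [linF, Fintype.linearCombination_apply_single, one_smul]
      simp only [Fin.cons_zero, Fin.cons_succ, h2] at h1
      rw [mul_comm]
      refine h1.trans ?_
      refine MultilinearMap.map_coord_zero _ 0 ?_
      exact (presI_zero_iff x g).2 hG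
    | zero => simp
    | add a b _ _ ha hb => simp [add_mul, ha, hb]
    | smul r a _ ha => simp [ha]
  exact h hp

/-- the ideal generated by linear equations -/
noncomputable def linJ : Ideal (MvPolynomial (Fin s) R) :=
  Ideal.span {G | G ∈ presKer x ∧ G.IsHomogeneous 1}

lemma linJ_comp {n : ℕ} (hn : 1 ≤ n) {p : MvPolynomial (Fin s) R} (hp : p ∈ linJ x) :
    ∀ B : MvPolynomial (Fin s) R, homogeneousComponent n (B * p) ∈ linMul x n := by
  induction hp using Submodule.span_induction with
  | mem q hq =>
    intro B
    rw [← sum_homogeneousComponent B, Finset.sum_mul, map_sum]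
    refine Submodule.sum_mem _ fun k _ => ?_
    have hk := homogeneousComponent_isHomogeneous k B
    rw [homogeneousComponent_of_mem (hk.mul hq.2)]
    split_ifs with h
    · subst h
      exact Submodule.subset_span ⟨_, q, hk, hq.1, hq.2, rfl⟩
    · exact zero_mem _
  | zero => simp
  | add a b _ _ ha hb => intro B; rw [mul_add, map_add]; exact add_mem (ha B) (hb B)
  | smul r a _ ha => intro B; rw [smul_eq_mul, ← mul_assoc]; exact ha _

/-- the map from the ideal to the quotient ring by linear equations -/
noncomputable def lamI : Ideal.span (Set.range x) →ₗ[R] MvPolynomial (Fin s) R ⧸ linJ x :=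
  ((LinearMap.ker (presI x)).liftQ
    ((Ideal.Quotient.mkₐ R (linJ x)).toLinearMap ∘ₗ linF) (by
      intro a ha
      have h1 := (presI_zero_iff x a).1 ha
      exact Ideal.Quotient.eq_zero_iff_mem.2 (Ideal.subset_span ⟨h1, linF_homog a⟩))) ∘ₗ
    ((presI x).quotKerEquivOfSurjective (presI_surj x)).symm.toLinearMap

lemma lamI_presI (a : Fin s → R) :
    lamI x (presI x a) = Ideal.Quotient.mkₐ R (linJ x) (linF a) := by
  have h : ((presI x).quotKerEquivOfSurjective (presI_surj x)).symm (presI x a) =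
      Submodule.Quotient.mk a := by
    rw [LinearEquiv.symm_apply_eq]
    rfl
  rw [lamI, LinearMap.comp_apply, LinearEquiv.coe_coe, h]
  rfl

lemma lamI_genI (i : Fin s) :
    lamI x (genI x i) = Ideal.Quotient.mkₐ R (linJ x) (X i) := by
  have := lamI_presI x (Pi.single i 1)
  simpa only [presI, linF, Fintype.linearCombination_apply_single, one_smul] using this

/-- the map from the symmetric power to the quotient ring by linear equations -/
noncomputable def thetaM (n : ℕ) :
    SymPow R (Ideal.span (Set.range x)) n →ₗ[R] MvPolynomial (Fin s) R ⧸ linJ x :=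
  Submodule.liftQ _ (PiTensorProduct.lift
    ((MultilinearMap.mkPiAlgebra R (Fin n) (MvPolynomial (Fin s) R ⧸ linJ x)).compLinearMap
      fun _ => lamI x)) (by
    rw [symRel, Submodule.span_le]
    rintro z ⟨v, σ, rfl⟩
    simp only [SetLike.mem_coe, LinearMap.mem_ker, map_sub, PiTensorProduct.lift.tprod,
      MultilinearMap.compLinearMap_apply, MultilinearMap.mkPiAlgebra_apply, Function.comp_apply]
    rw [Equiv.prod_comp σ fun i => lamI x (v i), sub_self])

lemma theta_symMk {n : ℕ} (v : Fin n → Ideal.span (Set.range x)) :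
    thetaM x n (symMk x n v) = ∏ j, lamI x (v j) := by
  simp only [symMk, LinearMap.compMultilinearMap_apply, thetaM, Submodule.mkQ_apply,
    Submodule.liftQ_apply, PiTensorProduct.lift.tprod,
    MultilinearMap.compLinearMap_apply, MultilinearMap.mkPiAlgebra_apply]

lemma theta_beta {n : ℕ} {p : MvPolynomial (Fin s) R} (hp : p.IsHomogeneous n) :
    thetaM x n (betaM x n p) = Ideal.Quotient.mkₐ R (linJ x) p := by
  replace hp := mem_span_of_homog hp
  induction hp using Submodule.span_induction with
  | mem q hq =>
    obtain ⟨i, rfl⟩ := hq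
    rw [betaM_prod, theta_symMk, map_prod]
    simp only [Function.comp_apply, lamI_genI]
  | zero => simp only [map_zero]
  | add a b _ _ ha hb => simp only [map_add, ha, hb]
  | smul r a _ ha => simp only [map_smul, ha]

lemma beta_ker {n : ℕ} (hn : 1 ≤ n) {p : MvPolynomial (Fin s) R} (hp : p.IsHomogeneous n)
    (h : betaM x n p = 0) : p ∈ linMul x n := by
  have h1 := theta_beta x hp
  rw [h, map_zero] at h1
  have h2 : p ∈ linJ x := Ideal.Quotient.eq_zero_iff_mem.1 h1.symm
  have h3 := linJ_comp x hn h2 1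
  rwa [one_mul, homogeneousComponent_eq_self hp] at h3

/-- the map between the kernels -/
noncomputable def kerM (n : ℕ) :
    presKerHomog x n →ₗ[R] LinearMap.ker (alphaCan R (Ideal.span (Set.range x)) n) :=
  ((betaM x n) ∘ₗ (presKerHomog x n).subtype).codRestrict _ (by
    rintro ⟨p, hp, hp2⟩
    exact (alpha_beta x hp).trans ((mem_presKer_iff x hp).1 hp2))

end Helpers

/-- For `I = (x₁,…,xₛ)` presented by `φ : V = R[X₁,…,Xₛ] → R(I)`, `Xᵢ ↦ xᵢt`, for every
`n ≥ 2` there is an isomorphism of `R`-modules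
`ker(α_{I,n}) ≅ ker(φₙ)/(V_{n-1}·ker(φ₁))`. -/
theorem statement11 {R : Type*} [CommRing R] {s : ℕ} (x : Fin s → R)
    (I : Ideal R) (hI : I = Ideal.span (Set.range x)) :
    ∀ n, 2 ≤ n →
      Nonempty ((LinearMap.ker (alphaCan R I n)) ≃ₗ[R]
        (presKerHomog x n ⧸
          Submodule.comap (presKerHomog x n).subtype (linMul x n))) := by
  subst hI
  intro n hn
  have hsurj : Function.Surjective (kerM x n) := by
    rintro ⟨z, hz⟩
    obtain ⟨p, hp, rfl⟩ := beta_surj x z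
    refine ⟨⟨p, hp, (mem_presKer_iff x hp).2 ?_⟩, rfl⟩
    rw [← alpha_beta x hp]
    exact hz
  have hker : Submodule.comap (presKerHomog x n).subtype (linMul x n) =
      LinearMap.ker (kerM x n) := by
    ext ⟨p, hp⟩
    have h1 : kerM x n ⟨p, hp⟩ = 0 ↔ betaM x n p = 0 := Subtype.ext_iff
    rw [LinearMap.mem_ker, h1]
    exact ⟨fun h => beta_linMul x (by omega) h, fun h => beta_ker x (by omega) hp.1 h⟩
  exact ⟨((Submodule.quotEquivOfEq _ _ hker).trans
    ((kerM x n).quotKerEquivOfSurjective hsurj)).symm⟩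
end

section
/- Let R be a commutative ring and let I = (x) be a principal ideal. Then ker(α_{I,n}) ≅ (0 : x^n)/(0 : x) for all n ≥ 2. In particular there are injections ker(α_{I,2}) ↪ ker(α_{I,3}) ↪ … ↪ ker(α_{I,p}), and if α_{I,p} is an isomorphism for some p ≥ 2, then α_I : Sym_R(I) → R(I) is an isomorphism. -/
open scoped TensorProduct
open PiTensorProduct

section Helpers

variable {R : Type*} [CommRing R]

noncomputable def genMap (I : Ideal R) (y : I) (n : ℕ) : R →ₗ[R] SymPow R I n :=
  LinearMap.toSpanSingleton R (SymPow R I n)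
    ((symRel R I n).mkQ (tprod R (fun _ : Fin n => y)))

lemma genMap_apply (I : Ideal R) (y : I) (n : ℕ) (r : R) :
    genMap I y n r = (symRel R I n).mkQ (r • tprod R (fun _ : Fin n => y)) := by
  rw [genMap, LinearMap.toSpanSingleton_apply, map_smul]

lemma alpha_genMap (I : Ideal R) (y : I) (n : ℕ) (r : R) :
    alphaCan R I n (genMap I y n r) = r * (y : R) ^ n := by
  rw [genMap_apply, alphaCan, Submodule.mkQ_apply, Submodule.liftQ_apply, map_smul,
    PiTensorProduct.lift.tprod]
  simp [prodML]

lemma genMap_surjective (I : Ideal R) (y : I) (hy : ∀ z : I, ∃ r : R, z = r • y) (n : ℕ) :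
    Function.Surjective (genMap I y n) := by
  rw [← LinearMap.range_eq_top, eq_top_iff]
  intro z _
  obtain ⟨t, rfl⟩ := (symRel R I n).mkQ_surjective z
  have ht : t ∈ Submodule.span R (Set.range (tprod R (s := fun _ : Fin n => ↥I))) := by
    rw [PiTensorProduct.span_tprod_eq_top]; trivial
  have hle : Submodule.span R (Set.range (tprod R (s := fun _ : Fin n => ↥I))) ≤
      (LinearMap.range (genMap I y n)).comap (symRel R I n).mkQ := by
    rw [Submodule.span_le]
    rintro _ ⟨v, rfl⟩
    choose r hr using fun i => hy (v i)
    refine ⟨∏ i, r i, ?_⟩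
    rw [genMap_apply, ← MultilinearMap.map_smul_univ]
    congr 2
    funext i
    exact (hr i).symm
  exact hle ht

lemma genMap_eq_zero (I : Ideal R) (y : I) (hy : ∀ z : I, ∃ r : R, z = r • y) (n : ℕ)
    (hn : 1 ≤ n) (r : R) : genMap I y n r = 0 ↔ r * (y : R) = 0 := by
  constructor
  · intro h
    let J : Ideal R := LinearMap.ker (LinearMap.toSpanSingleton R I y)
    have hs : Function.Surjective (LinearMap.toSpanSingleton R I y) := fun z => by
      obtain ⟨r, hr⟩ := hy z
      exact ⟨r, by rw [hr]; rfl⟩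
    let e : (R ⧸ J) ≃ₗ[R] I := LinearMap.quotKerEquivOfSurjective _ hs
    let c : I →ₗ[R] (R ⧸ J) := e.symm.toLinearMap
    have hc : c y = 1 := by
      change e.symm y = 1
      rw [LinearEquiv.symm_apply_eq]
      change y = LinearMap.toSpanSingleton R I y 1
      simp
    let P : MultilinearMap R (fun _ : Fin n => ↥I) (R ⧸ J) :=
      (MultilinearMap.mkPiAlgebra R (Fin n) (R ⧸ J)).compLinearMap fun _ => c
    have hP : symRel R I n ≤ LinearMap.ker (PiTensorProduct.lift P) := by
      rw [symRel, Submodule.span_le]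
      rintro z ⟨v, σ, rfl⟩
      simp only [SetLike.mem_coe, LinearMap.mem_ker, map_sub, PiTensorProduct.lift.tprod]
      have : P (v ∘ σ) = P v := by
        simp only [P, MultilinearMap.compLinearMap_apply,
          MultilinearMap.mkPiAlgebra_apply, Function.comp_apply]
        exact Equiv.prod_comp σ fun i => c (v i)
      rw [this, sub_self]
    have h2 := congrArg ((symRel R I n).liftQ _ hP) h
    rw [genMap_apply, Submodule.mkQ_apply, Submodule.liftQ_apply, map_smul,
      PiTensorProduct.lift.tprod, map_zero] at h2
    have h3 : P (fun _ => y) = 1 := by simp [P, hc]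
    rw [h3, Algebra.smul_def, mul_one] at h2
    have h4 : r ∈ J := Ideal.Quotient.eq_zero_iff_mem.1 h2
    have h5 : r • y = 0 := by simpa [J] using h4
    simpa using congrArg Subtype.val h5
  · intro h
    have h5 : r • y = 0 := Subtype.ext (by simpa using h)
    have h6 : r • tprod R (fun _ : Fin n => y) = 0 := by
      have := (tprod R (s := fun _ : Fin n => ↥I)).map_update_smul
        (fun _ => y) (⟨0, hn⟩ : Fin n) r y
      rw [h5, MultilinearMap.map_update_zero] at this
      rw [this]
      simp
    rw [genMap_apply, h6, map_zero]

lemma mem_colon_aux (r a : R) : r ∈ (⊥ : Ideal R).colon (Ideal.span {a} : Ideal R) ↔ r * a = 0 := by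
  rw [Submodule.mem_colon]
  constructor
  · intro h
    simpa using h a (Ideal.mem_span_singleton_self a)
  · intro h p hp
    obtain ⟨b, rfl⟩ := Ideal.mem_span_singleton'.1 hp
    rw [smul_eq_mul, Submodule.mem_bot, mul_left_comm, h, mul_zero]

lemma ker_equiv (x : R) (I : Ideal R) (y : I) (hyx : (y : R) = x)
    (hy : ∀ z : I, ∃ r : R, z = r • y) (n : ℕ) (hn : 1 ≤ n) :
    Nonempty ((LinearMap.ker (alphaCan R I n)) ≃ₗ[R]
        (((⊥ : Ideal R).colon (Ideal.span {x ^ n})) ⧸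
          Submodule.comap ((⊥ : Ideal R).colon (Ideal.span {x ^ n})).subtype
            ((⊥ : Ideal R).colon (Ideal.span {x})))) := by
  subst hyx
  let f : ((⊥ : Ideal R).colon (Ideal.span {(y : R) ^ n} : Ideal R)) →ₗ[R]
      LinearMap.ker (alphaCan R I n) :=
    LinearMap.codRestrict _ ((genMap I y n).comp (Submodule.subtype _)) (by
      rintro ⟨r, hr⟩
      rw [LinearMap.mem_ker]
      exact (alpha_genMap I y n r).trans ((mem_colon_aux _ _).1 hr))
  have hf : Function.Surjective f := by
    rintro ⟨z, hz⟩
    obtain ⟨r, rfl⟩ := genMap_surjective I y hy n z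
    rw [LinearMap.mem_ker, alpha_genMap] at hz
    exact ⟨⟨r, (mem_colon_aux _ _).2 hz⟩, rfl⟩
  have hk : Submodule.comap ((⊥ : Ideal R).colon (Ideal.span {(y : R) ^ n} : Ideal R)).subtype
            ((⊥ : Ideal R).colon (Ideal.span {(y : R)} : Ideal R)) = LinearMap.ker f := by
    ext ⟨r, hr⟩
    rw [Submodule.mem_comap, LinearMap.mem_ker]
    refine (mem_colon_aux r _).trans ((genMap_eq_zero I y hy n hn r).symm.trans ?_)
    exact (Subtype.ext_iff (a1 := f ⟨r, hr⟩) (a2 := 0)).symm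
  exact ⟨((Submodule.quotEquivOfEq _ _ hk).trans (f.quotKerEquivOfSurjective hf)).symm⟩

end Helpers

/-- For a principal ideal `I = (x)`, `ker(α_{I,n}) ≅ (0 : xⁿ)/(0 : x)` for all `n ≥ 2`;
in particular there are injections `ker(α_{I,n}) ↪ ker(α_{I,n+1})`, and if `α_{I,p}` is
an isomorphism for some `p ≥ 2` then `α_I : Sym(I) → R(I)` is an isomorphism
(i.e. every graded component is an isomorphism). -/
theorem statement12 {R : Type*} [CommRing R] (x : R) (I : Ideal R)
    (hI : I = Ideal.span {x}) :
    (∀ n, 2 ≤ n →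
      Nonempty ((LinearMap.ker (alphaCan R I n)) ≃ₗ[R]
        (((⊥ : Ideal R).colon (Ideal.span {x ^ n})) ⧸
          Submodule.comap ((⊥ : Ideal R).colon (Ideal.span {x ^ n})).subtype
            ((⊥ : Ideal R).colon (Ideal.span {x}))))) ∧
    (∀ n, 2 ≤ n →
      ∃ f : (LinearMap.ker (alphaCan R I n)) →ₗ[R] (LinearMap.ker (alphaCan R I (n + 1))),
        Function.Injective f) ∧
    (∀ p, 2 ≤ p → Function.Injective (alphaCan R I p) →
      ∀ n, Function.Injective (alphaCan R I n)) := by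
  have hx : x ∈ I := hI ▸ Ideal.mem_span_singleton_self x
  have hy : ∀ z : I, ∃ r : R, z = r • (⟨x, hx⟩ : I) := by
    rintro ⟨z, hz⟩
    obtain ⟨r, hr⟩ := Ideal.mem_span_singleton'.1 (hI ▸ hz)
    exact ⟨r, Subtype.ext hr.symm⟩
  refine ⟨fun n hn => ker_equiv x I ⟨x, hx⟩ rfl hy n (by omega), fun n hn => ?_,
    fun p hp hinj n => ?_⟩
  · obtain ⟨e₁⟩ := ker_equiv x I ⟨x, hx⟩ rfl hy n (by omega)
    obtain ⟨e₂⟩ := ker_equiv x I ⟨x, hx⟩ rfl hy (n + 1) (by omega)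
    have hle : (⊥ : Ideal R).colon (Ideal.span {x ^ n} : Ideal R) ≤
        (⊥ : Ideal R).colon (Ideal.span {x ^ (n + 1)} : Ideal R) := by
      intro r hr
      rw [mem_colon_aux] at hr ⊢
      rw [pow_succ, ← mul_assoc, hr, zero_mul]
    let g := Submodule.mapQ
      (Submodule.comap ((⊥ : Ideal R).colon (Ideal.span {x ^ n} : Ideal R)).subtype
            ((⊥ : Ideal R).colon (Ideal.span {x} : Ideal R)))
      (Submodule.comap ((⊥ : Ideal R).colon (Ideal.span {x ^ (n + 1)} : Ideal R)).subtype
            ((⊥ : Ideal R).colon (Ideal.span {x} : Ideal R)))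
      (Submodule.inclusion hle) (fun _ h => h)
    have hg : Function.Injective g := by
      rw [← LinearMap.ker_eq_bot, LinearMap.ker_eq_bot']
      intro m hm
      obtain ⟨r, rfl⟩ := Submodule.mkQ_surjective _ m
      replace hm := (Submodule.Quotient.mk_eq_zero _ (x := Submodule.inclusion hle r)).1 hm
      rw [Submodule.mkQ_apply, Submodule.Quotient.mk_eq_zero]
      exact hm
    exact ⟨e₂.symm.toLinearMap ∘ₗ g ∘ₗ e₁.toLinearMap,
      e₂.symm.injective.comp (hg.comp e₁.injective)⟩
  · have h1 : ∀ r : R, r * x ^ p = 0 → r * x = 0 := by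
      intro r hr
      rw [← genMap_eq_zero I ⟨x, hx⟩ hy p (by omega) r]
      apply hinj
      rw [alpha_genMap, map_zero]
      exact hr
    have h2 : ∀ r : R, r * x ^ 2 = 0 → r * x = 0 := by
      intro r hr
      apply h1
      obtain ⟨k, rfl⟩ := Nat.exists_eq_add_of_le hp
      rw [pow_add, ← mul_assoc, hr, zero_mul]
    have h3 : ∀ k : ℕ, ∀ r : R, r * x ^ (k + 1) = 0 → r * x = 0 := by
      intro k
      induction k with
      | zero => intro r hr; simpa using hr
      | succ k ih =>
        intro r hr
        apply h2
        rw [pow_two, ← mul_assoc]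
        apply ih
        rw [← hr]; ring
    rw [← LinearMap.ker_eq_bot, LinearMap.ker_eq_bot']
    intro z hz
    obtain ⟨r, rfl⟩ := genMap_surjective I ⟨x, hx⟩ hy n z
    rw [alpha_genMap] at hz
    cases n with
    | zero =>
      have : r = 0 := by simpa using hz
      rw [this, map_zero]
    | succ k => exact (genMap_eq_zero I ⟨x, hx⟩ hy (k + 1) (by omega) r).2 (h3 k r hz)
end

section
/- Let R be a commutative ring and let I = (x) be a principal ideal. Then for every n ≥ 2 there is an isomorphism of R-modules E(I)_n ≅ (0 : x^n)/(0 : x^{n-1}). -/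
open scoped TensorProduct
open PiTensorProduct

section EDefs

variable (R : Type*) [CommRing R]

/-- "Multiplication by `x`" map on tensor powers: `w ↦ x ⊗ w`. -/
noncomputable def consMap (I : Ideal R) (n : ℕ) (x : ↥I) :
    TensPow R I n →ₗ[R] TensPow R I (n + 1) :=
  PiTensorProduct.lift
    ((PiTensorProduct.tprod R (s := fun _ : Fin (n + 1) => ↥I)).curryLeft x)

/-- The submodule `Sym₁(I)·ker(α_{I,n}) ⊆ Sym_{n+1}(I)`. -/
noncomputable def symOneMulKer (I : Ideal R) (n : ℕ) : Submodule R (SymPow R I (n + 1)) :=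
  Submodule.span R {z | ∃ (x : ↥I) (w : TensPow R I n),
    (Submodule.Quotient.mk w : SymPow R I n) ∈ LinearMap.ker (alphaCan R I n) ∧
    z = Submodule.Quotient.mk (consMap R I n x w)}

/-- The module of effective relations `E(I)_{n+1} = ker(α_{I,n+1})/Sym₁(I)·ker(α_{I,n})`. -/
abbrev EffRel (I : Ideal R) (n : ℕ) : Type _ :=
  LinearMap.ker (alphaCan R I (n + 1)) ⧸
    Submodule.comap (LinearMap.ker (alphaCan R I (n + 1))).subtype (symOneMulKer R I n)

end EDefs

lemma s13_mem_colon {R : Type*} [CommRing R] (r y : R) :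
    r ∈ (⊥ : Ideal R).colon (Ideal.span {y}) ↔ r * y = 0 := by
  rw [Submodule.mem_colon]
  constructor
  · intro h
    simpa using h y (Ideal.mem_span_singleton_self y)
  · intro h p hp
    obtain ⟨a, rfl⟩ := Ideal.mem_span_singleton'.1 hp
    simp only [smul_eq_mul, Submodule.mem_bot]
    linear_combination a * h

/-- The generator of the ideal. -/
def s13gen {R : Type*} [CommRing R] (x : R) : ↥(Ideal.span {x}) :=
  ⟨x, Ideal.mem_span_singleton_self x⟩

lemma s13_gen {R : Type*} [CommRing R] (x : R) (y : ↥(Ideal.span {x})) :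
    ∃ a : R, y = a • s13gen x := by
  obtain ⟨a, ha⟩ := Ideal.mem_span_singleton'.1 y.2
  exact ⟨a, Subtype.ext (by simp [s13gen, ha])⟩

/-- The generator of the tensor power. -/
noncomputable def s13e {R : Type*} [CommRing R] (x : R) (n : ℕ) :
    TensPow R (Ideal.span {x}) n := tprod R (fun _ => s13gen x)

lemma s13_tens {R : Type*} [CommRing R] (x : R) (n : ℕ) (w : TensPow R (Ideal.span {x}) n) :
    ∃ a : R, w = a • s13e x n := by
  induction w using PiTensorProduct.induction_on with
  | smul_tprod r v =>
    choose a ha using fun i => s13_gen x (v i)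
    refine ⟨r * ∏ i, a i, ?_⟩
    have : v = fun i => a i • s13gen x := funext ha
    rw [this, MultilinearMap.map_smul_univ, smul_smul, s13e]
  | add u v hu hv =>
    obtain ⟨a, rfl⟩ := hu
    obtain ⟨b, rfl⟩ := hv
    exact ⟨a + b, (add_smul _ _ _).symm⟩

lemma s13_alpha {R : Type*} [CommRing R] (x : R) (n : ℕ) :
    alphaCan R (Ideal.span {x}) n (Submodule.Quotient.mk (s13e x n)) = x ^ n := by
  rw [alphaCan, Submodule.liftQ_apply, s13e, PiTensorProduct.lift.tprod]
  simp [prodML, s13gen]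

lemma s13_cons {R : Type*} [CommRing R] (x : R) (n : ℕ) (a b : R) :
    consMap R (Ideal.span {x}) n (b • s13gen x) (a • s13e x n) = (a * b) • s13e x (n + 1) := by
  rw [map_smul, mul_smul, s13e, consMap, PiTensorProduct.lift.tprod, map_smul]
  rw [smul_apply, MultilinearMap.curryLeft_apply, s13e]
  congr 3
  funext i
  refine Fin.cases ?_ (fun i => ?_) i <;> simp

lemma s13_ann {R : Type*} [CommRing R] (x : R) (n : ℕ) (r : R)
    (h : r • (Submodule.Quotient.mk (s13e x n) : SymPow R (Ideal.span {x}) n) = 0) :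
    r * x = 0 := by
  let J := Ideal.torsionOf R R x
  let ψ : ↥(Ideal.span {x}) →ₗ[R] R ⧸ J :=
    (Ideal.quotTorsionOfEquivSpanSingleton R R x).symm.toLinearMap
  have hψ : ψ (s13gen x) = 1 := by
    change (Ideal.quotTorsionOfEquivSpanSingleton R R x).symm _ = _
    rw [LinearEquiv.symm_apply_eq]
    apply Subtype.ext
    have := Ideal.quotTorsionOfEquivSpanSingleton_apply_mk (R := R) x 1
    erw [this]
    simp [s13gen]
  let μ : MultilinearMap R (fun _ : Fin n => ↥(Ideal.span {x})) (R ⧸ J) :=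
    (MultilinearMap.mkPiAlgebra R (Fin n) (R ⧸ J)).compLinearMap fun _ => ψ
  have hμ : symRel R (Ideal.span {x}) n ≤ LinearMap.ker (PiTensorProduct.lift μ) := by
    rw [symRel, Submodule.span_le]
    rintro z ⟨v, σ, rfl⟩
    simp only [SetLike.mem_coe, LinearMap.mem_ker, map_sub, PiTensorProduct.lift.tprod]
    have : μ (v ∘ σ) = μ v := by
      simp only [μ, MultilinearMap.compLinearMap_apply,
        MultilinearMap.mkPiAlgebra_apply, Function.comp_apply]
      exact Equiv.prod_comp σ fun i => ψ (v i)
    rw [this, sub_self]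
  have h2 := congrArg (Submodule.liftQ _ (PiTensorProduct.lift μ) hμ) h
  rw [map_smul, map_zero, Submodule.liftQ_apply, s13e, PiTensorProduct.lift.tprod] at h2
  have h3 : μ (fun _ => s13gen x) = 1 := by simp [μ, hψ]
  rw [h3] at h2
  have h4 : Ideal.Quotient.mk J r = 0 := by
    rw [← h2, Algebra.smul_def, mul_one]; rfl
  rw [Ideal.Quotient.eq_zero_iff_mem] at h4
  simpa [J, Ideal.mem_torsionOf_iff] using h4

lemma s13_ker {R : Type*} [CommRing R] (x : R) (n : ℕ) (r : R) :
    r • (Submodule.Quotient.mk (s13e x n) : SymPow R (Ideal.span {x}) n) ∈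
      LinearMap.ker (alphaCan R (Ideal.span {x}) n) ↔ r * x ^ n = 0 := by
  rw [LinearMap.mem_ker, map_smul, s13_alpha, smul_eq_mul]

lemma s13_one {R : Type*} [CommRing R] (x : R) (m : ℕ) (hm : 1 ≤ m) (r : R) :
    r • (Submodule.Quotient.mk (s13e x (m + 1)) : SymPow R (Ideal.span {x}) (m + 1)) ∈
      symOneMulKer R (Ideal.span {x}) m ↔ r * x ^ m = 0 := by
  constructor
  · intro h
    have key : symOneMulKer R (Ideal.span {x}) m ≤
        Submodule.map (LinearMap.toSpanSingleton R (SymPow R (Ideal.span {x}) (m + 1))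
          (Submodule.Quotient.mk (s13e x (m + 1))))
          ((⊥ : Ideal R).colon (Ideal.span {x ^ m})) := by
      rw [symOneMulKer, Submodule.span_le]
      rintro z ⟨y, w, hw, rfl⟩
      obtain ⟨b, rfl⟩ := s13_gen x y
      obtain ⟨a, rfl⟩ := s13_tens x m w
      rw [Submodule.Quotient.mk_smul, s13_ker] at hw
      refine ⟨a * b, ?_, ?_⟩
      · rw [SetLike.mem_coe, s13_mem_colon]
        linear_combination b * hw
      · rw [s13_cons, LinearMap.toSpanSingleton_apply, Submodule.Quotient.mk_smul]
    obtain ⟨s, hs, hsr⟩ := key h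
    rw [SetLike.mem_coe, s13_mem_colon] at hs
    rw [LinearMap.toSpanSingleton_apply] at hsr
    have := s13_ann x (m + 1) (r - s) (by rw [sub_smul, hsr, sub_self])
    obtain ⟨k, rfl⟩ := Nat.exists_eq_add_of_le' hm
    rw [pow_succ] at hs ⊢
    linear_combination hs + x ^ k * this
  · intro h
    apply Submodule.subset_span
    refine ⟨(1 : R) • s13gen x, r • s13e x m, ?_, ?_⟩
    · rw [Submodule.Quotient.mk_smul, s13_ker, h]
    · rw [s13_cons, mul_one, Submodule.Quotient.mk_smul]

/-- For a principal ideal `I = (x)` and every `n ≥ 2` there is an isomorphism of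
`R`-modules `E(I)ₙ ≅ (0 : xⁿ)/(0 : xⁿ⁻¹)`   (here `EffRel R I (n-1) = E(I)ₙ`,
since `EffRel R I m = ker(α_{I,m+1})/Sym₁(I)·ker(α_{I,m})`). -/
theorem statement13 {R : Type*} [CommRing R] (x : R) (I : Ideal R)
    (hI : I = Ideal.span {x}) :
    ∀ n, 2 ≤ n →
      Nonempty ((EffRel R I (n - 1)) ≃ₗ[R]
        (((⊥ : Ideal R).colon (Ideal.span {x ^ n})) ⧸
          Submodule.comap ((⊥ : Ideal R).colon (Ideal.span {x ^ n})).subtype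
            ((⊥ : Ideal R).colon (Ideal.span {x ^ (n - 1)})))) := by
  intro n hn
  subst hI
  obtain ⟨m, rfl⟩ : ∃ m, n = m + 1 := ⟨n - 1, by omega⟩
  have hm : 1 ≤ m := by omega
  rw [Nat.add_sub_cancel]
  let f : ((⊥ : Ideal R).colon (Ideal.span {x ^ (m + 1)})) →ₗ[R]
      LinearMap.ker (alphaCan R (Ideal.span {x}) (m + 1)) :=
    LinearMap.codRestrict _
      ((LinearMap.toSpanSingleton R (SymPow R (Ideal.span {x}) (m + 1))
          (Submodule.Quotient.mk (s13e x (m + 1)))).comp (Submodule.subtype _))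
      (fun c => (s13_ker x (m + 1) c.1).2 ((s13_mem_colon _ _).1 c.2))
  have hf : Function.Surjective f := by
    rintro ⟨z, hz⟩
    obtain ⟨w, rfl⟩ := Submodule.Quotient.mk_surjective _ z
    obtain ⟨a, rfl⟩ := s13_tens x (m + 1) w
    have hz' := hz
    rw [Submodule.Quotient.mk_smul, s13_ker] at hz'
    exact ⟨⟨a, (s13_mem_colon _ _).2 hz'⟩, Subtype.ext rfl⟩
  let g := (Submodule.mkQ (Submodule.comap
    (LinearMap.ker (alphaCan R (Ideal.span {x}) (m + 1))).subtype
      (symOneMulKer R (Ideal.span {x}) m))).comp f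
  have hg : Function.Surjective g := (Submodule.mkQ_surjective _).comp hf
  have hk : Submodule.comap ((⊥ : Ideal R).colon (Ideal.span {x ^ (m + 1)})).subtype
      ((⊥ : Ideal R).colon (Ideal.span {x ^ m})) = LinearMap.ker g := by
    ext c
    rw [LinearMap.mem_ker, LinearMap.comp_apply, Submodule.mkQ_apply,
      Submodule.Quotient.mk_eq_zero, Submodule.mem_comap, Submodule.mem_comap]
    exact (s13_mem_colon _ _).trans (s13_one x m hm c.1).symm
  exact ⟨((Submodule.quotEquivOfEq _ _ hk).trans (g.quotKerEquivOfSurjective hg)).symm⟩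
end

section
/- Let R be a commutative ring and let I = (x,y) be a two-generated ideal. Then for every n ≥ 2 there is a short exact sequence of R-modules 0 → ((0 : x) ∩ I^{n-1}) / (y·((0 : x) ∩ I^{n-2})) → E(I)_n → (xI^{n-1} : y^n)/(xI^{n-2} : y^{n-1}) → 0. -/
open scoped TensorProduct
open PiTensorProduct

section AuxDefs

variable {R : Type*} [CommRing R]

/-- The ideal `(0 : x) ∩ Iᵐ`. -/
noncomputable def annCapPow (x : R) (I : Ideal R) (m : ℕ) : Ideal R :=
  (⊥ : Ideal R).colon (Ideal.span {x}) ⊓ I ^ m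

/-- The colon ideal `(xIᵐ : yᵏ)`. -/
noncomputable def colonPow (x y : R) (I : Ideal R) (m k : ℕ) : Ideal R :=
  (Ideal.span {x} * I ^ m).colon (Ideal.span {y ^ k})

end AuxDefs

section Aux14

variable {R : Type*} [CommRing R]

/-- product map on tensors -/
noncomputable abbrev prodT (I : Ideal R) (n : ℕ) : TensPow R I n →ₗ[R] R :=
  PiTensorProduct.lift (prodML R I n)

theorem consMap_tprod (I : Ideal R) (n : ℕ) (x : I) (v : Fin n → I) :
    consMap R I n x (tprod R v) = tprod R (Fin.cons x v : Fin (n + 1) → I) := by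
  simp [consMap, MultilinearMap.curryLeft_apply]

theorem prodT_tprod (I : Ideal R) (n : ℕ) (v : Fin n → I) :
    prodT I n (tprod R v) = ∏ i, (v i : R) := by
  simp [prodML]

theorem prodT_cons (I : Ideal R) (n : ℕ) (x : I) (w : TensPow R I n) :
    prodT I (n + 1) (consMap R I n x w) = x * prodT I n w := by
  induction w using PiTensorProduct.induction_on with
  | smul_tprod r v =>
    rw [map_smul, map_smul, map_smul, consMap_tprod, prodT_tprod, prodT_tprod, Fin.prod_univ_succ]
    simp [mul_left_comm]
  | add a b ha hb => rw [map_add, map_add, map_add, ha, hb, mul_add]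

theorem consMap_lin (I : Ideal R) (n : ℕ) (a b : R) (x y : I) (w : TensPow R I n) :
    consMap R I n (a • x + b • y) w = a • consMap R I n x w + b • consMap R I n y w := by
  simp [consMap, map_add, map_smul]

theorem prodT_mem (I : Ideal R) (n : ℕ) (w : TensPow R I n) : prodT I n w ∈ I ^ n := by
  induction w using PiTensorProduct.induction_on with
  | smul_tprod r v =>
    rw [map_smul, prodT_tprod]
    apply Submodule.smul_mem
    have := Ideal.prod_mem_prod (s := Finset.univ) (I := fun _ : Fin n => I)
      (x := fun i => (v i : R)) (fun i _ => (v i).2)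
    simpa using this
  | add a b ha hb => rw [map_add]; exact add_mem ha hb

theorem prodT_surj (I : Ideal R) (n : ℕ) (q : R) (hq : q ∈ I ^ n) :
    ∃ w, prodT I n w = q := by
  suffices I ^ n ≤ LinearMap.range (prodT I n) from this hq
  clear hq q
  induction n with
  | zero =>
    rintro q -
    exact ⟨q • tprod R (fun i => i.elim0), by rw [map_smul, prodT_tprod]; simp⟩
  | succ n ih =>
    rw [pow_succ', Ideal.mul_le]
    intro r hr s hs
    obtain ⟨w, rfl⟩ := ih hs
    exact ⟨consMap R I n ⟨r, hr⟩ w, prodT_cons _ _ _ _⟩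

theorem cons_swap (I : Ideal R) (n : ℕ) (x y : I) (w : TensPow R I n) :
    consMap R I (n + 1) x (consMap R I n y w) - consMap R I (n + 1) y (consMap R I n x w)
      ∈ symRel R I (n + 2) := by
  induction w using PiTensorProduct.induction_on with
  | smul_tprod r v =>
    simp only [map_smul]
    suffices h : consMap R I (n + 1) x (consMap R I n y (tprod R v)) -
        consMap R I (n + 1) y (consMap R I n x (tprod R v)) ∈ symRel R I (n + 2) by
      have h' := Submodule.smul_mem _ r h
      rw [smul_sub] at h'
      exact h'
    apply Submodule.subset_span
    rw [consMap_tprod, consMap_tprod, consMap_tprod, consMap_tprod]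
    refine ⟨(Fin.cons x (Fin.cons y v : Fin (n + 1) → I) : Fin (n + 2) → I), Equiv.swap 0 1, ?_⟩
    congr 2
    funext i
    refine Fin.cases ?_ (fun i => Fin.cases ?_ (fun i => ?_) i) i
    · simp
    · simp
    · have h1 : (i.succ.succ : Fin (n + 2)) ≠ 0 := Fin.succ_ne_zero _
      have h2 : (i.succ.succ : Fin (n + 2)) ≠ 1 := by
        intro h
        have := congrArg Fin.val h
        simp at this
      simp [Equiv.swap_apply_of_ne_of_ne h1 h2]
  | add a b ha hb =>
    simp only [map_add]
    convert add_mem ha hb using 1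
    abel

theorem tens_decomp (I : Ideal R) (n : ℕ) (x y : I) (hs : ∀ v : I, ∃ a b : R, v = a • x + b • y)
    (t : TensPow R I (n + 1)) :
    ∃ F w, t = consMap R I n x F + consMap R I n y w := by
  induction t using PiTensorProduct.induction_on with
  | smul_tprod r v =>
    obtain ⟨a, b, hab⟩ := hs (v 0)
    refine ⟨(r * a) • tprod R (Fin.tail v), (r * b) • tprod R (Fin.tail v), ?_⟩
    rw [map_smul, map_smul, mul_smul, mul_smul, ← smul_add, ← consMap_lin, ← hab, consMap_tprod,
      Fin.cons_self_tail]
  | add a b ha hb =>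
    obtain ⟨F, w, rfl⟩ := ha
    obtain ⟨F', w', rfl⟩ := hb
    exact ⟨F + F', w + w', by simp only [map_add]; abel⟩

/-- auxiliary ring -/
abbrev AuxRing (x : R) : Type _ := R × QuadraticAlgebra R 0 x

/-- linear form aX+bY in the auxiliary ring -/
def lform (x y : R) (p : R × R) : AuxRing x := (p.2, ⟨p.2 * y, p.1⟩)

/-- read off -/
def rd (x : R) : AuxRing x →ₗ[R] R × R where
  toFun z := (z.2.im, z.1)
  map_add' _ _ := rfl
  map_smul' _ _ := rfl

/-- relations -/
def relN (x y : R) (I : Ideal R) (k : ℕ) : Submodule R (R × R) where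
  carrier := {p | ∃ u ∈ I ^ k, p.1 = y * u ∧ x * u + p.2 * y ^ (k + 1) = 0}
  zero_mem' := ⟨0, zero_mem _, by simp, by simp⟩
  add_mem' := by
    rintro p q ⟨u, hu, h1, h2⟩ ⟨v, hv, h3, h4⟩
    refine ⟨u + v, add_mem hu hv, ?_, ?_⟩
    · simp only [Prod.fst_add, h1, h3]; ring
    · simp only [Prod.snd_add]; linear_combination h2 + h4
  smul_mem' := by
    rintro r p ⟨u, hu, h1, h2⟩
    refine ⟨r * u, Ideal.mul_mem_left _ _ hu, ?_, ?_⟩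
    · simp only [Prod.smul_fst, smul_eq_mul, h1]; ring
    · simp only [Prod.smul_snd, smul_eq_mul]; linear_combination r * h2

/-- cycles -/
def cycK (x y : R) (I : Ideal R) (k : ℕ) : Submodule R (R × R) where
  carrier := {p | p.1 ∈ I ^ (k + 1) ∧ x * p.1 + p.2 * y ^ (k + 2) = 0}
  zero_mem' := ⟨zero_mem _, by simp⟩
  add_mem' := by
    rintro p q ⟨h1, h2⟩ ⟨h3, h4⟩
    refine ⟨add_mem h1 h3, ?_⟩
    simp only [Prod.snd_add, Prod.fst_add]; linear_combination h2 + h4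
  smul_mem' := by
    rintro r p ⟨h1, h2⟩
    refine ⟨Ideal.mul_mem_left _ _ h1, ?_⟩
    simp only [Prod.smul_snd, Prod.smul_fst, smul_eq_mul]; linear_combination r * h2

theorem prod_shape {ι : Type*} (x y : R) (I : Ideal R) (hx : x ∈ I) (hy : y ∈ I)
    (s : Finset ι) (p : ι → R × R) :
    (∏ i ∈ s, lform x y (p i)).2.re = (∏ i ∈ s, lform x y (p i)).1 * y ^ s.card ∧
    (s.card = 0 → (∏ i ∈ s, lform x y (p i)).2.im = 0) ∧
    (∏ i ∈ s, lform x y (p i)).2.im ∈ I ^ (s.card - 1) ∧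
    (∏ i ∈ s, ((p i).1 * x + (p i).2 * y)) =
      (∏ i ∈ s, lform x y (p i)).2.re + x * (∏ i ∈ s, lform x y (p i)).2.im := by
  classical
  induction s using Finset.induction_on with
  | empty =>
    refine ⟨?_, ?_, ?_, ?_⟩
    · simp [QuadraticAlgebra.re_one]
    · simp [QuadraticAlgebra.im_one]
    · simp
    · simp [QuadraticAlgebra.re_one, QuadraticAlgebra.im_one]
  | insert j s hj ih =>
    rw [Finset.prod_insert hj, Finset.card_insert_of_notMem hj, Finset.prod_insert hj]
    set P := ∏ i ∈ s, lform x y (p i) with hP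
    obtain ⟨h1, h0, h2, h3⟩ := ih
    rw [h3]
    simp only [lform, Prod.snd_mul, Prod.fst_mul, QuadraticAlgebra.re_mul,
      QuadraticAlgebra.im_mul]
    refine ⟨?_, by simp, ?_, ?_⟩
    · rw [h1]; ring
    · rcases Nat.eq_zero_or_pos s.card with hc | hc
      · simp [hc]
      · have hv : (p j).1 * x + (p j).2 * y ∈ I :=
          add_mem (Ideal.mul_mem_left _ _ hx) (Ideal.mul_mem_left _ _ hy)
        have e1 : ((p j).1 * x + (p j).2 * y) * P.2.im ∈ I ^ s.card := by
          have := Ideal.mul_mem_mul hv h2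
          rwa [← pow_succ', Nat.sub_add_cancel hc] at this
        have e2 : (p j).1 * P.1 * y ^ s.card ∈ I ^ s.card :=
          Ideal.mul_mem_left _ _ (Ideal.pow_mem_pow hy _)
        rw [Nat.add_sub_cancel]
        convert add_mem e1 e2 using 1
        rw [h1]; ring
    · ring

/-- one linear syzygy times a product is a relation -/
theorem slot_mem (x y : R) (I : Ideal R) (k : ℕ) (hy : y ∈ I) (P : AuxRing x)
    (hP : P.2.re = P.1 * y ^ (k + 1)) (p : R × R) (hp : p.1 * x + p.2 * y = 0) :
    rd x (lform x y p * P) ∈ relN x y I k := by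
  refine ⟨p.1 * P.1 * y ^ k, Ideal.mul_mem_left _ _ (Ideal.pow_mem_pow hy _), ?_, ?_⟩
  · simp only [rd, lform, LinearMap.coe_mk, AddHom.coe_mk, Prod.snd_mul, QuadraticAlgebra.im_mul,
      hP]
    linear_combination P.2.im * hp
  · simp only [rd, lform, LinearMap.coe_mk, AddHom.coe_mk, Prod.fst_mul]
    linear_combination P.1 * y ^ k * hp

theorem lform_lin (x y : R) (a b : R) (p q : R × R) :
    lform x y (a • p + b • q) = a • lform x y p + b • lform x y q := by
  refine Prod.ext ?_ (QuadraticAlgebra.ext ?_ ?_)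
  · simp [lform]
  · simp [lform]; ring
  · simp [lform]

theorem slot_eq (x y : R) (I : Ideal R) (k : ℕ) (hy : y ∈ I) (P : AuxRing x)
    (hP : P.2.re = P.1 * y ^ (k + 1)) (a b : R) (p q r : R × R)
    (hp : r.1 * x + r.2 * y = a * (p.1 * x + p.2 * y) + b * (q.1 * x + q.2 * y)) :
    (relN x y I k).mkQ (rd x (lform x y r * P)) =
      a • (relN x y I k).mkQ (rd x (lform x y p * P)) +
      b • (relN x y I k).mkQ (rd x (lform x y q * P)) := by
  suffices h : (relN x y I k).mkQ (rd x (lform x y r * P -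
      (a • (lform x y p * P) + b • (lform x y q * P)))) = 0 by
    simp only [map_sub, map_add, map_smul] at h
    exact sub_eq_zero.1 h
  have : lform x y r * P - (a • (lform x y p * P) + b • (lform x y q * P)) =
      lform x y ((1 : R) • r + (-1 : R) • (a • p + b • q)) * P := by
    rw [lform_lin, lform_lin, add_mul, smul_mul_assoc, smul_mul_assoc, add_mul, smul_mul_assoc,
      smul_mul_assoc, one_smul, neg_one_smul, sub_eq_add_neg]
  rw [this, Submodule.mkQ_apply, Submodule.Quotient.mk_eq_zero]
  apply slot_mem x y I k hy P hP
  simp only [Prod.fst_add, Prod.snd_add, Prod.smul_fst, Prod.smul_snd, smul_eq_mul]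
  linear_combination hp

theorem prod_upd (x y : R) (I : Ideal R) (n : ℕ) [DecidableEq (Fin n)] (s : I → R × R)
    (v : Fin n → I) (i : Fin n)
    (z : I) :
    ∏ j, lform x y (s (Function.update v i z j)) =
      lform x y (s z) * ∏ j ∈ Finset.univ \ {i}, lform x y (s (v j)) := by
  rw [← Finset.prod_update_of_mem (Finset.mem_univ i)]
  refine Finset.prod_congr rfl fun j _ => ?_
  by_cases h : j = i
  · subst h; simp
  · simp [h]

theorem shape_upd (x y : R) (I : Ideal R) (hx : x ∈ I) (hy : y ∈ I) (k : ℕ)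
    [DecidableEq (Fin (k + 2))] (s : I → R × R) (v : Fin (k + 2) → I) (i : Fin (k + 2)) :
    (∏ j ∈ Finset.univ \ {i}, lform x y (s (v j))).2.re =
      (∏ j ∈ Finset.univ \ {i}, lform x y (s (v j))).1 * y ^ (k + 1) := by
  have := (prod_shape x y I hx hy (Finset.univ \ {i}) (fun j => s (v j))).1
  rw [this]
  congr 2
  rw [Finset.card_sdiff_of_subset (by simp)]
  simp

/-- the multilinear map -/
noncomputable def hML (x y : R) (I : Ideal R) (hx : x ∈ I) (hy : y ∈ I) (k : ℕ) (s : I → R × R)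
    (hs : ∀ v : I, (s v).1 * x + (s v).2 * y = v) :
    MultilinearMap R (fun _ : Fin (k + 2) => I) ((R × R) ⧸ relN x y I k) where
  toFun v := (relN x y I k).mkQ (rd x (∏ i, lform x y (s (v i))))
  map_update_add' := by
    intro inst v i a b
    rw [prod_upd, prod_upd, prod_upd,
      slot_eq x y I k hy _ (shape_upd x y I hx hy k s v i) 1 1 (s a) (s b), one_smul, one_smul]
    simp [hs]
  map_update_smul' := by
    intro inst v i r a
    rw [prod_upd, prod_upd,
      slot_eq x y I k hy _ (shape_upd x y I hx hy k s v i) r 0 (s a) (s a), zero_smul, add_zero]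
    simp [hs]

/-- the map out of the symmetric power -/
noncomputable def hSym (x y : R) (I : Ideal R) (hx : x ∈ I) (hy : y ∈ I) (k : ℕ) (s : I → R × R)
    (hs : ∀ v : I, (s v).1 * x + (s v).2 * y = v) :
    SymPow R I (k + 2) →ₗ[R] ((R × R) ⧸ relN x y I k) :=
  Submodule.liftQ _ (PiTensorProduct.lift (hML x y I hx hy k s hs)) (by
    rw [symRel, Submodule.span_le]
    rintro z ⟨v, σ, rfl⟩
    simp only [SetLike.mem_coe, LinearMap.mem_ker, map_sub, PiTensorProduct.lift.tprod]
    rw [sub_eq_zero]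
    simp only [hML, MultilinearMap.coe_mk, Function.comp_apply]
    rw [Equiv.prod_comp σ fun i => lform x y (s (v i))])

theorem hSym_cons (x y : R) (I : Ideal R) (hx : x ∈ I) (hy : y ∈ I) (k : ℕ) (s : I → R × R)
    (hs : ∀ v : I, (s v).1 * x + (s v).2 * y = v) (w : TensPow R I (k + 1)) :
    ∃ C ∈ I ^ k, ∃ c : R, prodT I (k + 1) w = x * C + c * y ^ (k + 1) ∧
      hSym x y I hx hy k s hs (Submodule.Quotient.mk (consMap R I (k + 1) ⟨x, hx⟩ w)) =
        (relN x y I k).mkQ (prodT I (k + 1) w, 0) ∧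
      hSym x y I hx hy k s hs (Submodule.Quotient.mk (consMap R I (k + 1) ⟨y, hy⟩ w)) =
        (relN x y I k).mkQ (y * C, c) := by
  induction w using PiTensorProduct.induction_on with
  | smul_tprod r v =>
    obtain ⟨h1, -, h2, h3⟩ := prod_shape x y I hx hy Finset.univ (fun j => s (v j))
    simp only [Finset.card_univ, Fintype.card_fin, Nat.add_sub_cancel, hs] at h1 h2 h3
    have key : ∀ (z : I) (p : R × R), p.1 * x + p.2 * y = z →
        hSym x y I hx hy k s hs (Submodule.Quotient.mk (consMap R I (k + 1) z (tprod R v))) =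
        (relN x y I k).mkQ (rd x (lform x y p * ∏ j, lform x y (s (v j)))) := by
      intro z p hp
      rw [consMap_tprod]
      change PiTensorProduct.lift (hML x y I hx hy k s hs) (tprod R _) = _
      rw [PiTensorProduct.lift.tprod]
      simp only [hML, MultilinearMap.coe_mk]
      rw [Fin.prod_univ_succ]
      simp only [Fin.cons_zero, Fin.cons_succ]
      rw [slot_eq x y I k hy _ h1 1 0 p p, one_smul, zero_smul, add_zero]
      simp [hs, hp]
    set P := ∏ j, lform x y (s (v j)) with hP
    refine ⟨r * P.2.im, Ideal.mul_mem_left _ _ h2, r * P.1, ?_, ?_, ?_⟩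
    · rw [map_smul, prodT_tprod, h3, h1, smul_eq_mul]; ring
    · rw [map_smul, Submodule.Quotient.mk_smul, map_smul, key _ (1, 0) (by simp), map_smul,
        ← map_smul, prodT_tprod, h3]
      congr 1
      simp [rd, lform]
    · rw [map_smul, Submodule.Quotient.mk_smul, map_smul, key _ (0, 1) (by simp),
        ← map_smul]
      congr 1
      simp [rd, lform]; ring
  | add a b ha hb =>
    obtain ⟨C, hC, c, h1, h2, h3⟩ := ha
    obtain ⟨C', hC', c', h1', h2', h3'⟩ := hb
    refine ⟨C + C', add_mem hC hC', c + c', ?_, ?_, ?_⟩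
    · rw [map_add, h1, h1']; ring
    · rw [map_add, Submodule.Quotient.mk_add, map_add, h2, h2',
        ← map_add (relN x y I k).mkQ, map_add (prodT I (k + 1)), Prod.mk_add_mk, add_zero]
    · rw [map_add, Submodule.Quotient.mk_add, map_add, h3, h3', ← map_add]; simp [mul_add]

theorem hSym_vanish (x y : R) (I : Ideal R) (hx : x ∈ I) (hy : y ∈ I) (k : ℕ) (s : I → R × R)
    (hs : ∀ v : I, (s v).1 * x + (s v).2 * y = v) (z : SymPow R I (k + 2))
    (hz : z ∈ symOneMulKer R I (k + 1)) : hSym x y I hx hy k s hs z = 0 := by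
  suffices symOneMulKer R I (k + 1) ≤ LinearMap.ker (hSym x y I hx hy k s hs) from this hz
  rw [symOneMulKer, Submodule.span_le]
  rintro _ ⟨v, w, hw, rfl⟩
  have hw' : prodT I (k + 1) w = 0 := hw
  have hv : v = (s v).1 • (⟨x, hx⟩ : I) + (s v).2 • (⟨y, hy⟩ : I) := by
    apply Subtype.ext
    simp [hs]
  obtain ⟨C, hC, c, h1, h2, h3⟩ := hSym_cons x y I hx hy k s hs w
  rw [SetLike.mem_coe, LinearMap.mem_ker, hv, consMap_lin, Submodule.Quotient.mk_add,
    Submodule.Quotient.mk_smul, Submodule.Quotient.mk_smul, map_add, map_smul, map_smul, h2, h3,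
    hw']
  have e1 : (relN x y I k).mkQ (y * C, c) = 0 := by
    rw [Submodule.mkQ_apply, Submodule.Quotient.mk_eq_zero]
    exact ⟨C, hC, rfl, by rw [← h1, hw']⟩
  have e2 : (relN x y I k).mkQ ((0, 0) : R × R) = 0 := map_zero _
  rw [e1, e2, smul_zero, smul_zero, add_zero]

theorem hSym_inj (x y : R) (I : Ideal R) (hx : x ∈ I) (hy : y ∈ I) (k : ℕ) (s : I → R × R)
    (hs : ∀ v : I, (s v).1 * x + (s v).2 * y = v) (z : SymPow R I (k + 2))
    (hz : hSym x y I hx hy k s hs z = 0) : z ∈ symOneMulKer R I (k + 1) := by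
  obtain ⟨t, rfl⟩ := Submodule.Quotient.mk_surjective _ z
  obtain ⟨F, w, rfl⟩ := tens_decomp I (k + 1) ⟨x, hx⟩ ⟨y, hy⟩
    (fun v => ⟨(s v).1, (s v).2, Subtype.ext (by simp [hs])⟩) t
  obtain ⟨-, -, -, -, h2, -⟩ := hSym_cons x y I hx hy k s hs F
  obtain ⟨C, hC, c, h1', -, h3'⟩ := hSym_cons x y I hx hy k s hs w
  rw [Submodule.Quotient.mk_add, map_add, h2, h3', ← map_add, Submodule.mkQ_apply,
    Submodule.Quotient.mk_eq_zero] at hz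
  obtain ⟨u, hu, e1, e2⟩ := hz
  simp only [Prod.mk_add_mk, zero_add] at e1 e2
  obtain ⟨D, hD⟩ := prodT_surj I k (C - u) (sub_mem hC hu)
  have hw : prodT I (k + 1) (w - consMap R I k ⟨x, hx⟩ D) = 0 := by
    rw [map_sub, prodT_cons, hD, h1']
    linear_combination e2
  have hF : prodT I (k + 1) (F + consMap R I k ⟨y, hy⟩ D) = 0 := by
    rw [map_add, prodT_cons, hD]
    linear_combination e1
  have hsw := cons_swap I k ⟨y, hy⟩ ⟨x, hx⟩ D
  have : (Submodule.Quotient.mk (consMap R I (k + 1) ⟨x, hx⟩ F + consMap R I (k + 1) ⟨y, hy⟩ w) :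
      SymPow R I (k + 2)) =
      Submodule.Quotient.mk (consMap R I (k + 1) ⟨x, hx⟩ (F + consMap R I k ⟨y, hy⟩ D)) +
      Submodule.Quotient.mk (consMap R I (k + 1) ⟨y, hy⟩ (w - consMap R I k ⟨x, hx⟩ D)) := by
    rw [← Submodule.Quotient.mk_add, Submodule.Quotient.eq]
    convert hsw using 1
    simp only [map_add, map_sub]
    abel
  rw [this]
  exact add_mem (Submodule.subset_span ⟨_, _, hF, rfl⟩) (Submodule.subset_span ⟨_, _, hw, rfl⟩)

theorem hSym_image (x y : R) (I : Ideal R) (hx : x ∈ I) (hy : y ∈ I) (k : ℕ) (s : I → R × R)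
    (hs : ∀ v : I, (s v).1 * x + (s v).2 * y = v) (z : SymPow R I (k + 2))
    (hz : alphaCan R I (k + 2) z = 0) :
    ∃ p ∈ cycK x y I k, hSym x y I hx hy k s hs z = (relN x y I k).mkQ p := by
  obtain ⟨t, rfl⟩ := Submodule.Quotient.mk_surjective _ z
  obtain ⟨F, w, rfl⟩ := tens_decomp I (k + 1) ⟨x, hx⟩ ⟨y, hy⟩
    (fun v => ⟨(s v).1, (s v).2, Subtype.ext (by simp [hs])⟩) t
  obtain ⟨-, -, -, -, h2, -⟩ := hSym_cons x y I hx hy k s hs F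
  obtain ⟨C, hC, c, h1', -, h3'⟩ := hSym_cons x y I hx hy k s hs w
  have hz' : prodT I (k + 2) (consMap R I (k + 1) ⟨x, hx⟩ F + consMap R I (k + 1) ⟨y, hy⟩ w) = 0 :=
    hz
  rw [map_add, prodT_cons, prodT_cons, h1'] at hz'
  refine ⟨(prodT I (k + 1) F + y * C, c), ⟨?_, ?_⟩, ?_⟩
  · refine add_mem (prodT_mem _ _ _) ?_
    rw [pow_succ']
    exact Ideal.mul_mem_mul hy hC
  · simp only at hz' ⊢
    linear_combination hz'
  · rw [Submodule.Quotient.mk_add, map_add, h2, h3', ← map_add]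
    simp

theorem hSym_surj (x y : R) (I : Ideal R) (hx : x ∈ I) (hy : y ∈ I) (k : ℕ) (s : I → R × R)
    (hs : ∀ v : I, (s v).1 * x + (s v).2 * y = v) (p : R × R) (hp : p ∈ cycK x y I k) :
    ∃ z : SymPow R I (k + 2), alphaCan R I (k + 2) z = 0 ∧
      hSym x y I hx hy k s hs z = (relN x y I k).mkQ p := by
  obtain ⟨q, c⟩ := p
  obtain ⟨h1, h2⟩ := hp
  simp only at h1 h2
  obtain ⟨F, rfl⟩ := prodT_surj I (k + 1) q h1
  obtain ⟨w, hw⟩ := prodT_surj I (k + 1) (y ^ (k + 1)) (Ideal.pow_mem_pow hy _)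
  obtain ⟨-, -, -, -, h3, -⟩ := hSym_cons x y I hx hy k s hs F
  obtain ⟨C, hC, c', h1', -, h3'⟩ := hSym_cons x y I hx hy k s hs w
  refine ⟨Submodule.Quotient.mk
    (consMap R I (k + 1) ⟨x, hx⟩ F + c • consMap R I (k + 1) ⟨y, hy⟩ w), ?_, ?_⟩
  · change prodT I (k + 2) _ = 0
    rw [map_add, map_smul, prodT_cons, prodT_cons, hw, smul_eq_mul]
    linear_combination h2
  · rw [Submodule.Quotient.mk_add, map_add, Submodule.Quotient.mk_smul, map_smul, h3, h3',
      ← map_smul, ← map_add, Submodule.mkQ_apply, Submodule.mkQ_apply, Submodule.Quotient.eq]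
    refine ⟨c * C, Ideal.mul_mem_left _ _ hC, ?_, ?_⟩
    · simp; ring
    · simp only [Prod.snd_sub, Prod.snd_add, Prod.smul_snd, smul_eq_mul]
      linear_combination c * (hw - h1')

theorem exists_e (x y : R) (I : Ideal R) (hI : I = Ideal.span {x, y}) (k : ℕ) :
    ∃ e : cycK x y I k →ₗ[R] EffRel R I (k + 1), Function.Surjective e ∧
      ∀ p, e p = 0 ↔ (p : R × R) ∈ relN x y I k := by
  have hx : x ∈ I := hI ▸ Ideal.subset_span (by simp)
  have hy : y ∈ I := hI ▸ Ideal.subset_span (by simp)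
  have hs : ∀ v : I, ∃ p : R × R, p.1 * x + p.2 * y = v := by
    rintro ⟨v, hv⟩
    rw [hI, Ideal.mem_span_pair] at hv
    obtain ⟨a, b, h⟩ := hv
    exact ⟨(a, b), h⟩
  choose s hs using hs
  let ι : EffRel R I (k + 1) →ₗ[R] ((R × R) ⧸ relN x y I k) :=
    Submodule.liftQ _ ((hSym x y I hx hy k s hs).comp
      (LinearMap.ker (alphaCan R I (k + 1 + 1))).subtype)
      (fun z hz => hSym_vanish x y I hx hy k s hs z hz)
  have hι : Function.Injective ι := by
    rw [injective_iff_map_eq_zero]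
    intro z hz
    obtain ⟨z, rfl⟩ := Submodule.Quotient.mk_surjective _ z
    rw [Submodule.Quotient.mk_eq_zero]
    exact hSym_inj x y I hx hy k s hs z hz
  have hr : ∀ p : cycK x y I k, (relN x y I k).mkQ p ∈ LinearMap.range ι := by
    rintro ⟨p, hp⟩
    obtain ⟨z, h1, h2⟩ := hSym_surj x y I hx hy k s hs p hp
    exact ⟨Submodule.Quotient.mk ⟨z, h1⟩, h2⟩
  let e : cycK x y I k →ₗ[R] EffRel R I (k + 1) :=
    (LinearEquiv.ofInjective ι hι).symm.toLinearMap.comp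
      (LinearMap.codRestrict _ ((relN x y I k).mkQ.comp (cycK x y I k).subtype) hr)
  have he : ∀ p, ι (e p) = (relN x y I k).mkQ p := by
    intro p
    have := LinearEquiv.apply_symm_apply (LinearEquiv.ofInjective ι hι) ⟨_, hr p⟩
    exact congrArg Subtype.val this
  refine ⟨e, ?_, ?_⟩
  · intro z
    obtain ⟨z', rfl⟩ := Submodule.Quotient.mk_surjective _ z
    obtain ⟨p, hp, h⟩ := hSym_image x y I hx hy k s hs z' z'.2
    refine ⟨⟨p, hp⟩, hι ?_⟩
    rw [he]
    exact h.symm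
  · intro p
    rw [← hι.eq_iff, he, map_zero, Submodule.mkQ_apply, Submodule.Quotient.mk_eq_zero]

theorem ses_abs {A K B E : Type*} [AddCommGroup A] [AddCommGroup K] [AddCommGroup B]
    [AddCommGroup E] [Module R A] [Module R K] [Module R B] [Module R E]
    (A' : Submodule R A) (B' : Submodule R B) (i : A →ₗ[R] K) (p : K →ₗ[R] B) (e : K →ₗ[R] E)
    (he : Function.Surjective e) (hp : Function.Surjective p)
    (h1 : ∀ a, e (i a) = 0 ↔ a ∈ A') (h2 : ∀ k, e k = 0 → p k ∈ B')
    (h3 : ∀ k, p k ∈ B' → ∃ a, e k = e (i a)) (h4 : ∀ a, p (i a) ∈ B') :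
    ∃ (f : (A ⧸ A') →ₗ[R] E) (g : E →ₗ[R] (B ⧸ B')),
      Function.Injective f ∧ Function.Surjective g ∧ Function.Exact f g := by
  let f : (A ⧸ A') →ₗ[R] E := Submodule.liftQ A' (e.comp i) (fun a ha => (h1 a).2 ha)
  let g : E →ₗ[R] (B ⧸ B') :=
    (Submodule.liftQ (LinearMap.ker e) (B'.mkQ.comp p)
      (fun k hk => (Submodule.Quotient.mk_eq_zero _).2 (h2 k hk))).comp
      (LinearMap.quotKerEquivOfSurjective e he).symm.toLinearMap
  have hg : ∀ k, g (e k) = B'.mkQ (p k) := by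
    intro k
    have : (LinearMap.quotKerEquivOfSurjective e he).symm (e k) = Submodule.Quotient.mk k := by
      rw [LinearEquiv.symm_apply_eq]; rfl
    simp only [g, LinearMap.comp_apply, LinearEquiv.coe_coe, this]
    rfl
  refine ⟨f, g, ?_, ?_, ?_⟩
  · rw [injective_iff_map_eq_zero]
    intro a ha
    obtain ⟨a, rfl⟩ := Submodule.Quotient.mk_surjective _ a
    rw [Submodule.Quotient.mk_eq_zero]
    exact (h1 a).1 ha
  · intro b
    obtain ⟨b, rfl⟩ := Submodule.Quotient.mk_surjective _ b
    obtain ⟨k, rfl⟩ := hp b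
    exact ⟨e k, hg k⟩
  · intro z
    obtain ⟨k, rfl⟩ := he z
    rw [hg, Submodule.mkQ_apply, Submodule.Quotient.mk_eq_zero]
    constructor
    · intro h
      obtain ⟨a, ha⟩ := h3 k h
      exact ⟨Submodule.Quotient.mk a, ha.symm⟩
    · rintro ⟨a, ha⟩
      obtain ⟨a, rfl⟩ := Submodule.Quotient.mk_surjective _ a
      have h : e (i a) = e k := ha
      have h5 := h2 (k - i a) (by rw [map_sub, h, sub_self])
      rw [map_sub] at h5
      simpa using add_mem h5 (h4 a)

theorem mem_annCapPow (x : R) (I : Ideal R) (m : ℕ) (a : R) :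
    a ∈ annCapPow x I m ↔ x * a = 0 ∧ a ∈ I ^ m := by
  rw [annCapPow, Submodule.mem_inf, Submodule.mem_colon]
  refine and_congr_left fun _ => ⟨fun h => ?_, fun h s hs => ?_⟩
  · have := h x (Ideal.subset_span rfl)
    rw [mul_comm]; simpa using this
  · obtain ⟨t, rfl⟩ := Ideal.mem_span_singleton'.1 hs
    rw [Submodule.mem_bot, smul_eq_mul]
    linear_combination t * h

theorem mem_colonPow (x y : R) (I : Ideal R) (m k : ℕ) (c : R) :
    c ∈ colonPow x y I m k ↔ ∃ q ∈ I ^ m, x * q + c * y ^ k = 0 := by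
  rw [colonPow, Submodule.mem_colon]
  constructor
  · intro h
    have := h (y ^ k) (Ideal.subset_span rfl)
    obtain ⟨q, hq, h⟩ := Ideal.mem_span_singleton_mul.1 this
    refine ⟨-q, neg_mem hq, ?_⟩
    rw [smul_eq_mul] at h
    linear_combination -h
  · rintro ⟨q, hq, h⟩ s hs
    obtain ⟨t, rfl⟩ := Ideal.mem_span_singleton'.1 hs
    refine Ideal.mem_span_singleton_mul.2 ⟨-t * q, Ideal.mul_mem_left _ _ hq, ?_⟩
    rw [smul_eq_mul]
    linear_combination -t * h

theorem main14 (x y : R) (I : Ideal R) (hI : I = Ideal.span {x, y}) (k : ℕ) :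
    ∃ (f : (annCapPow x I (k + 1) ⧸
            Submodule.comap (annCapPow x I (k + 1)).subtype
              (Ideal.span {y} * annCapPow x I k))
          →ₗ[R] EffRel R I (k + 1))
        (g : EffRel R I (k + 1) →ₗ[R]
          (colonPow x y I (k + 1) (k + 2) ⧸
            Submodule.comap (colonPow x y I (k + 1) (k + 2)).subtype
              (colonPow x y I k (k + 1)))),
        Function.Injective f ∧ Function.Surjective g ∧ Function.Exact f g := by
  have hy : y ∈ I := hI ▸ Ideal.subset_span (by simp)
  obtain ⟨e, he, hk⟩ := exists_e x y I hI k
  let i : annCapPow x I (k + 1) →ₗ[R] cycK x y I k :=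
    LinearMap.codRestrict _ ((LinearMap.inl R R R).comp (annCapPow x I (k + 1)).subtype) (by
      rintro ⟨a, ha⟩
      rw [mem_annCapPow] at ha
      exact ⟨ha.2, by simp [ha.1]⟩)
  let p : cycK x y I k →ₗ[R] colonPow x y I (k + 1) (k + 2) :=
    LinearMap.codRestrict _ ((LinearMap.snd R R R).comp (cycK x y I k).subtype) (by
      rintro ⟨⟨q, c⟩, h1, h2⟩
      exact (mem_colonPow _ _ _ _ _ _).2 ⟨q, h1, h2⟩)
  refine ses_abs _ _ i p e he ?_ ?_ ?_ ?_ ?_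
  · rintro ⟨c, hc⟩
    obtain ⟨q, h1, h2⟩ := (mem_colonPow _ _ _ _ _ _).1 hc
    exact ⟨⟨(q, c), h1, h2⟩, rfl⟩
  · rintro ⟨a, ha⟩
    rw [hk, Submodule.mem_comap]
    change (∃ u ∈ I ^ k, a = y * u ∧ x * u + 0 * y ^ (k + 1) = 0) ↔
      a ∈ Ideal.span {y} * annCapPow x I k
    rw [Ideal.mem_span_singleton_mul]
    constructor
    · rintro ⟨u, hu, h1, h2⟩
      exact ⟨u, (mem_annCapPow _ _ _ _).2 ⟨by simpa using h2, hu⟩, h1.symm⟩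
    · rintro ⟨u, hu, h1⟩
      rw [mem_annCapPow] at hu
      exact ⟨u, hu.2, h1.symm, by simpa using hu.1⟩
  · intro q hq
    rw [hk] at hq
    obtain ⟨u, hu, h1, h2⟩ := hq
    exact (mem_colonPow _ _ _ _ _ _).2 ⟨u, hu, h2⟩
  · rintro ⟨⟨q, c⟩, h1, h2⟩ hc
    obtain ⟨u, hu, h3⟩ := (mem_colonPow x y I k (k + 1) c).1 hc
    simp only at h1 h2
    have hm : y * u ∈ I ^ (k + 1) := by
      rw [pow_succ']; exact Ideal.mul_mem_mul hy hu
    refine ⟨⟨q - y * u, (mem_annCapPow _ _ _ _).2 ⟨?_, sub_mem h1 hm⟩⟩, ?_⟩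
    · linear_combination h2 - y * h3
    · rw [← sub_eq_zero, ← map_sub, hk]
      refine ⟨u, hu, ?_, ?_⟩
      · change q - (q - y * u) = y * u
        ring
      · change x * u + (c - 0) * y ^ (k + 1) = 0
        rw [sub_zero, h3]
  · intro a
    exact zero_mem (colonPow x y I k (k + 1))

end Aux14

/-- For a two-generated ideal `I = (x,y)` and every `n ≥ 2` there is a short exact
sequence of `R`-modules
`0 → ((0:x) ∩ Iⁿ⁻¹)/(y((0:x) ∩ Iⁿ⁻²)) → E(I)ₙ → (xIⁿ⁻¹ : yⁿ)/(xIⁿ⁻² : yⁿ⁻¹) → 0`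
(here `EffRel R I (n-1) = E(I)ₙ`). -/
theorem statement14 {R : Type*} [CommRing R] (x y : R) (I : Ideal R)
    (hI : I = Ideal.span {x, y}) :
    ∀ n, 2 ≤ n →
      ∃ (f : (annCapPow x I (n - 1) ⧸
            Submodule.comap (annCapPow x I (n - 1)).subtype
              (Ideal.span {y} * annCapPow x I (n - 2)))
          →ₗ[R] EffRel R I (n - 1))
        (g : EffRel R I (n - 1) →ₗ[R]
          (colonPow x y I (n - 1) n ⧸
            Submodule.comap (colonPow x y I (n - 1) n).subtype
              (colonPow x y I (n - 2) (n - 1)))),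
        Function.Injective f ∧ Function.Surjective g ∧ Function.Exact f g := by
  intro n hn
  obtain ⟨k, rfl⟩ : ∃ k, n = k + 2 := ⟨n - 2, by omega⟩
  exact main14 x y I hI k
end

section
/- Let R be a commutative ring, let I = (x_1,…,x_s) be a finitely generated ideal and let p ≥ 2 be an integer. For 1 ≤ i ≤ s let I_i denote the ideal generated by the x_j with j ≠ i. Then for each 1 ≤ i ≤ s there exists a surjective R-module morphism ker(α_{I,p}) ↠ (I_i I^{p-1} : x_i^p)/(I_i : x_i). In particular, if α_{I,p} is an isomorphism, then (I_i I^{n-1} : x_i^n)/(I_i I^{n-2} : x_i^{n-1}) = 0 for each 1 ≤ i ≤ s and each 2 ≤ n ≤ p. -/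
open scoped TensorProduct
open PiTensorProduct

namespace S15

variable {R : Type*} [CommRing R]

lemma prod_mem {J I : Ideal R} (hJ : J ≤ I) {a : R} (ha : a ∈ I) (n : ℕ) :
    ∀ (v r : Fin (n + 1) → R), (∀ k, v k ∈ I) → (∀ k, v k - r k * a ∈ J) →
      (∏ k, v k) - (∏ k, r k) * a ^ (n + 1) ∈ J * I ^ n := by
  induction n with
  | zero =>
    intro v r _ h
    simpa using h 0
  | succ n ih =>
    intro v r hv h
    have h1 := ih (fun k => v k.succ) (fun k => r k.succ) (fun k => hv _) (fun k => h _)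
    rw [Fin.prod_univ_succ, Fin.prod_univ_succ (f := r)]
    have h2 : (∏ k : Fin (n + 1), v k.succ) ∈ I ^ (n + 1) := by
      have := Ideal.prod_mem_prod (s := Finset.univ) (I := fun _ : Fin (n + 1) => I)
        (x := fun k => v k.succ) (fun k _ => hv _)
      simpa using this
    have h3 := Ideal.mul_mem_mul (h 0) h2
    have h4 := Ideal.mul_mem_mul ha h1
    have h5 : I * (J * I ^ n) = J * I ^ (n + 1) := by ring
    rw [h5] at h4
    have := add_mem h3 (Ideal.mul_mem_left _ (r 0) h4)
    convert this using 1
    ring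

lemma pow_le (I : Ideal R) (n : ℕ) :
    I ^ n ≤ Ideal.span (Set.range fun v : Fin n → I => ∏ k, (v k : R)) := by
  induction n with
  | zero =>
    intro y _
    have : (1 : R) ∈ Ideal.span (Set.range fun v : Fin 0 → I => ∏ k, (v k : R)) :=
      Ideal.subset_span ⟨fun _ => 0, by simp⟩
    simpa using Ideal.mul_mem_left _ y this
  | succ n ih =>
    rw [pow_succ', Ideal.mul_le]
    intro a ha w hw
    replace hw := ih hw
    induction hw using Submodule.span_induction with
    | mem w h =>
      obtain ⟨v, rfl⟩ := h
      exact Ideal.subset_span ⟨Fin.cons ⟨a, ha⟩ v, by simp [Fin.prod_univ_succ]⟩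
    | zero => simp
    | add u w _ _ h1 h2 => rw [mul_add]; exact add_mem h1 h2
    | smul c w _ h => 
      rw [smul_eq_mul, mul_left_comm]; exact Ideal.mul_mem_left _ _ h

lemma exists_phi (J I : Ideal R) (a : R) (hI : I = J ⊔ Ideal.span {a}) (D : Ideal R)
    (hD : ∀ r, r ∈ D ↔ r * a ∈ J) :
    ∃ φ : I →ₗ[R] R ⧸ D, ∀ (v : I) (r : R), (v : R) - r * a ∈ J → 
      φ v = Ideal.Quotient.mk D r := by
  let g0 : R →ₗ[R] R ⧸ J := J.mkQ ∘ₗ LinearMap.toSpanSingleton R R a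
  have hg0 : ∀ r, g0 r = Ideal.Quotient.mk J (r * a) := fun r => rfl
  have hk : LinearMap.ker g0 = D := by
    ext r
    rw [LinearMap.mem_ker, hg0, Ideal.Quotient.eq_zero_iff_mem, hD]
  let g1 : (R ⧸ D) →ₗ[R] R ⧸ J := Submodule.liftQ D g0 hk.ge
  have hg1 : ∀ r, g1 (Ideal.Quotient.mk D r) = Ideal.Quotient.mk J (r * a) := fun r => rfl
  have hinj : Function.Injective g1 := by
    rw [← LinearMap.ker_eq_bot]
    exact Submodule.ker_liftQ_eq_bot _ _ _ hk.le
  have hdec : ∀ v : I, ∃ r, (v : R) - r * a ∈ J := by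
    rintro ⟨v, hv⟩
    rw [hI] at hv
    obtain ⟨j, hj, w, hw, rfl⟩ := Submodule.mem_sup.1 hv
    obtain ⟨r, rfl⟩ := Ideal.mem_span_singleton'.1 hw
    exact ⟨r, by simpa using hj⟩
  have key : ∀ (v : I) (r : R), (v : R) - r * a ∈ J → 
      (J.mkQ ∘ₗ I.subtype) v = g1 (Ideal.Quotient.mk D r) := by
    intro v r h
    rw [hg1]
    exact (Ideal.Quotient.mk_eq_mk_iff_sub_mem _ _).2 h
  let e := LinearEquiv.ofInjective g1 hinj
  refine ⟨e.symm.toLinearMap ∘ₗ LinearMap.codRestrict (LinearMap.range g1) (J.mkQ ∘ₗ I.subtype)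
    (fun v => ?_), fun v r h => ?_⟩
  · obtain ⟨r, hr⟩ := hdec v
    exact ⟨_, (key v r hr).symm⟩
  · rw [LinearMap.comp_apply, LinearEquiv.coe_coe, LinearEquiv.symm_apply_eq]
    apply Subtype.ext
    exact key v r h

lemma exists_Psi (J I : Ideal R) (a : R) (hI : I = J ⊔ Ideal.span {a}) (D : Ideal R)
    (hD : ∀ r, r ∈ D ↔ r * a ∈ J) (n : ℕ) :
    ∃ Ψ : SymPow R I (n + 1) →ₗ[R] R ⧸ D, 
      (∀ z, ∃ r, Ψ z = Ideal.Quotient.mk D r ∧ 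
        alphaCan R I (n + 1) z - r * a ^ (n + 1) ∈ J * I ^ n) ∧
      (∀ y ∈ J * I ^ n, ∃ z, alphaCan R I (n + 1) z = y ∧ Ψ z = 0) ∧
      (∀ r, ∃ z, alphaCan R I (n + 1) z = r * a ^ (n + 1) ∧ Ψ z = Ideal.Quotient.mk D r) := by
  obtain ⟨φ, hφ⟩ := exists_phi J I a hI D hD
  have hJI : J ≤ I := hI ▸ le_sup_left
  have haI : a ∈ I := by
    rw [hI]; exact Ideal.mem_sup_right (Ideal.mem_span_singleton_self a)
  have hdec : ∀ v : I, ∃ r, (v : R) - r * a ∈ J := by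
    rintro ⟨v, hv⟩
    rw [hI] at hv
    obtain ⟨j, hj, w, hw, rfl⟩ := Submodule.mem_sup.1 hv
    obtain ⟨r, rfl⟩ := Ideal.mem_span_singleton'.1 hw
    exact ⟨r, by simpa using hj⟩
  let M : MultilinearMap R (fun _ : Fin (n + 1) => ↥I) (R ⧸ D) :=
    (MultilinearMap.mkPiAlgebra R (Fin (n + 1)) (R ⧸ D)).compLinearMap fun _ => φ
  have hM : ∀ v, M v = ∏ k, φ (v k) := fun v => by
    simp [M]
  let Ψ : SymPow R I (n + 1) →ₗ[R] R ⧸ D :=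
    Submodule.liftQ (symRel R I (n + 1)) (PiTensorProduct.lift M) (by
      rw [symRel, Submodule.span_le]
      rintro z ⟨v, σ, rfl⟩
      simp only [SetLike.mem_coe, LinearMap.mem_ker, map_sub, PiTensorProduct.lift.tprod, hM]
      rw [sub_eq_zero]
      exact (Equiv.prod_comp σ fun i => φ (v i)).symm)
  have hΨ : ∀ v, Ψ (Submodule.Quotient.mk (tprod R v)) = ∏ k, φ (v k) := fun v => by
    rw [← hM]
    exact PiTensorProduct.lift.tprod (φ := M) v
  have hα : ∀ v, alphaCan R I (n + 1) (Submodule.Quotient.mk (tprod R v)) = ∏ k, (v k : R) := 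
    fun v => by
    refine (PiTensorProduct.lift.tprod (φ := prodML R I (n + 1)) v).trans ?_
    simp [prodML]
  refine ⟨Ψ, ?_, ?_, ?_⟩
  · intro z
    obtain ⟨t, rfl⟩ := Submodule.Quotient.mk_surjective _ z
    induction t using PiTensorProduct.induction_on with
    | smul_tprod c v =>
      choose r hr using fun k => hdec (v k)
      refine ⟨c * ∏ k, r k, ?_, ?_⟩
      · rw [Submodule.Quotient.mk_smul, map_smul, hΨ, map_mul, map_prod]
        simp only [fun k => hφ _ _ (hr k)]
        rfl
      · rw [Submodule.Quotient.mk_smul, map_smul, hα, smul_eq_mul, mul_assoc, ← mul_sub]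
        exact Ideal.mul_mem_left _ _ 
          (prod_mem hJI haI n (fun k => (v k : R)) r (fun k => (v k).2) hr)
    | add t u ht hu =>
      obtain ⟨r, h1, h2⟩ := ht
      obtain ⟨q, h3, h4⟩ := hu
      refine ⟨r + q, ?_, ?_⟩
      · rw [Submodule.Quotient.mk_add, map_add, h1, h3, map_add]
      · rw [Submodule.Quotient.mk_add, map_add]
        convert add_mem h2 h4 using 1
        ring
  · intro y hy
    induction hy using Submodule.mul_induction_on' with
    | mem_mul_mem j hj w hw =>
      replace hw := pow_le I n hw
      induction hw using Submodule.span_induction with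
      | mem w h =>
        obtain ⟨v, rfl⟩ := h
        refine ⟨Submodule.Quotient.mk (tprod R (Fin.cons ⟨j, hJI hj⟩ v)), ?_, ?_⟩
        · rw [hα, Fin.prod_univ_succ]; simp
        · rw [hΨ, Fin.prod_univ_succ, Fin.cons_zero, hφ _ 0 (by simpa using hj)]
          simp
      | zero => exact ⟨0, by simp, by simp⟩
      | add u w _ _ h1 h2 =>
        obtain ⟨z, h1, h3⟩ := h1
        obtain ⟨z', h2, h4⟩ := h2
        exact ⟨z + z', by rw [map_add, h1, h2, mul_add], by rw [map_add, h3, h4, add_zero]⟩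
      | smul c w _ h =>
        obtain ⟨z, h1, h3⟩ := h
        exact ⟨c • z, by rw [map_smul, h1, smul_eq_mul, smul_eq_mul, mul_left_comm], 
          by rw [map_smul, h3, smul_zero]⟩
    | add u _ w _ h1 h2 =>
      obtain ⟨z, h1, h3⟩ := h1
      obtain ⟨z', h2, h4⟩ := h2
      exact ⟨z + z', by rw [map_add, h1, h2], by rw [map_add, h3, h4, add_zero]⟩
  · intro r
    refine ⟨r • Submodule.Quotient.mk (tprod R (fun _ => ⟨a, haI⟩)), ?_, ?_⟩
    · rw [map_smul, hα]; simp
    · rw [map_smul, hΨ]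
      simp only [hφ ⟨a, haI⟩ 1 (by simp), map_one, Finset.prod_const_one]
      rw [Algebra.smul_def, mul_one]; rfl

lemma mem_colon_span (J : Ideal R) (a r : R) :
    r ∈ J.colon (Ideal.span {a} : Ideal R) ↔ r * a ∈ J := by
  rw [Submodule.mem_colon]
  constructor
  · intro h
    exact h a (Ideal.mem_span_singleton_self a)
  · intro h y hy
    obtain ⟨c, rfl⟩ := Ideal.mem_span_singleton'.1 hy
    rw [smul_eq_mul, mul_left_comm]
    exact Ideal.mul_mem_left _ _ h

lemma sup_eq {s : ℕ} (x : Fin s → R) (i : Fin s) :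
    Ideal.span (Set.range x) = Ideal.span (x '' {j | j ≠ i}) ⊔ Ideal.span {x i} := by
  rw [← Ideal.span_union]
  congr 1
  ext y
  constructor
  · rintro ⟨j, rfl⟩
    by_cases h : j = i
    · right; simp [h]
    · left; exact ⟨j, h, rfl⟩
  · rintro (⟨j, _, rfl⟩ | h)
    · exact ⟨j, rfl⟩
    · exact ⟨i, h.symm⟩

end S15

/-- For `I = (x₁,…,xₛ)` and `p ≥ 2`, for each `i` there is a surjective morphism
`ker(α_{I,p}) ↠ (I_i Iᵖ⁻¹ : xᵢᵖ)/(I_i : xᵢ)` where `I_i = (x_j : j ≠ i)`;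
in particular, if `α_{I,p}` is an isomorphism then
`(I_i Iⁿ⁻¹ : xᵢⁿ)/(I_i Iⁿ⁻² : xᵢⁿ⁻¹) = 0` for `1 ≤ i ≤ s` and `2 ≤ n ≤ p`. -/
theorem statement15 {R : Type*} [CommRing R] {s : ℕ} (x : Fin s → R)
    (I : Ideal R) (hI : I = Ideal.span (Set.range x)) (p : ℕ) (hp : 2 ≤ p) :
    (∀ i : Fin s,
      ∃ f : (LinearMap.ker (alphaCan R I p)) →ₗ[R]
          (((Ideal.span (x '' {j | j ≠ i}) * I ^ (p - 1)).colon (Ideal.span {x i ^ p})) ⧸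
            Submodule.comap
              ((Ideal.span (x '' {j | j ≠ i}) * I ^ (p - 1)).colon (Ideal.span {x i ^ p})).subtype
              ((Ideal.span (x '' {j | j ≠ i})).colon (Ideal.span {x i}))),
        Function.Surjective f) ∧
    (Function.Injective (alphaCan R I p) →
      ∀ i : Fin s, ∀ n, 2 ≤ n → n ≤ p →
        (Ideal.span (x '' {j | j ≠ i}) * I ^ (n - 1)).colon (Ideal.span {x i ^ n})
          ≤ (Ideal.span (x '' {j | j ≠ i}) * I ^ (n - 2)).colon (Ideal.span {x i ^ (n - 1)})) := by
  obtain ⟨m, rfl⟩ : ∃ m, p = m + 1 := ⟨p - 1, by omega⟩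
  constructor
  · intro i
    generalize hJ : Ideal.span (x '' {j | j ≠ i}) = J
    have hIJ : I = J ⊔ Ideal.span {x i} := by rw [hI, S15.sup_eq x i, hJ]
    obtain ⟨Ψ, h1, h2, h3⟩ := S15.exists_Psi J I (x i) hIJ (J.colon (Ideal.span {x i} : Ideal R))
      (S15.mem_colon_span J (x i)) m
    have hC := S15.mem_colon_span (J * I ^ (m + 1 - 1)) (x i ^ (m + 1))
    generalize (J * I ^ (m + 1 - 1)).colon (Ideal.span {x i ^ (m + 1)} : Ideal R) = C at *
    simp only [Nat.add_sub_cancel] at hC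
    generalize J.colon (Ideal.span {x i} : Ideal R) = D at *
    let g : (C ⧸ Submodule.comap C.subtype D) →ₗ[R] R ⧸ D :=
      Submodule.mapQ _ _ C.subtype le_rfl
    have hg : Function.Injective g := by
      rw [← LinearMap.ker_eq_bot]
      apply Submodule.ker_liftQ_eq_bot
      rw [LinearMap.ker_comp, Submodule.ker_mkQ]
    have hgm : ∀ c : C, g (Submodule.Quotient.mk c) = Ideal.Quotient.mk D (c : R) := fun c => rfl
    have hr : ∀ z : LinearMap.ker (alphaCan R I (m + 1)), 
        (Ψ ∘ₗ (LinearMap.ker (alphaCan R I (m + 1))).subtype) z ∈ LinearMap.range g := by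
      rintro ⟨z, hz⟩
      obtain ⟨r, hr, hr'⟩ := h1 z
      rw [LinearMap.mem_ker.1 hz, zero_sub, neg_mem_iff] at hr'
      exact ⟨Submodule.Quotient.mk ⟨r, (hC r).2 hr'⟩, (hgm _).trans hr.symm⟩
    let e := LinearEquiv.ofInjective g hg
    refine ⟨e.symm.toLinearMap ∘ₗ LinearMap.codRestrict (LinearMap.range g) _ hr, ?_⟩
    intro q
    obtain ⟨c, rfl⟩ := Submodule.Quotient.mk_surjective _ q
    obtain ⟨z, hz, hz'⟩ := h3 c
    obtain ⟨w, hw, hw'⟩ := h2 _ ((hC c).1 c.2)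
    refine ⟨⟨z - w, by rw [LinearMap.mem_ker, map_sub, hz, hw, sub_self]⟩, ?_⟩
    rw [LinearMap.comp_apply, LinearEquiv.coe_coe, LinearEquiv.symm_apply_eq]
    apply Subtype.ext
    change Ψ (z - w) = Ideal.Quotient.mk D (c : R)
    rw [map_sub, hz', hw', sub_zero]
  · intro hinj i n hn hnp r hr
    rw [S15.mem_colon_span] at hr ⊢
    generalize hJ : Ideal.span (x '' {j | j ≠ i}) = J at *
    have hIJ : I = J ⊔ Ideal.span {x i} := by rw [hI, S15.sup_eq x i, hJ]
    have haI : x i ∈ I := by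
      rw [hIJ]; exact Ideal.mem_sup_right (Ideal.mem_span_singleton_self _)
    obtain ⟨Ψ, h1, h2, h3⟩ := S15.exists_Psi J I (x i) hIJ (J.colon (Ideal.span {x i} : Ideal R))
      (S15.mem_colon_span J (x i)) m
    obtain ⟨k, rfl⟩ : ∃ k, n = k + 2 := ⟨n - 2, by omega⟩
    obtain ⟨l, rfl⟩ : ∃ l, m = k + 1 + l := ⟨m - (k + 1), by omega⟩
    have hr2 : r * x i ^ (k + 1 + l + 1) ∈ J * I ^ (k + 1 + l) := by
      have := Ideal.mul_mem_mul hr (Ideal.pow_mem_pow haI l)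
      rw [show k + 2 - 1 = k + 1 by omega, mul_assoc, ← pow_add] at this
      convert this using 1
      ring
    obtain ⟨z, hz, hz'⟩ := h3 r
    obtain ⟨w, hw, hw'⟩ := h2 _ hr2
    have : z = w := hinj (hz.trans hw.symm)
    rw [this, hw', eq_comm, Ideal.Quotient.eq_zero_iff_mem, S15.mem_colon_span] at hz'
    have := Ideal.mul_mem_mul hz' (Ideal.pow_mem_pow haI k)
    rw [show k + 2 - 1 = k + 1 by omega, show k + 2 - 2 = k by omega, pow_succ', ← mul_assoc]
    exact this
end

section
/- Let R be a commutative ring, let I = (x_1,…,x_s) with s ≥ 3, and let p ≥ 2 be an integer. For a subset of indices, I_{i_1,…,i_r} denotes the ideal generated by the x_j with j ∉ {i_1,…,i_r}. Suppose J = (x_1,…,x_{s-1}) verifies that α_{J,n} : Sym_n(J) → J^n is an isomorphism for each 2 ≤ n ≤ p. If α_{I,p} is an isomorphism, then for every 1 ≤ n ≤ p−1 one has ((Σ_{1 ≤ i < j ≤ s-1} x_i x_j I_s^{n-1}) : x_s) ∩ I^n = Σ_{i=1}^{s-1} x_i·((I_{i,s} I_s^{n-1} : x_s) ∩ I^{n-1}).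 -/
open scoped TensorProduct
open PiTensorProduct

namespace S16
open MvPolynomial

variable {R : Type*} [CommRing R]

theorem hom_succ {σ : Type*} {n : ℕ} {g : MvPolynomial σ R} (hg : g.IsHomogeneous (n + 1)) :
    g ∈ Submodule.span R {z : MvPolynomial σ R | ∃ i m, m.IsHomogeneous n ∧ z = X i * m} := by
  have h : g ∈ homogeneousSubmodule σ R 1 * homogeneousSubmodule σ R n := by
    rw [← homogeneousSubmodule_one_pow (σ := σ) (R := R) (n := n), ← pow_succ', homogeneousSubmodule_one_pow]
    exact hg
  clear hg
  induction h using Submodule.mul_induction_on' with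
  | mem_mul_mem a ha b hb =>
    rw [homogeneousSubmodule_one_eq_span_X] at ha
    induction ha using Submodule.span_induction with
    | mem a ha =>
      obtain ⟨i, rfl⟩ := ha
      exact Submodule.subset_span ⟨i, b, hb, rfl⟩
    | zero => simp
    | add u v _ _ hu hv =>
      rw [add_mul]
      exact add_mem hu hv
    | smul r u _ hu =>
      rw [smul_mul_assoc]
      exact Submodule.smul_mem _ _ hu
  | add a _ b _ ha hb => exact add_mem ha hb

theorem hom_prod {σ : Type*} {n : ℕ} {g : MvPolynomial σ R} (hg : g.IsHomogeneous n) :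
    g ∈ Submodule.span R {z : MvPolynomial σ R | ∃ f : Fin n → σ, z = ∏ k, X (f k)} := by
  induction n generalizing g with
  | zero =>
    obtain ⟨c, rfl⟩ : ∃ c, g = C c :=
      ⟨_, totalDegree_eq_zero_iff_eq_C.1 (Nat.le_zero.1 hg.totalDegree_le)⟩
    have : (C c : MvPolynomial σ R) = c • 1 := by simp [MvPolynomial.smul_eq_C_mul]
    rw [this]
    exact Submodule.smul_mem _ _ (Submodule.subset_span ⟨Fin.elim0, by simp⟩)
  | succ n ih =>
    refine Submodule.span_le.2 ?_ (hom_succ hg)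
    rintro _ ⟨i, m, hm, rfl⟩
    have := ih hm
    clear hm
    simp only [SetLike.mem_coe]
    induction this using Submodule.span_induction with
    | mem a ha =>
      obtain ⟨f, rfl⟩ := ha
      exact Submodule.subset_span ⟨Fin.cons i f, by simp [Fin.prod_univ_succ]⟩
    | zero => simp
    | add u v _ _ hu hv =>
      rw [mul_add]
      exact add_mem hu hv
    | smul r u _ hu =>
      rw [mul_smul_comm]
      exact Submodule.smul_mem _ _ hu

/-- The ideal of linear relations. -/
noncomputable def lin {σ : Type*} (x : σ → R) : Ideal (MvPolynomial σ R) :=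
  Ideal.span {L | L.IsHomogeneous 1 ∧ eval x L = 0}

/-- graded component of the ideal of linear relations, in degree `n + 1`. -/
noncomputable def D {σ : Type*} (x : σ → R) (n : ℕ) : Submodule R (MvPolynomial σ R) :=
  Submodule.span R {z | ∃ L G : MvPolynomial σ R, L.IsHomogeneous 1 ∧ eval x L = 0 ∧
    G.IsHomogeneous n ∧ z = L * G}

attribute [local instance] MvPolynomial.gradedAlgebra in
theorem comp_mul {σ : Type*} {n : ℕ} (L a : MvPolynomial σ R) (hL : L.IsHomogeneous 1) :
    homogeneousComponent (n + 1) (a * L) = homogeneousComponent n a * L := by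
  have := DirectSum.coe_decompose_mul_add_of_right_mem (homogeneousSubmodule σ R) (i := n) (a := a)
    (show L ∈ homogeneousSubmodule σ R 1 from hL)
  erw [decomposition.decompose'_apply, decomposition.decompose'_apply] at this
  exact this

theorem lin_D {σ : Type*} (x : σ → R) (n : ℕ) (F : MvPolynomial σ R)
    (hF : F.IsHomogeneous (n + 1)) (h : F ∈ lin x) : F ∈ D x n := by
  have key : ∀ a, homogeneousComponent (n + 1) (a * F) ∈ D x n := by
    clear hF
    unfold lin at h
    induction h using Submodule.span_induction with
    | mem L hL =>
      intro a
      rw [comp_mul L a hL.1]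
      exact Submodule.subset_span ⟨L, _, hL.1, hL.2, homogeneousComponent_isHomogeneous n a,
        mul_comm _ _⟩
    | zero => simp
    | add u v _ _ hu hv =>
      intro a
      rw [mul_add, map_add]
      exact add_mem (hu a) (hv a)
    | smul r u _ hu =>
      intro a
      rw [smul_eq_mul, ← mul_assoc]
      exact hu _
  have := key 1
  rwa [one_mul, homogeneousComponent_eq_self hF] at this

/-- key translation -/
theorem inj_lin {σ : Type*} [Fintype σ] (x : σ → R) (I : Ideal R)
    (hI : I = Ideal.span (Set.range x)) (n : ℕ)
    (hinj : Function.Injective (alphaCan R I n)) (F : MvPolynomial σ R)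
    (hF : F.IsHomogeneous n) (h0 : eval x F = 0) : F ∈ lin x := by
  classical
  have hx : ∀ i, x i ∈ I := fun i => hI ▸ Ideal.subset_span ⟨i, rfl⟩
  -- the map from the free module
  let e : (σ → R) →ₗ[R] I := Fintype.linearCombination R (fun i => (⟨x i, hx i⟩ : I))
  have he : Function.Surjective e := by
    rintro ⟨a, ha⟩
    have ha' := ha
    rw [hI, Ideal.span, Submodule.mem_span_range_iff_exists_fun] at ha'
    obtain ⟨c, hc⟩ := ha'
    refine ⟨c, Subtype.ext ?_⟩
    simp only [e, Fintype.linearCombination_apply]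
    rw [← hc]
    simp
  let q : (σ → R) →ₗ[R] (MvPolynomial σ R ⧸ lin x) :=
    Fintype.linearCombination R (fun i => Ideal.Quotient.mk (lin x) (X i))
  have hq : LinearMap.ker e ≤ LinearMap.ker q := by
    intro c hc
    rw [LinearMap.mem_ker] at hc ⊢
    have h1 : q c = Ideal.Quotient.mk (lin x) (∑ i, c i • X i) := by
      simp only [q, Fintype.linearCombination_apply, map_sum]
      rfl
    rw [h1, Ideal.Quotient.eq_zero_iff_mem]
    refine Ideal.subset_span ⟨?_, ?_⟩
    · refine IsHomogeneous.sum _ _ _ fun i _ => ?_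
      rw [MvPolynomial.smul_eq_C_mul]
      exact isHomogeneous_C_mul_X _ _
    · have := congrArg Subtype.val hc
      simp only [e, Fintype.linearCombination_apply] at this
      simpa [smul_eval] using this
  obtain ⟨φ, hφ⟩ : ∃ φ : I →ₗ[R] (MvPolynomial σ R ⧸ lin x), ∀ c, φ (e c) = q c := by
    refine ⟨((LinearMap.ker e).liftQ q hq) ∘ₗ (e.quotKerEquivOfSurjective he).symm.toLinearMap, ?_⟩
    intro c
    have : (e.quotKerEquivOfSurjective he).symm (e c) = Submodule.Quotient.mk c := by
      rw [LinearEquiv.symm_apply_eq]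
      rfl
    simp [this]
  have hφx : ∀ i, φ ⟨x i, hx i⟩ = Ideal.Quotient.mk (lin x) (X i) := by
    intro i
    have h1 : e (Pi.single i 1) = ⟨x i, hx i⟩ := by
      simp [e, Fintype.linearCombination_apply_single]
    rw [← h1, hφ]
    simp [q, Fintype.linearCombination_apply_single]
  let M : MultilinearMap R (fun _ : Fin n => I) (MvPolynomial σ R ⧸ lin x) :=
    (MultilinearMap.mkPiAlgebra R (Fin n) (MvPolynomial σ R ⧸ lin x)).compLinearMap fun _ => φ
  have hM : symRel R I n ≤ LinearMap.ker (PiTensorProduct.lift M) := by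
    rw [symRel, Submodule.span_le]
    rintro z ⟨v, τ, rfl⟩
    simp only [SetLike.mem_coe, LinearMap.mem_ker, map_sub, PiTensorProduct.lift.tprod]
    have : M (v ∘ τ) = M v := by
      simp only [M, MultilinearMap.compLinearMap_apply,
        MultilinearMap.mkPiAlgebra_apply, Function.comp_apply]
      exact Equiv.prod_comp τ fun i => φ (v i)
    rw [this, sub_self]
  let Ψ := (symRel R I n).liftQ (PiTensorProduct.lift M) hM
  have key : ∃ z : SymPow R I n, Ψ z = Ideal.Quotient.mk (lin x) F ∧
      alphaCan R I n z = eval x F := by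
    have h := hom_prod hF
    clear hF h0
    induction h using Submodule.span_induction with
    | mem a ha =>
      obtain ⟨f, rfl⟩ := ha
      refine ⟨Submodule.Quotient.mk (tprod R fun k => ⟨x (f k), hx _⟩), ?_, ?_⟩
      · simp only [Ψ, Submodule.liftQ_apply, PiTensorProduct.lift.tprod, M,
          MultilinearMap.compLinearMap_apply, MultilinearMap.mkPiAlgebra_apply, hφx, map_prod]
      · rw [alphaCan, Submodule.liftQ_apply, PiTensorProduct.lift.tprod]
        simp [prodML]
    | zero => exact ⟨0, by simp⟩
    | add u v _ _ hu hv =>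
      obtain ⟨z, h1, h2⟩ := hu
      obtain ⟨w, h3, h4⟩ := hv
      exact ⟨z + w, by rw [map_add, h1, h3, map_add], by rw [map_add, h2, h4, map_add]⟩
    | smul r u _ hu =>
      obtain ⟨z, h1, h2⟩ := hu
      refine ⟨r • z, ?_, ?_⟩
      · rw [map_smul, h1]; rfl
      · rw [map_smul, h2, smul_eval, smul_eq_mul]
  obtain ⟨z, h1, h2⟩ := key
  have : z = 0 := hinj (by rw [h2, h0, map_zero])
  rw [← Ideal.Quotient.eq_zero_iff_mem, ← h1, this, map_zero]

end S16

namespace S16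
open MvPolynomial

variable {R : Type*} [CommRing R]

theorem split {s : ℕ} {n : ℕ} {G : MvPolynomial (Fin (s + 1)) R} (hG : G.IsHomogeneous n) :
    ∃ (g : MvPolynomial (Fin s) R) (H : MvPolynomial (Fin (s + 1)) R),
      g.IsHomogeneous n ∧ H.IsHomogeneous (n - 1) ∧ (n = 0 → H = 0) ∧
      G = rename Fin.castSucc g + X (Fin.last s) * H := by
  induction n generalizing G with
  | zero =>
    obtain ⟨c, rfl⟩ : ∃ c, G = C c :=
      ⟨_, totalDegree_eq_zero_iff_eq_C.1 (Nat.le_zero.1 hG.totalDegree_le)⟩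
    exact ⟨C c, 0, isHomogeneous_C _ _, isHomogeneous_zero _ _ _, fun _ => rfl, by simp⟩
  | succ n ih =>
    have h := hom_succ hG
    clear hG
    induction h using Submodule.span_induction with
    | mem a ha =>
      obtain ⟨i, m, hm, rfl⟩ := ha
      induction i using Fin.lastCases with
      | last => exact ⟨0, m, isHomogeneous_zero _ _ _, hm, by simp, by simp⟩
      | cast i =>
        obtain ⟨g, H, h1, h2, h3, rfl⟩ := ih hm
        refine ⟨X i * g, X i.castSucc * H, ?_, ?_, by simp, ?_⟩
        · rw [add_comm]
          exact (isHomogeneous_X R i).mul h1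
        · rcases Nat.eq_zero_or_pos n with h | h
          · rw [h3 h, mul_zero]
            exact isHomogeneous_zero _ _ _
          · have := (isHomogeneous_X R i.castSucc).mul h2
            convert this using 1
            omega
        · simp only [map_mul, rename_X]
          ring
    | zero => exact ⟨0, 0, isHomogeneous_zero _ _ _, isHomogeneous_zero _ _ _, by simp, by simp⟩
    | add u v _ _ hu hv =>
      obtain ⟨g, H, h1, h2, h3, rfl⟩ := hu
      obtain ⟨g', H', h1', h2', h3', rfl⟩ := hv
      exact ⟨g + g', H + H', h1.add h1', h2.add h2', by simp, by rw [map_add]; ring⟩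
    | smul r u _ hu =>
      obtain ⟨g, H, h1, h2, h3, rfl⟩ := hu
      refine ⟨C r * g, C r * H, h1.C_mul r, h2.C_mul r, by simp, ?_⟩
      rw [MvPolynomial.smul_eq_C_mul, map_mul, rename_C]
      ring

theorem split_unique {s : ℕ} {a a' : MvPolynomial (Fin s) R} {b b' : MvPolynomial (Fin (s + 1)) R}
    (h : rename Fin.castSucc a + X (Fin.last s) * b = rename Fin.castSucc a' + X (Fin.last s) * b') :
    a = a' ∧ b = b' := by
  let π : MvPolynomial (Fin (s + 1)) R →ₐ[R] MvPolynomial (Fin s) R :=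
    aeval (Fin.lastCases 0 (fun i => X i))
  have hπ : ∀ a, π (rename Fin.castSucc a) = a := by
    intro a
    simp only [π, aeval_rename]
    convert aeval_X_left_apply a using 2
    congr 1
    funext i
    simp
  have hX : π (X (Fin.last s)) = 0 := by simp [π]
  have h1 := congrArg π h
  simp only [map_add, map_mul, hπ, hX, zero_mul, add_zero] at h1
  refine ⟨h1, ?_⟩
  rw [h1] at h
  exact (isRegular_X (n := Fin.last s)).left (add_left_cancel h)

/-- auxiliary pairs -/
noncomputable def W {s : ℕ} (z : Fin (s + 1) → R) (n : ℕ) :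
    Submodule R (MvPolynomial (Fin s) R × MvPolynomial (Fin s) R) :=
  Submodule.span R {w | ∃ (l g : MvPolynomial (Fin s) R) (c : R), l.IsHomogeneous 1 ∧
    g.IsHomogeneous n ∧ eval (fun i : Fin s => z i.castSucc) l + c * z (Fin.last s) = 0 ∧
    w = (l * g, C c * g)}

theorem eval_ren {s : ℕ} (z : Fin (s + 1) → R) (g : MvPolynomial (Fin s) R) :
    eval z (rename Fin.castSucc g) = eval (fun i : Fin s => z i.castSucc) g := by
  rw [eval_rename]; rfl

theorem D_eval {σ : Type*} (x : σ → R) (n : ℕ) (F : MvPolynomial σ R) (h : F ∈ D x n) :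
    eval x F = 0 := by
  unfold D at h
  induction h using Submodule.span_induction with
  | mem a ha =>
    obtain ⟨L, G, -, h, -, rfl⟩ := ha
    rw [map_mul, h, zero_mul]
  | zero => simp
  | add u v _ _ hu hv => rw [map_add, hu, hv, add_zero]
  | smul r u _ hu => rw [smul_eval, hu, mul_zero]

theorem claimA {s : ℕ} (z : Fin (s + 1) → R) (n : ℕ) (F : MvPolynomial (Fin (s + 1)) R)
    (hF : F ∈ D z (n + 1)) :
    ∃ w ∈ W z (n + 1), ∃ E ∈ D z n,
      F = rename Fin.castSucc w.1 + X (Fin.last s) * (rename Fin.castSucc w.2 + E) := by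
  unfold D at hF
  induction hF using Submodule.span_induction with
  | mem a ha =>
    obtain ⟨L, G, hL, hL0, hG, rfl⟩ := ha
    obtain ⟨l, c, h1, h2, -, hLe⟩ := split hL
    obtain ⟨g, H, h3, h4, -, hGe⟩ := split hG
    obtain ⟨c, rfl⟩ : ∃ c', c = C c' :=
      ⟨_, totalDegree_eq_zero_iff_eq_C.1 (Nat.le_zero.1 h2.totalDegree_le)⟩
    refine ⟨(l * g, C c * g), Submodule.subset_span ⟨l, g, c, h1, h3, ?_, rfl⟩, L * H,
      Submodule.subset_span ⟨L, H, hL, hL0, h4, rfl⟩, ?_⟩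
    · rw [hLe] at hL0
      simp only [map_add, map_mul, eval_ren, eval_X, eval_C] at hL0
      rw [mul_comm c]; exact hL0
    · simp only [map_mul, rename_C]
      rw [hGe, mul_add]
      nth_rewrite 1 [hLe]
      ring
  | zero => exact ⟨0, zero_mem _, 0, zero_mem _, by simp⟩
  | add u v _ _ hu hv =>
    obtain ⟨w, h1, E, h2, rfl⟩ := hu
    obtain ⟨w', h1', E', h2', rfl⟩ := hv
    refine ⟨w + w', add_mem h1 h1', E + E', add_mem h2 h2', ?_⟩
    simp only [Prod.fst_add, Prod.snd_add, map_add]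
    ring
  | smul r u _ hu =>
    obtain ⟨w, h1, E, h2, rfl⟩ := hu
    refine ⟨r • w, Submodule.smul_mem _ _ h1, r • E, Submodule.smul_mem _ _ h2, ?_⟩
    simp only [Prod.smul_fst, Prod.smul_snd, MvPolynomial.smul_eq_C_mul, map_mul, rename_C]
    ring

theorem W_hom {s : ℕ} (z : Fin (s + 1) → R) (n : ℕ) (w) (hw : w ∈ W z n) :
    w.2.IsHomogeneous n := by
  unfold W at hw
  induction hw using Submodule.span_induction with
  | mem a ha =>
    obtain ⟨l, g, c, -, h, -, rfl⟩ := ha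
    exact h.C_mul c
  | zero => exact isHomogeneous_zero _ _ _
  | add u v _ _ hu hv => exact hu.add hv
  | smul r u _ hu =>
    rw [Prod.smul_snd, MvPolynomial.smul_eq_C_mul]
    exact hu.C_mul r

theorem D_ren {s : ℕ} (z : Fin (s + 1) → R) (n : ℕ) (F : MvPolynomial (Fin s) R)
    (hF : F ∈ D (fun i : Fin s => z i.castSucc) n) : rename Fin.castSucc F ∈ D z n := by
  unfold D at hF
  induction hF using Submodule.span_induction with
  | mem a ha =>
    obtain ⟨L, G, hL, hL0, hG, rfl⟩ := ha
    exact Submodule.subset_span ⟨rename Fin.castSucc L, rename Fin.castSucc G,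
      hL.rename_isHomogeneous, by rw [eval_ren, hL0], hG.rename_isHomogeneous, by rw [map_mul]⟩
  | zero => simp
  | add u v _ _ hu hv => rw [map_add]; exact add_mem hu hv
  | smul r u _ hu => rw [map_smul]; exact Submodule.smul_mem _ _ hu

/-- degree `n+1` injectivity in polynomial form -/
def Q {σ : Type*} (x : σ → R) (n : ℕ) : Prop :=
  ∀ F : MvPolynomial σ R, F.IsHomogeneous (n + 1) → eval x F = 0 → F ∈ D x n

theorem descend {s : ℕ} (z : Fin (s + 1) → R) (n : ℕ) (h : Q z (n + 1))
    (hJ : Q (fun i : Fin s => z i.castSucc) n) : Q z n := by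
  intro F hF hF0
  have h1 : X (Fin.last s) * F ∈ D z (n + 1) := by
    apply h
    · rw [add_comm (n + 1)]
      exact (isHomogeneous_X R _).mul hF
    · rw [map_mul, hF0, mul_zero]
  obtain ⟨w, hw, E, hE, he⟩ := claimA z n _ h1
  have he' : rename Fin.castSucc (0 : MvPolynomial (Fin s) R) + X (Fin.last s) * F =
      rename Fin.castSucc w.1 + X (Fin.last s) * (rename Fin.castSucc w.2 + E) := by
    rw [map_zero, zero_add]; exact he
  have h2 : F = rename Fin.castSucc w.2 + E := (split_unique he').2
  rw [h2]
  refine add_mem (D_ren z n _ (hJ _ (W_hom z _ w hw) ?_)) hE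
  rw [h2, map_add, D_eval _ _ _ hE, add_zero, eval_ren] at hF0
  exact hF0

theorem coeff_ne {σ : Type*} {i j : σ} (h : j ≠ i) (n : ℕ) (m : MvPolynomial σ R) :
    coeff (Finsupp.single i n) (X j * m) = 0 := by
  classical
  rw [coeff_X_mul', if_neg]
  simp [Finsupp.single_apply, h.symm]

theorem coeff_eq {σ : Type*} {i : σ} (n : ℕ) (m : MvPolynomial σ R) :
    coeff (Finsupp.single i (n + 1)) (X i * m) = coeff (Finsupp.single i n) m := by
  rw [add_comm, Finsupp.single_add, coeff_X_mul]

theorem claimC {s : ℕ} (x : Fin s → R) (J : Ideal R) (hJ : J = Ideal.span (Set.range x))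
    (i : Fin s) (n : ℕ) (h : MvPolynomial (Fin s) R) (hh : h.IsHomogeneous n) :
    eval x h - coeff (Finsupp.single i n) h * x i ^ n ∈
      Ideal.span (x '' {j | j ≠ i}) * J ^ (n - 1) := by
  induction n generalizing h with
  | zero =>
    obtain ⟨c, rfl⟩ : ∃ c, h = C c :=
      ⟨_, totalDegree_eq_zero_iff_eq_C.1 (Nat.le_zero.1 hh.totalDegree_le)⟩
    simp
  | succ n ih =>
    have h' := hom_succ hh
    clear hh
    rw [Nat.add_sub_cancel]
    induction h' using Submodule.span_induction with
    | mem a ha =>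
      obtain ⟨j, m, hm, rfl⟩ := ha
      by_cases hj : j = i
      · subst hj
        have h1 := Ideal.mul_mem_mul (show x j ∈ J from hJ ▸ Ideal.subset_span ⟨j, rfl⟩) (ih m hm)
        rw [coeff_eq, map_mul, eval_X]
        rcases Nat.eq_zero_or_pos n with h | h
        · subst h
          have := Ideal.mul_mem_left _ (x j) (ih m hm)
          convert this using 1
          ring
        · have h2 : J * (Ideal.span (x '' {k | k ≠ j}) * J ^ (n - 1)) =
              Ideal.span (x '' {k | k ≠ j}) * J ^ n := by
            obtain ⟨k, rfl⟩ : ∃ k, n = k + 1 := ⟨n - 1, by omega⟩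
            rw [Nat.add_sub_cancel, pow_succ]
            ring
          rw [h2] at h1
          convert h1 using 1
          ring
      · rw [coeff_ne hj, zero_mul, sub_zero, map_mul, eval_X]
        refine Ideal.mul_mem_mul (Ideal.subset_span ⟨j, hj, rfl⟩) ?_
        rw [hJ, Ideal.mem_span_pow_iff_exists_isHomogeneous]
        exact ⟨m, hm, rfl⟩
    | zero => simp
    | add u v _ _ hu hv =>
      convert add_mem hu hv using 1
      rw [map_add, coeff_add]; ring
    | smul r u _ hu =>
      convert Ideal.mul_mem_left _ r hu using 1
      rw [smul_eval, coeff_smul, smul_eq_mul]; ring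

theorem claimB {s : ℕ} (z : Fin (s + 1) → R) (J : Ideal R)
    (hJ : J = Ideal.span (Set.range fun i : Fin s => z i.castSucc)) (n : ℕ)
    (w) (hw : w ∈ W z (n + 1)) :
    ∃ b : Fin s → R, (∀ i, b i ∈ J ^ n) ∧
      (∀ i, b i * z (Fin.last s) + coeff (Finsupp.single i (n + 2)) w.1 * z i.castSucc ^ (n + 1) ∈
        Ideal.span ((fun j : Fin s => z j.castSucc) '' {j | j ≠ i}) * J ^ n) ∧
      eval (fun i : Fin s => z i.castSucc) w.2 = ∑ i, z i.castSucc * b i := by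
  unfold W at hw
  induction hw using Submodule.span_induction with
  | mem a ha =>
    obtain ⟨l, g, c, hl, hg, hc, rfl⟩ := ha
    have h := hom_succ hg
    clear hg
    dsimp only
    induction h using Submodule.span_induction with
    | mem a ha =>
      obtain ⟨i, m, hm, rfl⟩ := ha
      refine ⟨Pi.single i (c * eval (fun i : Fin s => z i.castSucc) m), ?_, ?_, ?_⟩
      · intro k
        by_cases hk : k = i
        · subst hk
          rw [Pi.single_eq_same]
          refine Ideal.mul_mem_left _ _ ?_
          rw [hJ, Ideal.mem_span_pow_iff_exists_isHomogeneous]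
          exact ⟨m, hm, rfl⟩
        · rw [Pi.single_eq_of_ne hk]; exact zero_mem _
      · intro k
        rw [mul_left_comm]
        by_cases hk : k = i
        · subst hk
          rw [Pi.single_eq_same, coeff_eq]
          have := claimC (fun i : Fin s => z i.castSucc) J hJ k (n + 1) (l * m)
            (by rw [add_comm n]; exact hl.mul hm)
          rw [Nat.add_sub_cancel] at this
          convert neg_mem this using 1
          rw [map_mul]
          linear_combination (eval (fun i : Fin s => z i.castSucc) m) * hc
        · rw [Pi.single_eq_of_ne hk, coeff_ne (Ne.symm hk)]
          simp
      · simp only [Pi.single_apply, mul_ite, mul_zero, Finset.sum_ite_eq', Finset.mem_univ, if_true,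
          map_mul, eval_X, eval_C]
        ring
    | zero => exact ⟨0, by simp⟩
    | add u v _ _ hu hv =>
      obtain ⟨b, h1, h2, h3⟩ := hu
      obtain ⟨b', h1', h2', h3'⟩ := hv
      refine ⟨b + b', fun i => add_mem (h1 i) (h1' i), fun i => ?_, ?_⟩
      · convert add_mem (h2 i) (h2' i) using 1
        simp only [mul_add, coeff_add, Pi.add_apply]; ring
      · simp only [mul_add, Pi.add_apply, Finset.sum_add_distrib, ← h3, ← h3', map_add]
    | smul r u _ hu =>
      obtain ⟨b, h1, h2, h3⟩ := hu
      refine ⟨r • b, fun i => Ideal.mul_mem_left _ _ (h1 i), fun i => ?_, ?_⟩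
      · convert Ideal.mul_mem_left _ r (h2 i) using 1
        simp only [mul_smul_comm, coeff_smul, Pi.smul_apply, smul_eq_mul]; ring
      · simp only [mul_smul_comm, smul_eval, h3, Pi.smul_apply, smul_eq_mul, mul_left_comm,
          Finset.mul_sum]
  | zero => exact ⟨0, by simp⟩
  | add u v _ _ hu hv =>
    obtain ⟨b, h1, h2, h3⟩ := hu
    obtain ⟨b', h1', h2', h3'⟩ := hv
    refine ⟨b + b', fun i => add_mem (h1 i) (h1' i), fun i => ?_, ?_⟩
    · convert add_mem (h2 i) (h2' i) using 1
      simp only [Prod.fst_add, coeff_add, Pi.add_apply]; ring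
    · simp only [Prod.snd_add, mul_add, Pi.add_apply, Finset.sum_add_distrib, ← h3, ← h3', map_add]
  | smul r u _ hu =>
    obtain ⟨b, h1, h2, h3⟩ := hu
    refine ⟨r • b, fun i => Ideal.mul_mem_left _ _ (h1 i), fun i => ?_, ?_⟩
    · convert Ideal.mul_mem_left _ r (h2 i) using 1
      simp only [Prod.smul_fst, coeff_smul, Pi.smul_apply, smul_eq_mul]; ring
    · simp only [Prod.smul_snd, smul_eval, h3, Pi.smul_apply, smul_eq_mul, mul_left_comm,
        Finset.mul_sum]

theorem supB {s : ℕ} (x : Fin s → R) (J : Ideal R)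
    (hJ : J = Ideal.span (Set.range x)) (n : ℕ) (a : R)
    (ha : a ∈ (⨆ (i : Fin s) (j : Fin s) (_ : i < j), Ideal.span {x i * x j} * J ^ n)) :
    ∃ B : MvPolynomial (Fin s) R, B.IsHomogeneous (n + 2) ∧ eval x B = a ∧
      ∀ k, coeff (Finsupp.single k (n + 2)) B = 0 := by
  let V : Ideal R :=
    { carrier := {a | ∃ B : MvPolynomial (Fin s) R, B.IsHomogeneous (n + 2) ∧ eval x B = a ∧
        ∀ k, coeff (Finsupp.single k (n + 2)) B = 0}
      add_mem' := by
        rintro _ _ ⟨B, h1, rfl, h3⟩ ⟨B', h1', rfl, h3'⟩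
        exact ⟨B + B', h1.add h1', by simp, fun k => by rw [coeff_add, h3, h3', add_zero]⟩
      zero_mem' := ⟨0, isHomogeneous_zero _ _ _, by simp, by simp⟩
      smul_mem' := by
        rintro r _ ⟨B, h1, rfl, h3⟩
        exact ⟨C r * B, h1.C_mul r, by simp, fun k => by rw [coeff_C_mul, h3, mul_zero]⟩ }
  suffices h : (⨆ (i : Fin s) (j : Fin s) (_ : i < j), Ideal.span {x i * x j} * J ^ n) ≤ V from h ha
  refine iSup_le fun i => iSup_le fun j => iSup_le fun hij => ?_
  intro b hb
  rw [Ideal.mem_span_singleton_mul] at hb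
  obtain ⟨c, hc, rfl⟩ := hb
  rw [hJ, Ideal.mem_span_pow_iff_exists_isHomogeneous] at hc
  obtain ⟨m, hm, rfl⟩ := hc
  refine ⟨X i * (X j * m), ?_, by simp [mul_assoc], ?_⟩
  · have := (isHomogeneous_X R i).mul ((isHomogeneous_X R j).mul hm)
    convert this using 1
    omega
  · intro k
    by_cases hk : i = k
    · subst hk
      rw [coeff_eq, coeff_ne hij.ne']
    · rw [coeff_ne hk]

end S16

theorem statement16 {R : Type*} [CommRing R] {s : ℕ} (hs : 2 ≤ s)
    (x : Fin (s + 1) → R)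
    (I J : Ideal R)
    (hI : I = Ideal.span (Set.range x))
    (hJ : J = Ideal.span (Set.range fun i : Fin s => x i.castSucc))
    (p : ℕ) (hp : 2 ≤ p)
    (hJiso : ∀ n, 2 ≤ n → n ≤ p → Function.Injective (alphaCan R J n))
    (hIiso : Function.Injective (alphaCan R I p)) :
    ∀ n, 1 ≤ n → n ≤ p - 1 →
      ((⨆ (i : Fin s) (j : Fin s) (_ : i < j),
          Ideal.span {x i.castSucc * x j.castSucc} * J ^ (n - 1)).colon
            (Ideal.span {x (Fin.last s)})) ⊓ I ^ n
        = ⨆ i : Fin s, Ideal.span {x i.castSucc} *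
            (((Ideal.span ((fun j : Fin s => x j.castSucc) '' {j | j ≠ i}) * J ^ (n - 1)).colon
                (Ideal.span {x (Fin.last s)})) ⊓ I ^ (n - 1)) := by
  intro n hn1 hnp
  obtain ⟨n, rfl⟩ : ∃ k, n = k + 1 := ⟨n - 1, by omega⟩
  simp only [Nat.add_sub_cancel]
  have hxI : ∀ i, x i ∈ I := fun i => hI ▸ Ideal.subset_span ⟨i, rfl⟩
  have hJI : J ≤ I := by
    rw [hJ, Ideal.span_le]
    rintro _ ⟨i, rfl⟩
    exact hxI _
  -- polynomial form of the hypotheses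
  have hQJ : ∀ k, 1 ≤ k → k + 1 ≤ p → S16.Q (fun i : Fin s => x i.castSucc) k :=
    fun k h1 h2 F hF h0 => S16.lin_D _ _ _ hF
      (S16.inj_lin _ J hJ (k + 1) (hJiso _ (by omega) h2) F hF h0)
  have hQp : S16.Q x (p - 1) := by
    obtain ⟨q, rfl⟩ : ∃ q, p = q + 1 := ⟨p - 1, by omega⟩
    exact fun F hF h0 => S16.lin_D _ _ _ hF (S16.inj_lin _ I hI (q + 1) hIiso F hF h0)
  have hQ : S16.Q x (n + 1) := by
    refine Nat.decreasingInduction' (P := fun k => S16.Q x k) ?_ hnp hQp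
    intro k hk1 hk2 hk
    exact S16.descend x k hk (hQJ k (by omega) (by omega))
  apply le_antisymm
  · rintro a ⟨ha1, ha2⟩
    have ha1' := Ideal.mem_colon_span_singleton.1 ha1
    obtain ⟨B, hB1, hB2, hB3⟩ := S16.supB (fun i : Fin s => x i.castSucc) J hJ n _ ha1'
    have ha2' : a ∈ I ^ (n + 1) := ha2
    rw [hI, Ideal.mem_span_pow_iff_exists_isHomogeneous] at ha2'
    obtain ⟨A, hA1, hA2⟩ := ha2'
    have hD := hQ (MvPolynomial.rename Fin.castSucc (-B) + MvPolynomial.X (Fin.last s) * A) (by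
        refine MvPolynomial.IsHomogeneous.add hB1.neg.rename_isHomogeneous ?_
        have := (MvPolynomial.isHomogeneous_X R (Fin.last s)).mul hA1
        convert this using 1
        omega) (by
        rw [map_add, S16.eval_ren, map_neg, hB2, map_mul, hA2, MvPolynomial.eval_X]
        ring)
    obtain ⟨w, hw, E, hE, he⟩ := S16.claimA x n _ hD
    obtain ⟨h1, h2⟩ := S16.split_unique he
    obtain ⟨b, hb1, hb2, hb3⟩ := S16.claimB x J hJ n w hw
    have hab : a = ∑ i : Fin s, x i.castSucc * b i := by
      rw [← hb3, ← hA2, h2, map_add, S16.D_eval _ _ _ hE, add_zero, S16.eval_ren]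
    rw [hab]
    refine Ideal.sum_mem _ fun i _ => ?_
    refine (le_iSup (fun i : Fin s => Ideal.span {x i.castSucc} *
            (((Ideal.span ((fun j : Fin s => x j.castSucc) '' {j | j ≠ i}) * J ^ n).colon
                (Ideal.span {x (Fin.last s)})) ⊓ I ^ n)) i) ?_
    refine Ideal.mul_mem_mul (Ideal.mem_span_singleton_self _) ⟨?_, Ideal.pow_right_mono hJI n (hb1 i)⟩
    refine Ideal.mem_colon_span_singleton.2 ?_
    have := hb2 i
    rw [← h1, MvPolynomial.coeff_neg, hB3, neg_zero, zero_mul, add_zero] at this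
    exact this
  · refine iSup_le fun i => ?_
    intro a ha
    rw [Ideal.mem_span_singleton_mul] at ha
    obtain ⟨b, ⟨hb1, hb2⟩, rfl⟩ := ha
    have hb1' := Ideal.mem_colon_span_singleton.1 hb1
    refine ⟨?_, ?_⟩
    · refine Ideal.mem_colon_span_singleton.2 ?_
      rw [mul_assoc]
      have hle : Ideal.span {x i.castSucc} *
          (Ideal.span ((fun j : Fin s => x j.castSucc) '' {j | j ≠ i}) * J ^ n) ≤
          ⨆ (i : Fin s) (j : Fin s) (_ : i < j),
            Ideal.span {x i.castSucc * x j.castSucc} * J ^ n := by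
        rw [← mul_assoc, Ideal.span_mul_span', Ideal.mul_le]
        intro u hu v hv
        induction hu using Submodule.span_induction with
        | mem u hu =>
          obtain ⟨_, rfl, _, ⟨j, hj, rfl⟩, rfl⟩ := hu
          rcases lt_or_gt_of_ne (show j ≠ i from hj) with h | h
          · refine Submodule.mem_iSup_of_mem j (Submodule.mem_iSup_of_mem i
              (Submodule.mem_iSup_of_mem h ?_))
            refine Ideal.mul_mem_mul ?_ hv
            dsimp only
            rw [mul_comm]
            exact Ideal.mem_span_singleton_self _
          · refine Submodule.mem_iSup_of_mem i (Submodule.mem_iSup_of_mem j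
              (Submodule.mem_iSup_of_mem h ?_))
            exact Ideal.mul_mem_mul (Ideal.mem_span_singleton_self _) hv
        | zero => rw [zero_mul]; exact zero_mem _
        | add u v _ _ hu hv => rw [add_mul]; exact add_mem hu hv
        | smul r u _ hu => rw [smul_eq_mul, mul_assoc]; exact Ideal.mul_mem_left _ _ hu
      exact hle (Ideal.mul_mem_mul (Ideal.mem_span_singleton_self _) hb1')
    · have hb2' : b ∈ I ^ n := hb2
      show _ ∈ I ^ (n + 1)
      rw [pow_succ']
      exact Ideal.mul_mem_mul (hxI _) hb2'
end

section
/- Let (R,m) be a Noetherian local ring and let I = (x_1,…,x_s,y) be an ideal of R. Suppose that for all n ≥ 2 and all i = 1,…,s one has ((x_1,…,x_{i-1})I^{n-1} : x_i) ∩ I^{n-1} = (x_1,…,x_{i-1})I^{n-2}. Then for every integer p ≥ 2 the following conditions are equivalent: (i) α_{I,p} : Sym_p(I) → I^p is an isomorphism; (ii) α_{I,n} : Sym_n(I) → I^n is an isomorphism for each 2 ≤ n ≤ p. -/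
open scoped TensorProduct
open PiTensorProduct

section Helpers

variable {R : Type*} [CommRing R]

noncomputable def smk (I : Ideal R) {n : ℕ} (v : Fin n → ↥I) : SymPow R I n :=
  (symRel R I n).mkQ (tprod R v)

theorem smk_perm (I : Ideal R) {n : ℕ} (v : Fin n → ↥I) (σ : Equiv.Perm (Fin n)) :
    smk I (v ∘ σ) = smk I v := by
  unfold smk
  symm
  rw [← sub_eq_zero, ← map_sub]
  simp only [Submodule.mkQ_apply, Submodule.Quotient.mk_eq_zero]
  exact Submodule.subset_span ⟨v, σ, rfl⟩

/-- span induction -/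
theorem sym_span (I : Ideal R) {n : ℕ} (P : Submodule R (SymPow R I n))
    (h : ∀ v : Fin n → ↥I, smk I v ∈ P) (F : SymPow R I n) : F ∈ P := by
  obtain ⟨t, rfl⟩ := Submodule.mkQ_surjective _ F
  induction t using PiTensorProduct.induction_on with
  | smul_tprod r v => rw [map_smul]; exact P.smul_mem _ (h v)
  | add a b ha hb => rw [map_add]; exact P.add_mem ha hb

theorem sym_hom_ext (I : Ideal R) {n : ℕ} {N : Type*} [AddCommGroup N] [Module R N]
    (f g : SymPow R I n →ₗ[R] N) (h : ∀ v, f (smk I v) = g (smk I v)) : f = g := by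
  refine LinearMap.ext (fun F => ?_)
  have := sym_span I (LinearMap.eqLocus f g) h F
  exact this

/-- lift of symmetric multilinear maps -/
noncomputable def slift (I : Ideal R) {n : ℕ} {N : Type*} [AddCommGroup N] [Module R N]
    (f : MultilinearMap R (fun _ : Fin n => ↥I) N)
    (hf : ∀ (v : Fin n → ↥I) (σ : Equiv.Perm (Fin n)), f (v ∘ σ) = f v) :
    SymPow R I n →ₗ[R] N :=
  Submodule.liftQ (symRel R I n) (PiTensorProduct.lift f) (by
    rw [symRel, Submodule.span_le]
    rintro z ⟨v, σ, rfl⟩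
    simp only [SetLike.mem_coe, LinearMap.mem_ker, map_sub, PiTensorProduct.lift.tprod]
    rw [hf, sub_self])

theorem slift_smk (I : Ideal R) {n : ℕ} {N : Type*} [AddCommGroup N] [Module R N]
    (f : MultilinearMap R (fun _ : Fin n => ↥I) N) (hf) (v : Fin n → ↥I) :
    slift I f hf (smk I v) = f v := by
  simp [slift, smk]

theorem alphaCan_smk (I : Ideal R) {n : ℕ} (v : Fin n → ↥I) :
    alphaCan R I n (smk I v) = ∏ i, (v i : R) := by
  simp [alphaCan, smk, prodML]

theorem smk_cons_perm (I : Ideal R) {n : ℕ} (a : ↥I) (v : Fin n → ↥I)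
    (σ : Equiv.Perm (Fin n)) :
    smk I (Fin.cons a (v ∘ σ) : Fin (n+1) → ↥I) = smk I (Fin.cons a v : Fin (n+1) → ↥I) := by
  rw [← smk_perm I (Fin.cons a v : Fin (n+1) → ↥I) (Equiv.Perm.decomposeFin.symm (0, σ))]
  congr 1
  funext i
  refine Fin.cases ?_ (fun i => ?_) i
  · simp
  · simp

/-- multiplication by an element of I -/
noncomputable def smul1 (I : Ideal R) (n : ℕ) (a : ↥I) : SymPow R I n →ₗ[R] SymPow R I (n+1) :=
  slift I ((symRel R I (n+1)).mkQ.compMultilinearMap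
    ((tprod R (s := fun _ : Fin (n+1) => ↥I)).curryLeft a)) (fun v σ => smk_cons_perm I a v σ)

theorem smul1_smk (I : Ideal R) {n : ℕ} (a : ↥I) (v : Fin n → ↥I) :
    smul1 I n a (smk I v) = smk I (Fin.cons a v : Fin (n+1) → ↥I) := by
  exact slift_smk I _ _ v

theorem smul1_add (I : Ideal R) {n : ℕ} (a b : ↥I) (F : SymPow R I n) :
    smul1 I n (a + b) F = smul1 I n a F + smul1 I n b F := by
  rw [← LinearMap.add_apply]
  congr 1
  apply sym_hom_ext
  intro v
  simp only [LinearMap.add_apply, smul1_smk]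
  unfold smk
  rw [← map_add]
  congr 1
  exact (tprod R (s := fun _ : Fin (n+1) => ↥I)).cons_add v a b

theorem smul1_smul (I : Ideal R) {n : ℕ} (r : R) (a : ↥I) (F : SymPow R I n) :
    smul1 I n (r • a) F = r • smul1 I n a F := by
  rw [← LinearMap.smul_apply]
  congr 1
  apply sym_hom_ext
  intro v
  simp only [LinearMap.smul_apply, smul1_smk]
  unfold smk
  rw [← map_smul]
  congr 1
  exact (tprod R (s := fun _ : Fin (n+1) => ↥I)).cons_smul v r a

theorem smul1_comm (I : Ideal R) {n : ℕ} (a b : ↥I) (F : SymPow R I n) :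
    smul1 I (n+1) a (smul1 I n b F) = smul1 I (n+1) b (smul1 I n a F) := by
  rw [← LinearMap.comp_apply, ← LinearMap.comp_apply]
  congr 1
  apply sym_hom_ext
  intro v
  simp only [LinearMap.comp_apply, smul1_smk]
  rw [← smk_perm I _ (Equiv.swap 0 1)]
  congr 1
  funext i
  refine Fin.cases ?_ (fun i => ?_) i
  · rw [Function.comp_apply, Equiv.swap_apply_left, ← Fin.succ_zero_eq_one]
    rfl
  · refine Fin.cases ?_ (fun i => ?_) i
    · simp
    · have : Equiv.swap (0 : Fin (n+2)) 1 i.succ.succ = i.succ.succ := by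
        apply Equiv.swap_apply_of_ne_of_ne
        · exact Fin.succ_ne_zero _
        · rw [← Fin.succ_zero_eq_one, Ne, Fin.succ_inj]; exact Fin.succ_ne_zero _
      simp [this]

theorem alpha_smul1 (I : Ideal R) {n : ℕ} (a : ↥I) (F : SymPow R I n) :
    alphaCan R I (n+1) (smul1 I n a F) = a * alphaCan R I n F := by
  have : (alphaCan R I (n+1)) ∘ₗ (smul1 I n a) = (a : R) • alphaCan R I n := by
    apply sym_hom_ext
    intro v
    simp [smul1_smk, alphaCan_smk, Fin.prod_univ_succ]
  exact LinearMap.congr_fun this F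

/-- every element of degree n+1 is in the span of products -/
theorem sym_succ_span (I : Ideal R) {n : ℕ} (P : Submodule R (SymPow R I (n+1)))
    (h : ∀ a (G : SymPow R I n), smul1 I n a G ∈ P) (F : SymPow R I (n+1)) : F ∈ P := by
  refine sym_span I P (fun v => ?_) F
  rw [← Fin.cons_self_tail v]
  have := h (v 0) (smk I (Fin.tail v))
  rwa [smul1_smk] at this

noncomputable def sone (I : Ideal R) : SymPow R I 0 := smk I Fin.elim0

theorem sym_zero (I : Ideal R) (F : SymPow R I 0) : ∃ c : R, F = c • sone I := by
  have := sym_span I (Submodule.span R {sone I}) (fun v => by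
    rw [Subsingleton.elim v Fin.elim0]; exact Submodule.mem_span_singleton_self _) F
  obtain ⟨c, hc⟩ := Submodule.mem_span_singleton.1 this
  exact ⟨c, hc.symm⟩

theorem alpha_sone (I : Ideal R) : alphaCan R I 0 (sone I) = 1 := by
  simp [sone, alphaCan_smk]

theorem alpha_one_inj (I : Ideal R) : Function.Injective (alphaCan R I 1) := by
  rw [injective_iff_map_eq_zero]
  intro F hF
  let L : ↥I →ₗ[R] SymPow R I 1 :=
    { toFun := fun a => smul1 I 0 a (sone I)
      map_add' := fun a b => smul1_add I a b _
      map_smul' := fun r a => smul1_smul I r a _ }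
  have : F ∈ LinearMap.range L := by
    refine sym_succ_span I _ (fun a G => ?_) F
    obtain ⟨c, rfl⟩ := sym_zero I G
    rw [map_smul]
    exact Submodule.smul_mem _ _ ⟨a, rfl⟩
  obtain ⟨a, rfl⟩ := this
  have h2 : alphaCan R I 1 (L a) = (a : R) := by
    change alphaCan R I 1 (smul1 I 0 a (sone I)) = _
    rw [alpha_smul1, alpha_sone, mul_one]
  rw [h2] at hF
  have : a = 0 := Subtype.ext hF
  rw [this, map_zero]

theorem alpha_mem (I : Ideal R) (n : ℕ) (F : SymPow R I n) : alphaCan R I n F ∈ I ^ n := by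
  have := sym_span I (Submodule.comap (alphaCan R I n) (I ^ n)) (fun v => by
    rw [Submodule.mem_comap, alphaCan_smk]
    have := Ideal.prod_mem_prod (s := Finset.univ) (I := fun _ : Fin n => I)
      (x := fun i => (v i : R)) (fun i _ => (v i).2)
    simpa using this) F
  exact this

theorem alpha_surj (I : Ideal R) (n : ℕ) : ∀ t ∈ I ^ n, ∃ F, alphaCan R I n F = t := by
  induction n with
  | zero => exact fun t _ => ⟨t • sone I, by rw [map_smul, alpha_sone]; simp⟩
  | succ n ih =>
    intro t ht
    have : I ^ (n+1) ≤ LinearMap.range (alphaCan R I (n+1)) := by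
      rw [pow_succ']
      refine Submodule.mul_le.2 (fun a ha b hb => ?_)
      obtain ⟨G, rfl⟩ := ih b hb
      exact ⟨smul1 I n ⟨a, ha⟩ G, alpha_smul1 I _ _⟩
    exact this ht

/-- evaluation along a linear map to an algebra -/
noncomputable def sev (I : Ideal R) {A : Type*} [CommRing A] [Algebra R A] (f : ↥I →ₗ[R] A)
    (n : ℕ) : SymPow R I n →ₗ[R] A :=
  slift I ((MultilinearMap.mkPiAlgebra R (Fin n) A).compLinearMap fun _ => f) (by
    intro v σ
    simp only [MultilinearMap.compLinearMap_apply,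
        MultilinearMap.mkPiAlgebra_apply, Function.comp_apply]
    exact Equiv.prod_comp σ fun i => f (v i))

theorem sev_smk (I : Ideal R) {A : Type*} [CommRing A] [Algebra R A] (f : ↥I →ₗ[R] A)
    {n : ℕ} (v : Fin n → ↥I) : sev I f n (smk I v) = ∏ i, f (v i) := by
  simp [sev, slift_smk]

theorem sev_smul1 (I : Ideal R) {A : Type*} [CommRing A] [Algebra R A] (f : ↥I →ₗ[R] A)
    {n : ℕ} (a : ↥I) (F : SymPow R I n) :
    sev I f (n+1) (smul1 I n a F) = f a * sev I f n F := by
  have : (sev I f (n+1)) ∘ₗ (smul1 I n a) = (LinearMap.mulLeft R (f a)) ∘ₗ sev I f n := by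
    apply sym_hom_ext
    intro v
    simp [smul1_smk, sev_smk, Fin.prod_univ_succ]
  exact LinearMap.congr_fun this F

noncomputable def ypow (I : Ideal R) (y : ↥I) : (n : ℕ) → SymPow R I n
  | 0 => sone I
  | n+1 => smul1 I n y (ypow I y n)

noncomputable def ymul (I : Ideal R) (y : ↥I) {n : ℕ} (F : SymPow R I n) :
    (k : ℕ) → SymPow R I (n + k)
  | 0 => F
  | k+1 => smul1 I (n+k) y (ymul I y F k)

theorem alpha_ymul (I : Ideal R) (y : ↥I) {n : ℕ} (F : SymPow R I n) (k : ℕ) :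
    alphaCan R I (n+k) (ymul I y F k) = (y : R)^k * alphaCan R I n F := by
  induction k with
  | zero => simp [ymul]
  | succ k ih =>
    have := alpha_smul1 I y (ymul I y F k)
    rw [ih] at this
    refine this.trans ?_
    ring

theorem sev_ymul (I : Ideal R) {A : Type*} [CommRing A] [Algebra R A] (f : ↥I →ₗ[R] A)
    (y : ↥I) (hy : f y = 1) {n : ℕ} (F : SymPow R I n) (k : ℕ) :
    sev I f (n+k) (ymul I y F k) = sev I f n F := by
  induction k with
  | zero => rfl
  | succ k ih =>
    have := sev_smul1 I f y (ymul I y F k)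
    rw [ih, hy, one_mul] at this
    exact this

theorem sev_ypow (I : Ideal R) {A : Type*} [CommRing A] [Algebra R A] (f : ↥I →ₗ[R] A)
    (y : ↥I) (hy : f y = 1) (n : ℕ) : sev I f n (ypow I y n) = 1 := by
  induction n with
  | zero => simp [ypow, sone, sev_smk]
  | succ k ih => rw [ypow, sev_smul1, ih, hy, one_mul]

/-- The part of degree n+1 generated by the first k of the x. -/
noncomputable def PP (I : Ideal R) {s : ℕ} (x : Fin s → ↥I) (k n : ℕ) :
    Submodule R (SymPow R I (n+1)) :=
  ⨆ (j : Fin s) (_ : (j : ℕ) < k), LinearMap.range (smul1 I n (x j))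

theorem mem_PP (I : Ideal R) {s : ℕ} (x : Fin s → ↥I) {k n : ℕ} (j : Fin s) (h : (j:ℕ) < k)
    (G : SymPow R I n) : smul1 I n (x j) G ∈ PP I x k n :=
  (le_iSup₂ (f := fun (j : Fin s) (_ : (j : ℕ) < k) => LinearMap.range (smul1 I n (x j))) j h)
    ⟨G, rfl⟩

theorem alpha_PP (I : Ideal R) {s : ℕ} (x : Fin s → ↥I) (k n : ℕ) (F : SymPow R I (n+1))
    (hF : F ∈ PP I x k n) :
    alphaCan R I (n+1) F ∈
      Ideal.span ((fun j => (x j : R)) '' {j : Fin s | (j:ℕ) < k}) * I ^ n := by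
  have : PP I x k n ≤ Submodule.comap (alphaCan R I (n+1))
      (Ideal.span ((fun j => (x j : R)) '' {j : Fin s | (j:ℕ) < k}) * I ^ n) := by
    refine iSup₂_le (fun j hj => ?_)
    rintro _ ⟨G, rfl⟩
    rw [Submodule.mem_comap, alpha_smul1]
    exact Ideal.mul_mem_mul (Ideal.subset_span ⟨j, hj, rfl⟩) (alpha_mem I n G)
  exact this hF

theorem alpha_PP_surj (I : Ideal R) {s : ℕ} (x : Fin s → ↥I) (k n : ℕ) (g : R)
    (hg : g ∈ Ideal.span ((fun j => (x j : R)) '' {j : Fin s | (j:ℕ) < k}) * I ^ n) :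
    ∃ F ∈ PP I x k n, alphaCan R I (n+1) F = g := by
  have : Ideal.span ((fun j => (x j : R)) '' {j : Fin s | (j:ℕ) < k}) * I ^ n ≤
      Submodule.map (alphaCan R I (n+1)) (PP I x k n) := by
    refine Submodule.mul_le.2 (fun a ha b hb => ?_)
    obtain ⟨G, rfl⟩ := alpha_surj I n b hb
    induction ha using Submodule.span_induction with
    | mem a h =>
      obtain ⟨j, hj, rfl⟩ := h
      exact ⟨_, mem_PP I x j hj G, alpha_smul1 I _ _⟩
    | zero => rw [zero_mul]; exact Submodule.zero_mem _
    | add a b _ _ h1 h2 => rw [add_mul]; exact Submodule.add_mem _ h1 h2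
    | smul r a _ h => rw [smul_mul_assoc]; exact Submodule.smul_mem _ _ h
  exact this hg

/-- Key lemma A -/
theorem keyA (I : Ideal R) {s : ℕ} (x : Fin s → ↥I) (m : ℕ)
    (hT : ∀ i : Fin s, ∀ g ∈ I ^ (m+1),
      (x i : R) * g ∈ Ideal.span ((fun j => (x j : R)) '' {j : Fin s | (j:ℕ) < i}) * I ^ (m+1) →
      g ∈ Ideal.span ((fun j => (x j : R)) '' {j : Fin s | (j:ℕ) < i}) * I ^ m)
    (hinj : Function.Injective (alphaCan R I (m+1))) (k : ℕ) (hk : k ≤ s) :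
    ∀ F ∈ PP I x k (m+1), alphaCan R I (m+2) F = 0 → F = 0 := by
  induction k with
  | zero =>
    intro F hF _
    simpa [PP] using hF
  | succ k ih =>
    intro F hF h0
    let i : Fin s := ⟨k, hk⟩
    have hle : PP I x (k+1) (m+1) ≤ PP I x k (m+1) ⊔ LinearMap.range (smul1 I (m+1) (x i)) := by
      refine iSup₂_le (fun j hj => ?_)
      rcases Nat.lt_succ_iff_lt_or_eq.1 hj with h | h
      · refine le_trans ?_ le_sup_left
        rintro _ ⟨G, rfl⟩
        exact mem_PP I x j h G
      · have : j = i := Fin.ext h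
        rw [this]; exact le_sup_right
    obtain ⟨F', hF', _, ⟨G, rfl⟩, rfl⟩ := Submodule.mem_sup.1 (hle hF)
    rw [map_add, alpha_smul1] at h0
    have hg := hT i (alphaCan R I (m+1) G) (alpha_mem I _ G) (by
      have := alpha_PP I x k (m+1) F' hF'
      rw [eq_neg_of_add_eq_zero_right h0]
      exact neg_mem this)
    obtain ⟨H, hH, hHG⟩ := alpha_PP_surj I x k m _ hg
    have hHG' : H = G := hinj hHG
    subst hHG'
    refine ih (by omega) _ (Submodule.add_mem _ hF' ?_) (by rw [map_add, alpha_smul1]; exact h0)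
    have hle2 : PP I x k m ≤ Submodule.comap (smul1 I (m+1) (x i)) (PP I x k (m+1)) := by
      refine iSup₂_le (fun j hj => ?_)
      rintro _ ⟨G, rfl⟩
      rw [Submodule.mem_comap, smul1_comm]
      exact mem_PP I x j hj _
    exact hle2 hH

/-- multiplication by elements of J lands in PP -/
theorem smul1_mem_PP (I : Ideal R) {s : ℕ} (x : Fin s → ↥I) (n : ℕ) (a : ↥I)
    (ha : (a : R) ∈ Ideal.span (Set.range (fun j => (x j : R)))) (G : SymPow R I n) :
    smul1 I n a G ∈ PP I x s n := by
  obtain ⟨c, hc⟩ := Ideal.mem_span_range_iff_exists_fun.1 ha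
  have : a = ∑ j, c j • x j := by
    apply Subtype.ext
    simp [← hc]
  let L : ↥I →ₗ[R] SymPow R I (n+1) :=
    { toFun := fun a => smul1 I n a G
      map_add' := fun a b => smul1_add I a b _
      map_smul' := fun r a => smul1_smul I r a _ }
  change L a ∈ _
  rw [this, map_sum]
  refine Submodule.sum_mem _ (fun j _ => ?_)
  rw [map_smul]
  exact Submodule.smul_mem _ _ (mem_PP I x j j.2 G)

theorem decomp (I : Ideal R) {s : ℕ} (x : Fin s → ↥I) (y : ↥I)
    (hxy : ∀ a ∈ I, ∃ c : R, a - c * y ∈ Ideal.span (Set.range (fun j => (x j : R)))) (n : ℕ) :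
    ∀ F : SymPow R I (n+1), F ∈ PP I x s n ⊔ Submodule.span R {ypow I y (n+1)} := by
  have step : ∀ n (Q : Submodule R (SymPow R I (n+1))), PP I x s n ≤ Q →
      (∀ G, smul1 I n y G ∈ Q) → ∀ F, F ∈ Q := by
    intro n Q hQ hy F
    refine sym_succ_span I Q (fun a G => ?_) F
    obtain ⟨c, hc⟩ := hxy a a.2
    have : a = (a - c • y) + c • y := by abel
    rw [this, smul1_add, smul1_smul]
    exact Q.add_mem (hQ (smul1_mem_PP I x n _ (by simpa using hc) G)) (Q.smul_mem _ (hy G))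
  induction n with
  | zero =>
    refine step 0 _ le_sup_left (fun G => ?_)
    obtain ⟨c, rfl⟩ := sym_zero I G
    rw [map_smul]
    exact Submodule.smul_mem _ _ (Submodule.mem_sup_right (Submodule.mem_span_singleton_self _))
  | succ n ih =>
    refine step (n+1) _ le_sup_left (fun G => ?_)
    have hle : PP I x s n ⊔ Submodule.span R {ypow I y (n+1)} ≤
        Submodule.comap (smul1 I (n+1) y)
          (PP I x s (n+1) ⊔ Submodule.span R {ypow I y (n+1+1)}) := by
      refine sup_le (iSup₂_le (fun j hj => ?_)) ?_
      · rintro _ ⟨G, rfl⟩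
        rw [Submodule.mem_comap, smul1_comm]
        exact Submodule.mem_sup_left (mem_PP I x j hj _)
      · rw [Submodule.span_singleton_le_iff_mem]
        exact Submodule.mem_sup_right (Submodule.mem_span_singleton_self _)
    exact hle (ih G)

theorem exists_f (I J : Ideal R) (y : ↥I)
    (hxy : ∀ a ∈ I, ∃ c : R, a - c * y ∈ J) :
    ∃ (K : Ideal R) (f : ↥I →ₗ[R] R ⧸ K), (∀ c ∈ K, c * (y : R) ∈ J) ∧ f y = 1 ∧
      ∀ a : ↥I, (a : R) ∈ J → f a = 0 := by
  let K : Ideal R := Submodule.comap (LinearMap.mulRight R (y : R)) J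
  have hK : ∀ c, c ∈ K ↔ c * (y : R) ∈ J := fun c => Iff.rfl
  choose c hc using fun a : ↥I => hxy a a.2
  have uniq : ∀ (a : ↥I) (d : R), (a : R) - d * y ∈ J →
      Ideal.Quotient.mk K (c a) = Ideal.Quotient.mk K d := by
    intro a d hd
    rw [Ideal.Quotient.eq, hK]
    have := J.sub_mem hd (hc a)
    convert this using 1
    ring
  refine ⟨K, { toFun := fun a => Ideal.Quotient.mk K (c a), map_add' := ?_, map_smul' := ?_ },
    fun c h => h, ?_, ?_⟩
  · intro a b
    rw [← map_add]
    apply uniq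
    have := J.add_mem (hc a) (hc b)
    convert this using 1
    push_cast
    ring
  · intro r a
    rw [RingHom.id_apply, Algebra.smul_def]
    change _ = Ideal.Quotient.mk K r * _
    rw [← map_mul]
    apply uniq
    have := J.mul_mem_left r (hc a)
    convert this using 1
    simp only [Submodule.coe_smul, smul_eq_mul]
    ring
  · change Ideal.Quotient.mk K (c y) = 1
    rw [← map_one (Ideal.Quotient.mk K)]
    apply uniq
    simp
  · intro a ha
    change Ideal.Quotient.mk K (c a) = 0
    rw [← map_zero (Ideal.Quotient.mk K)]
    apply uniq
    simpa using ha

theorem main_step (I : Ideal R) {s : ℕ} (x : Fin s → ↥I) (y : ↥I)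
    (hxy : ∀ a ∈ I, ∃ c : R, a - c * y ∈ Ideal.span (Set.range (fun j => (x j : R))))
    (m : ℕ)
    (hT : ∀ i : Fin s, ∀ g ∈ I ^ (m+1),
      (x i : R) * g ∈ Ideal.span ((fun j => (x j : R)) '' {j : Fin s | (j:ℕ) < i}) * I ^ (m+1) →
      g ∈ Ideal.span ((fun j => (x j : R)) '' {j : Fin s | (j:ℕ) < i}) * I ^ m)
    (hinj : Function.Injective (alphaCan R I (m+1)))
    (k : ℕ) (hp : Function.Injective (alphaCan R I (m+2+k))) :
    Function.Injective (alphaCan R I (m+2)) := by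
  rw [injective_iff_map_eq_zero]
  intro F hF
  refine keyA I x m hT hinj s le_rfl F ?_ hF
  obtain ⟨F', hF', Z, hZ, rfl⟩ := Submodule.mem_sup.1 (decomp I x y hxy (m+1) F)
  obtain ⟨c, rfl⟩ := Submodule.mem_span_singleton.1 hZ
  obtain ⟨K, f, hK, hfy, hfJ⟩ := exists_f I _ y hxy
  have h0 : ymul I y (F' + c • ypow I y (m+1+1)) k = 0 := by
    apply hp
    rw [alpha_ymul, map_zero]
    exact (congrArg _ hF).trans (mul_zero _)
  have h1 := sev_ymul I f y hfy (F' + c • ypow I y (m+1+1)) k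
  have h2 : sev I f (m+1+1) F' = 0 := by
    have : PP I x s (m+1) ≤ LinearMap.ker (sev I f (m+1+1)) := by
      refine iSup₂_le (fun j hj => ?_)
      rintro _ ⟨G, rfl⟩
      rw [LinearMap.mem_ker, sev_smul1, hfJ _ (Ideal.subset_span ⟨j, rfl⟩), zero_mul]
    exact this hF'
  have h3 : (0 : R ⧸ K) = c • 1 := by
    have h4 : sev I f (m+1+1) (F' + c • ypow I y (m+1+1)) = c • 1 := by
      rw [map_add, h2, map_smul, sev_ypow I f y hfy, zero_add]
    rw [← h4, ← h1]
    exact ((congrArg _ h0).trans (map_zero _)).symm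
  have hcK : c ∈ K := by
    rw [← Ideal.Quotient.eq_zero_iff_mem, h3, Algebra.smul_def, mul_one]; rfl
  refine Submodule.add_mem _ hF' ?_
  have : c • ypow I y (m+1+1) = smul1 I (m+1) (c • y) (ypow I y (m+1)) := by
    rw [smul1_smul]; rfl
  rw [this]
  exact smul1_mem_PP I x _ _ (by simpa using hK c hcK) _

end Helpers

/-- Let `(R,m)` be Noetherian local and `I = (x₁,…,xₛ,y)`.  If the conditions `(𝒯ₙ)`
hold for all `n ≥ 2`, then for every `p ≥ 2`: `α_{I,p}` is an isomorphism iff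
`α_{I,n}` is an isomorphism for each `2 ≤ n ≤ p`. -/
theorem statement17 {R : Type*} [CommRing R] [IsNoetherianRing R] [IsLocalRing R]
    {s : ℕ} (x : Fin s → R) (y : R)
    (I : Ideal R) (hI : I = Ideal.span (Set.range (Fin.snoc x y)))
    (hT : ∀ n, 2 ≤ n → ∀ i : Fin s,
      (Ideal.span (x '' {j | j < i}) * I ^ (n - 1)).colon (Ideal.span {x i}) ⊓ I ^ (n - 1)
        = Ideal.span (x '' {j | j < i}) * I ^ (n - 2)) :
    ∀ p, 2 ≤ p →
      (Function.Injective (alphaCan R I p) ↔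
        ∀ n, 2 ≤ n → n ≤ p → Function.Injective (alphaCan R I n)) := by
  intro p hp
  refine ⟨fun hinj => ?_, fun h => h p hp le_rfl⟩
  have hxI : ∀ j, x j ∈ I := fun j => by
    rw [hI]; exact Ideal.subset_span ⟨j.castSucc, by simp⟩
  have hyI : y ∈ I := by
    rw [hI]; exact Ideal.subset_span ⟨Fin.last s, by simp⟩
  have hxy : ∀ a ∈ I, ∃ c : R, a - c * y ∈ Ideal.span (Set.range x) := by
    intro a ha
    rw [hI] at ha
    obtain ⟨c, rfl⟩ := Ideal.mem_span_range_iff_exists_fun.1 ha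
    refine ⟨c (Fin.last s), ?_⟩
    rw [Fin.sum_univ_castSucc]
    simp only [Fin.snoc_castSucc, Fin.snoc_last, add_sub_cancel_right]
    exact Ideal.sum_mem _ (fun j _ => Ideal.mul_mem_left _ _ (Ideal.subset_span ⟨j, rfl⟩))
  have key : ∀ m, m + 1 ≤ p → Function.Injective (alphaCan R I (m+1)) := by
    intro m
    induction m with
    | zero => exact fun _ => alpha_one_inj I
    | succ m ih =>
      intro hm
      obtain ⟨k, rfl⟩ := Nat.exists_eq_add_of_le hm
      refine main_step I (fun j => ⟨x j, hxI j⟩) ⟨y, hyI⟩ hxy m ?_ (ih (by omega)) k hinj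
      intro i g hg hxg
      have := hT (m+2) (by omega) i
      have e1 : m + 2 - 1 = m + 1 := by omega
      have e2 : m + 2 - 2 = m := by omega
      rw [e1, e2] at this
      change g ∈ Ideal.span (x '' {j | j < i}) * I ^ m
      rw [← this]
      refine ⟨?_, hg⟩
      change x i * g ∈ Ideal.span (x '' {j | j < i}) * I ^ (m+1) at hxg
      rw [SetLike.mem_coe, Submodule.mem_colon]
      intro z hz
      obtain ⟨r, rfl⟩ := Ideal.mem_span_singleton'.1 hz
      have h2 := Ideal.mul_mem_left _ r hxg
      rw [smul_eq_mul]
      convert h2 using 1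
      ring
  intro n hn hnp
  obtain ⟨m, rfl⟩ : ∃ m, n = m + 1 := ⟨n - 1, by omega⟩
  exact key m hnp
end
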